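/- Let S be an unramified regular local ring of mixed characteristic p ≥ 3. Assume S[ω] and S[μ] are integrally closed (i.e. f,g ∉ S^{p∧p²}), h₁ ≠ 0, h₂ ≠ 0, and fg ∈ S^{p∧p²}. Then R is a Cohen-Macaulay ring if and only if the ideal Q := (p, h₁, h₂) of S can be generated by two elements or equals S. Moreover, the projective dimension of R as an S-module satisfies pd_S(R) ≤ 1. -/

import Mathlib

/-- A height one prime ideal of a commutative ring. -/
def IsHeightOnePrime {S : Type*} [CommRing S] (P : Ideal S) : Prop :=
  ∃ hP : P.IsPrime, Order.height (⟨P, hP⟩ : PrimeSpectrum S) = 1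

/-- `c ∈ S` is square free if `P S_P = c S_P` for every height one prime `P` containing `c`. -/
def PaperSquarefree {S : Type*} [CommRing S] (c : S) : Prop :=
  ∀ (P : Ideal S) (hP : P.IsPrime), Order.height (⟨P, hP⟩ : PrimeSpectrum S) = 1 → c ∈ P →
    haveI := hP
    Ideal.map (algebraMap S (Localization.AtPrime P)) P =
      Ideal.span {algebraMap S (Localization.AtPrime P) c}

/-- Two elements satisfy `𝒜₁` if no height one prime contains both of them. -/
def SatisfiesA1 {S : Type*} [CommRing S] (f g : S) : Prop :=
  ∀ P : Ideal S, IsHeightOnePrime P → ¬(f ∈ P ∧ g ∈ P)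

/-- The depth of a module over a local ring: the supremum of the lengths of
regular sequences on `M` contained in the maximal ideal. -/
noncomputable def modDepth (S : Type*) [CommRing S] [IsLocalRing S]
    (M : Type*) [AddCommGroup M] [Module S M] : ℕ∞ :=
  sSup {n : ℕ∞ | ∃ rs : List S, (rs.length : ℕ∞) = n ∧
    (∀ r ∈ rs, r ∈ IsLocalRing.maximalIdeal S) ∧ RingTheory.Sequence.IsRegular M rs}

/-- A commutative ring is Cohen-Macaulay if each of its localizations at a prime
has depth equal to its Krull dimension. -/
def IsCMRing (R : Type*) [CommRing R] : Prop :=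
  ∀ (Q : Ideal R) (hQ : Q.IsPrime),
    haveI := hQ
    (modDepth (Localization.AtPrime Q) (Localization.AtPrime Q) : WithBot ℕ∞) =
      ringKrullDim (Localization.AtPrime Q)

/-- The `n`-th symbolic power of a prime ideal `P`, i.e. `Pⁿ A_P ∩ A`. -/
noncomputable def symbPow {A : Type*} [CommRing A] (P : Ideal A) (hP : P.IsPrime) (n : ℕ) :
    Ideal A :=
  haveI := hP
  Ideal.comap (algebraMap A (Localization.AtPrime P))
    (Ideal.map (algebraMap A (Localization.AtPrime P)) (P ^ n))

/-- `ω`, as an element of the subalgebra `A = S[ω,μ]`. -/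
noncomputable def omegaA {S : Type*} [CommRing S] {K : Type*} [Field K] [Algebra S K]
    (ω μ : K) : Algebra.adjoin S ({ω, μ} : Set K) :=
  ⟨ω, Algebra.subset_adjoin (Set.mem_insert _ _)⟩

/-- `μ`, as an element of the subalgebra `A = S[ω,μ]`. -/
noncomputable def muA {S : Type*} [CommRing S] {K : Type*} [Field K] [Algebra S K]
    (ω μ : K) : Algebra.adjoin S ({ω, μ} : Set K) :=
  ⟨μ, Algebra.subset_adjoin (Set.mem_insert_of_mem _ rfl)⟩

/-- The ideal `P = (p, ω−h₁, μ−h₂)` of `A = S[ω,μ]`. -/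
noncomputable def Pid {S : Type*} [CommRing S] {K : Type*} [Field K] [Algebra S K]
    (p : ℕ) (ω μ : K) (h₁ h₂ : S) : Ideal (Algebra.adjoin S ({ω, μ} : Set K)) :=
  Ideal.span {(p : Algebra.adjoin S ({ω, μ} : Set K)),
    omegaA ω μ - algebraMap S _ h₁, muA ω μ - algebraMap S _ h₂}

/-- The colon module `(A :_K N) = {x ∈ K : x·N ⊆ A}`, as an `S`-submodule of `K`. -/
noncomputable def colonSubmodule (S : Type*) [CommRing S] (K : Type*) [Field K] [Algebra S K]
    (A : Subalgebra S K) (N : Set K) : Submodule S K where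
  carrier := {x : K | ∀ z ∈ N, x * z ∈ A}
  add_mem' := fun hx hy z hz => by
    simpa [add_mul] using add_mem (hx z hz) (hy z hz)
  zero_mem' := fun z hz => by simpa using A.zero_mem
  smul_mem' := fun c x hx z hz => by
    rw [Algebra.smul_def, mul_assoc]
    exact mul_mem (A.algebraMap_mem c) (hx z hz)

/-- `M` admits a free resolution `0 → Sⁿ → Sᵐ → M → 0`; for a finitely generated
module over a Noetherian local ring this says exactly `pd_S(M) ≤ 1`. -/
def HasFreeResLengthLE1 (S : Type*) [CommRing S] (M : Type*) [AddCommGroup M] [Module S M] :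
    Prop :=
  ∃ (n m : ℕ) (φ : (Fin n → S) →ₗ[S] (Fin m → S)) (ψ : (Fin m → S) →ₗ[S] M),
    Function.Injective φ ∧ Function.Surjective ψ ∧ LinearMap.range φ = LinearMap.ker ψ

/-- The ideal `Q` contains an `S`-regular sequence of length three, i.e. `Q` has grade
(at least) three. -/
def ContainsRegSeq3 (S : Type*) [CommRing S] (Q : Ideal S) : Prop :=
  ∃ rs : List S, rs.length = 3 ∧ (∀ r ∈ rs, r ∈ Q) ∧ RingTheory.Sequence.IsRegular S rs

/-!
Put `π = ω - h₁` and `ρ = μ - h₂`. Their `p`-th powers are divisible by `p`, and so is every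
monomial `πⁱ ρʲ` with `i + j ≥ p`. The hypothesis on `fg` says that
`κ = ωμ - h₁h₂ = h₂π + h₁ρ + πρ` satisfies the equation making `κᵖ⁻¹ / p` integral. Since `f` and
`g` are coprime, `pR` lies in `S[ω, μ]`, and a valuation in which `π` and `ρ` have equal value
shows that the only further elements of `R` come from forms of degree `p - 1` proportional to
`(h₂X + h₁Y)ᵖ⁻¹` modulo `p`.

The regular local ring `S / p` is factorial, so `(h₁, h₂) ≡ d (k₁, k₂)` with `k₁, k₂` coprime
modulo `p`, and `R` is generated by the `πⁱ ρʲ` with `i + j < p`, the `πⁱ ρʲ / p` with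
`i + j ≥ p`, and `w = (k₂π + k₁ρ)ᵖ⁻¹ / p`, subject to the single relation that expands `p w` in
the monomials. This is a free resolution of length one. The coefficients in the relation are `-p`
and the coefficients of `(k₂X + k₁Y)ᵖ⁻¹`. If `k₁` or `k₂` is a unit the relation splits off and
`R` is free, hence Cohen-Macaulay. Otherwise `(p, k₁, k₂)` has height three, and were `R`
Cohen-Macaulay, the relation `p w ∈ (k₁, k₂)R` would force `w` into `(k₁, k₂)R` locally, which the
relation module excludes. Finally `(p, h₁, h₂) = (p, d)` in the first case, and `(p, h₁, h₂)`
needs three generators in the second because `p` is part of a minimal generating set of the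
maximal ideal.
-/

open IsLocalRing RingTheory.Sequence
open scoped Pointwise

universe u

/-! ### Depth -/

section Depth

variable {S : Type*} [CommRing S] [IsLocalRing S]

theorem natCast_le_modDepth_iff {M : Type*} [AddCommGroup M] [Module S M] [Module.Finite S M]
    [Nontrivial M] {n : ℕ} :
    (n : ℕ∞) ≤ modDepth S M ↔
      ∃ rs : List S, rs.length = n ∧ (∀ r ∈ rs, r ∈ maximalIdeal S) ∧ IsWeaklyRegular M rs := by
  refine ⟨fun h ↦ ?_, fun ⟨rs, hlen, hmem, hrs⟩ ↦ le_sSup ⟨rs, by rw [hlen], hmem,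
    (isRegular_iff_isWeaklyRegular_of_subset_maximalIdeal hmem).2 hrs⟩⟩
  obtain rfl | n := n
  · exact ⟨[], by simp⟩
  obtain ⟨_, ⟨rs, rfl, hmem, hrs⟩, hlt⟩ :=
    lt_sSup_iff.1 (lt_of_lt_of_le (Nat.cast_lt.2 n.lt_succ_self) h)
  refine ⟨rs.take (n + 1), List.length_take_of_le (Nat.cast_lt.1 hlt),
    fun r hr ↦ hmem r (List.mem_of_mem_take hr), ?_⟩
  have := hrs.toIsWeaklyRegular
  rw [← List.take_append_drop (n + 1) rs, isWeaklyRegular_append_iff] at this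
  exact this.1

variable [IsNoetherianRing S]

theorem exists_isAssociatedPrime_quotSMulTop_gt {M : Type*} [AddCommGroup M] [Module S M]
    [Module.Finite S M] {x : S} (hx : x ∈ maximalIdeal S) (hreg : IsSMulRegular M x)
    {P : Ideal S} (hP : IsAssociatedPrime P M) :
    x ∉ P ∧ ∃ P', IsAssociatedPrime P' (QuotSMulTop x M) ∧ P ≤ P' ∧ x ∈ P' := by
  obtain ⟨hprime, y, hy⟩ := isAssociatedPrime_iff.1 hP
  have mem_P (r : S) : r ∈ P ↔ r • y = 0 := by simp [hy, Submodule.mem_colon_singleton]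
  have hy0 : y ≠ 0 := fun h ↦ hprime.one_notMem ((mem_P 1).2 (by simp [h]))
  have hxP : x ∉ P := fun h ↦ hy0 (hreg.right_eq_zero_of_smul ((mem_P x).1 h))
  let N : Submodule S M := Submodule.torsionBySet S M (P : Set S)
  obtain ⟨z, hzN, hzx⟩ : ∃ z ∈ N, z ∉ x • (⊤ : Submodule S M) := by
    by_contra! hcon
    have hle : N ≤ maximalIdeal S • N := by
      intro z hz
      obtain ⟨w, -, rfl⟩ := (Submodule.mem_smul_pointwise_iff_exists _ _ _).1 (hcon z hz)
      refine Submodule.smul_mem_smul hx ((Submodule.mem_torsionBySet_iff _ _).2 fun r ↦ ?_)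
      have hr := (Submodule.mem_torsionBySet_iff _ _).1 hz r
      rw [smul_comm] at hr
      exact hreg.right_eq_zero_of_smul hr
    have hbot : N = ⊥ := Submodule.eq_bot_of_le_smul_of_le_jacobson_bot (maximalIdeal S) N
      (IsNoetherian.noetherian _) hle (maximalIdeal_le_jacobson _)
    have hyN : y ∈ N := (Submodule.mem_torsionBySet_iff _ _).2 fun r ↦ (mem_P r).1 r.2
    exact hy0 (by simpa [hbot] using hyN)
  have hz0 : (Submodule.Quotient.mk z : QuotSMulTop x M) ≠ 0 :=
    fun h ↦ hzx ((Submodule.Quotient.mk_eq_zero _).1 h)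
  obtain ⟨P', hP', hle⟩ := exists_le_isAssociatedPrime_of_isNoetherianRing S _ hz0
  have mem_P' {r : S} (h : r • z ∈ x • (⊤ : Submodule S M)) : r ∈ P' :=
    hle (by rwa [Submodule.mem_colon_singleton, ← Submodule.Quotient.mk_smul, Submodule.mem_bot,
      Submodule.Quotient.mk_eq_zero])
  refine ⟨hxP, P', hP', fun r hr ↦ mem_P' ?_,
    mem_P' (Submodule.smul_mem_pointwise_smul _ _ _ trivial)⟩
  rw [(Submodule.mem_torsionBySet_iff _ _).1 hzN ⟨r, hr⟩]
  exact zero_mem _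

theorem length_le_ringKrullDim_quotient_of_isAssociatedPrime (rs : List S)
    (hmem : ∀ r ∈ rs, r ∈ maximalIdeal S) : ∀ {M : Type*} [AddCommGroup M] [Module S M]
    [Module.Finite S M], IsWeaklyRegular M rs → ∀ {P : Ideal S}, IsAssociatedPrime P M →
    (rs.length : WithBot ℕ∞) ≤ ringKrullDim (S ⧸ P) := by
  induction rs with
  | nil =>
    intro M _ _ _ _ P hP
    have := hP.1
    simpa using ringKrullDim_nonneg_of_nontrivial
  | cons x rs ih =>
    intro M _ _ _ hreg P hP
    rw [isWeaklyRegular_cons_iff] at hreg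
    have := hP.1
    obtain ⟨hxP, P', hP', hle, hxP'⟩ :=
      exists_isAssociatedPrime_quotSMulTop_gt (hmem x (by simp)) hreg.1 hP
    have hlt : ringKrullDim (S ⧸ P') + 1 ≤ ringKrullDim (S ⧸ P) :=
      ringKrullDim_succ_le_of_surjective (Ideal.Quotient.factor hle)
        (Ideal.Quotient.factor_surjective hle) (r := Ideal.Quotient.mk P x)
        (mem_nonZeroDivisors_of_ne_zero (by rwa [Ne, Ideal.Quotient.eq_zero_iff_mem]))
        (by simpa [Ideal.Quotient.eq_zero_iff_mem] using hxP')
    rw [List.length_cons, Nat.cast_succ]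
    exact le_trans (add_le_add_left (ih (fun r hr ↦ hmem r (by simp [hr])) hreg.2 hP') 1) hlt

theorem modDepth_le_ringKrullDim_quotient {M : Type*} [AddCommGroup M] [Module S M]
    [Module.Finite S M] {P : Ideal S} (hP : IsAssociatedPrime P M) :
    (modDepth S M : WithBot ℕ∞) ≤ ringKrullDim (S ⧸ P) := by
  have := hP.1
  obtain ⟨d, hd⟩ : ∃ d : ℕ∞, (d : WithBot ℕ∞) = ringKrullDim (S ⧸ P) :=
    WithBot.ne_bot_iff_exists.1 (bot_lt_iff_ne_bot.1
      ((WithBot.bot_lt_coe 0).trans_le ringKrullDim_nonneg_of_nontrivial))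
  rw [← hd, WithBot.coe_le_coe]
  refine sSup_le ?_
  rintro _ ⟨rs, rfl, hmem, hrs⟩
  rw [← WithBot.coe_le_coe, hd]
  exact length_le_ringKrullDim_quotient_of_isAssociatedPrime rs hmem hrs.toIsWeaklyRegular hP

variable (S) in
theorem modDepth_self_le_ringKrullDim : (modDepth S S : WithBot ℕ∞) ≤ ringKrullDim S := by
  obtain ⟨P, hP⟩ := associatedPrimes.nonempty S S
  exact (modDepth_le_ringKrullDim_quotient hP).trans (ringKrullDim_quotient_le P)

theorem exists_isSMulRegular_of_ringKrullDim_quotient_lt {M : Type*} [AddCommGroup M] [Module S M]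
    [Module.Finite S M] {I : Ideal S}
    (hI : ringKrullDim (S ⧸ I) < (modDepth S M : WithBot ℕ∞)) : ∃ y ∈ I, IsSMulRegular M y := by
  by_contra! hcon
  have hsub : (I : Set S) ⊆ ⋃ P ∈ associatedPrimes S M, (P : Set S) := by
    rw [biUnion_associatedPrimes_eq_compl_regular]
    exact hcon
  rw [Ideal.subset_union_prime_finite (associatedPrimes.finite S M) ⊥ ⊥
    (fun P hP _ _ ↦ hP.1)] at hsub
  obtain ⟨P, hP, hle⟩ := hsub
  exact hI.not_ge <| (modDepth_le_ringKrullDim_quotient hP).trans <|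
    ringKrullDim_le_of_surjective _ (Ideal.Quotient.factor_surjective hle)

end Depth

section DepthQuotient

variable {S : Type u} [CommRing S] [IsLocalRing S] [IsNoetherianRing S]

open CategoryTheory Abelian in
theorem natCast_le_modDepth_iff_subsingleton_ext {M : Type u} [AddCommGroup M] [Module S M]
    [Module.Finite S M] [Nontrivial M] {n : ℕ} :
    (n : ℕ∞) ≤ modDepth S M ↔ ∀ i < n, Subsingleton
      (Ext (ModuleCat.of S (Shrink.{u} (S ⧸ maximalIdeal S))) (ModuleCat.of S M) i) := by
  have hlt : maximalIdeal S • (⊤ : Submodule S M) < ⊤ :=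
    lt_top_iff_ne_top.2 fun h ↦ top_ne_bot (α := Submodule S M) <|
      Submodule.eq_bot_of_le_smul_of_le_jacobson_bot (maximalIdeal S) ⊤
        Module.Finite.fg_top h.ge (maximalIdeal_le_jacobson _)
  rw [natCast_le_modDepth_iff,
    ((ModuleCat.exists_isRegular_tfae (maximalIdeal S) n (ModuleCat.of S M) hlt).out 1 3 :)]
  exact exists_congr fun rs ↦ and_congr_right fun _ ↦ and_congr_right fun hmem ↦
    (isRegular_iff_isWeaklyRegular_of_subset_maximalIdeal hmem).symm

open CategoryTheory Abelian in
theorem natCast_le_modDepth_quotSMulTop {M : Type u} [AddCommGroup M] [Module S M]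
    [Module.Finite S M] [Nontrivial M] {n : ℕ} (h : ((n + 1 : ℕ) : ℕ∞) ≤ modDepth S M) {y : S}
    (hy : y ∈ maximalIdeal S) (hreg : IsSMulRegular M y) :
    (n : ℕ∞) ≤ modDepth S (QuotSMulTop y M) := by
  have : Nontrivial (QuotSMulTop y M) := nontrivial_quotSMulTop_of_mem_maximalIdeal M hy
  rw [natCast_le_modDepth_iff_subsingleton_ext] at h ⊢
  intro i hi
  have hM := AddCommGrpCat.isZero_of_iff_subsingleton.mpr (h i (by omega))
  have hM' := AddCommGrpCat.isZero_of_iff_subsingleton.mpr (h (i + 1) (by omega))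
  exact AddCommGrpCat.subsingleton_of_isZero <| ShortComplex.Exact.isZero_of_both_zeros
    (Ext.covariant_sequence_exact₃' _ (IsSMulRegular.smulShortComplex_shortExact
      (M := ModuleCat.of S M) hreg) i (i + 1) rfl)
    (hM.eq_zero_of_src _) (hM'.eq_zero_of_tgt _)

theorem exists_isWeaklyRegular_mem_of_add_le_modDepth {I : Ideal S} (hI : I ≤ maximalIdeal S)
    {e : ℕ} (he : ringKrullDim (S ⧸ I) ≤ e) (t : ℕ) : ∀ {M : Type u} [AddCommGroup M]
    [Module S M] [Module.Finite S M] [Nontrivial M], ((t + e : ℕ) : ℕ∞) ≤ modDepth S M →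
    ∃ rs : List S, rs.length = t ∧ (∀ r ∈ rs, r ∈ I) ∧ IsWeaklyRegular M rs := by
  induction t with
  | zero => exact fun _ ↦ ⟨[], by simp⟩
  | succ t ih =>
    intro M _ _ _ _ h
    have hlt : ringKrullDim (S ⧸ I) < (modDepth S M : WithBot ℕ∞) := by
      refine he.trans_lt (WithBot.coe_lt_coe.2 (lt_of_lt_of_le ?_ h))
      exact Nat.cast_lt.2 (by omega)
    obtain ⟨y, hyI, hy⟩ := exists_isSMulRegular_of_ringKrullDim_quotient_lt hlt
    rw [Nat.add_right_comm] at h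
    have := nontrivial_quotSMulTop_of_mem_maximalIdeal M (hI hyI)
    obtain ⟨rs, hlen, hmem, hrs⟩ := ih (natCast_le_modDepth_quotSMulTop h (hI hyI) hy)
    exact ⟨y :: rs, by simp [hlen], by simpa [hyI] using hmem, hrs.cons hy⟩

end DepthQuotient

/-! ### Regular local rings -/

section LocalRing

variable {T : Type*} [CommRing T] [IsLocalRing T]

theorem isLocalRing_quotient_span_singleton {x : T} (hx : x ∈ maximalIdeal T) :
    IsLocalRing (T ⧸ Ideal.span {x}) := by
  have : Nontrivial (T ⧸ Ideal.span {x}) := by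
    rw [Ideal.Quotient.nontrivial_iff, Ne, Ideal.span_singleton_eq_top]
    exact hx
  exact IsLocalRing.of_surjective' (Ideal.Quotient.mk _) Ideal.Quotient.mk_surjective

theorem exists_span_insert_erase_eq {M : Type*} [AddCommGroup M] [Module T M] [DecidableEq M]
    {s : Finset M} {x : M} (hx : x ∈ Submodule.span T (s : Set M))
    (hx' : x ∉ maximalIdeal T • Submodule.span T (s : Set M)) :
    ∃ y ∈ s, Submodule.span T (insert x (s.erase y) : Set M) = Submodule.span T s := by
  obtain ⟨c, -, rfl⟩ := Submodule.mem_span_finset.1 hx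
  obtain ⟨y, hy, hcy⟩ : ∃ y ∈ s, IsUnit (c y) := by
    by_contra! hcon
    exact hx' (Submodule.sum_mem _ fun y hy ↦
      Submodule.smul_mem_smul (hcon y hy) (Submodule.subset_span hy))
  refine ⟨y, hy, le_antisymm (Submodule.span_le.2 (Set.insert_subset hx fun z hz ↦
    Submodule.subset_span (Finset.mem_of_mem_erase hz))) (Submodule.span_le.2 fun z hz ↦ ?_)⟩
  obtain rfl | hzy := eq_or_ne z y
  · have hsub : c z • z = ∑ w ∈ s, c w • w - ∑ w ∈ s.erase z, c w • w := by
      rw [← Finset.add_sum_erase s _ hy, add_sub_cancel_right]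
    rw [SetLike.mem_coe, ← Submodule.smul_mem_iff_of_isUnit _ hcy, hsub]
    exact sub_mem (Submodule.subset_span (Set.mem_insert _ _)) (Submodule.sum_mem _ fun w hw ↦
      Submodule.smul_mem _ _ (Submodule.subset_span (Set.mem_insert_of_mem _ hw)))
  · exact Submodule.subset_span (Set.mem_insert_of_mem _ (Finset.mem_erase.2 ⟨hzy, hz⟩))

theorem natCast_succ_le_modDepth_of_quotient_span_singleton {x : T}
    [IsLocalRing (T ⧸ Ideal.span {x})] (hx : x ∈ maximalIdeal T) (hreg : IsSMulRegular T x)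
    {n : ℕ} (h : (n : ℕ∞) ≤ modDepth (T ⧸ Ideal.span {x}) (T ⧸ Ideal.span {x})) :
    ((n + 1 : ℕ) : ℕ∞) ≤ modDepth T T := by
  rw [natCast_le_modDepth_iff] at h ⊢
  obtain ⟨rs, rfl, hmem, hrs⟩ := h
  obtain ⟨rs, rfl⟩ := List.map_surjective_iff.2 Ideal.Quotient.mk_surjective rs
  rw [← Ideal.Quotient.algebraMap_eq, isWeaklyRegular_map_algebraMap_iff] at hrs
  have e : QuotSMulTop x T ≃ₗ[T] T ⧸ Ideal.span {x} :=
    Submodule.quotEquivOfEq _ _ (by rw [← Submodule.ideal_span_singleton_smul, smul_eq_mul,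
      Ideal.mul_top])
  refine ⟨x :: rs, by simp, ?_, ((e.isWeaklyRegular_congr rs).2 hrs).cons hreg⟩
  have : IsLocalHom (Ideal.Quotient.mk (Ideal.span {x})) :=
    IsLocalHom.of_surjective _ Ideal.Quotient.mk_surjective
  rw [List.forall_mem_cons]
  exact ⟨hx, by simpa using hmem⟩

variable [IsNoetherianRing T]

theorem ringKrullDim_le_ringKrullDim_quotient_span_singleton_add_one {x : T}
    (hx : x ∈ maximalIdeal T) : ringKrullDim T ≤ ringKrullDim (T ⧸ Ideal.span {x}) + 1 := by
  have h := ringKrullDim_le_ringKrullDim_quotient_add_card {x} (by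
    rwa [ringJacobson_eq_maximalIdeal, Finset.coe_singleton, Set.singleton_subset_iff])
  rwa [Finset.coe_singleton, Finset.card_singleton, Nat.cast_one] at h

theorem spanFinrank_maximalIdeal_quotient_add_one_le {x : T} [IsLocalRing (T ⧸ Ideal.span {x})]
    (hx : x ∈ maximalIdeal T) (hx2 : x ∉ maximalIdeal T ^ 2) :
    (maximalIdeal (T ⧸ Ideal.span {x})).spanFinrank + 1 ≤ (maximalIdeal T).spanFinrank := by
  classical
  obtain ⟨s, hcard, hs⟩ := Submodule.FG.exists_span_finset_card_eq_spanFinrank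
    (IsNoetherian.noetherian (maximalIdeal T))
  obtain ⟨y, hy, hspan⟩ := exists_span_insert_erase_eq (s := s) (hs ▸ hx)
    (by rwa [hs, smul_eq_mul, ← pow_two])
  have hmap : maximalIdeal (T ⧸ Ideal.span {x}) =
      Ideal.span (Ideal.Quotient.mk (Ideal.span {x}) '' (s.erase y)) := by
    rw [← map_maximalIdeal_of_surjective _ Ideal.Quotient.mk_surjective, ← hs, ← hspan]
    change Ideal.map _ (Ideal.span _) = _
    rw [Ideal.map_span, Set.image_insert_eq, Ideal.Quotient.eq_zero_iff_mem.2
      (Ideal.mem_span_singleton_self x), Ideal.span_insert_zero]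
  rw [← hcard, ← Finset.card_erase_add_one hy, hmap]
  gcongr
  refine (Submodule.spanFinrank_span_le_ncard_of_finite ((Finset.finite_toSet _).image _)).trans ?_
  exact (Set.ncard_image_le (Finset.finite_toSet _)).trans_eq (Set.ncard_coe_finset _)

theorem exists_mem_maximalIdeal_notMem_sq_notMem_minimalPrimes (hT : ringKrullDim T ≠ 0) :
    ∃ x ∈ maximalIdeal T, x ∉ maximalIdeal T ^ 2 ∧ ∀ P ∈ minimalPrimes T, x ∉ P := by
  have not_le {P : Ideal T} (hP : P ∈ minimalPrimes T) : ¬ maximalIdeal T ≤ P := by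
    intro hle
    have heq : maximalIdeal T = P := le_antisymm hle (le_maximalIdeal hP.1.1.ne_top)
    rw [← maximalIdeal_height_eq_ringKrullDim, Ideal.height_eq_zero_iff.2 (heq ▸ hP)] at hT
    exact hT rfl
  by_contra! hcon
  have hsub : (maximalIdeal T : Set T) ⊆
      ⋃ P ∈ insert (maximalIdeal T ^ 2) (minimalPrimes T), (P : Set T) := by
    intro x hx
    by_cases hx2 : x ∈ maximalIdeal T ^ 2
    · exact Set.mem_biUnion (Set.mem_insert _ _) hx2
    · obtain ⟨P, hP, hxP⟩ := hcon x hx hx2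
      exact Set.mem_biUnion (Set.mem_insert_of_mem _ hP) hxP
  rw [Ideal.subset_union_prime_finite
    ((minimalPrimes.finite_of_isNoetherianRing T).insert (maximalIdeal T ^ 2))
    (f := fun P ↦ P) (maximalIdeal T ^ 2) (maximalIdeal T ^ 2)
    (fun P hP hne _ ↦ (hP.resolve_left hne).1.1)] at hsub
  obtain ⟨P, rfl | hP, hle⟩ := hsub
  · have hbot : maximalIdeal T = ⊥ :=
      Submodule.eq_bot_of_le_smul_of_le_jacobson_bot (maximalIdeal T) _
        (IsNoetherian.noetherian _) (by rwa [smul_eq_mul, ← pow_two])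
        (maximalIdeal_le_jacobson _)
    obtain ⟨P, hP⟩ := Ideal.nonempty_minimalPrimes (I := (⊥ : Ideal T)) bot_ne_top
    exact not_le hP (hbot ▸ bot_le)
  · exact not_le hP hle

end LocalRing

section RegularLocalRing

theorem isRegularLocalRing_of_span_eq_maximalIdeal {T : Type*} [CommRing T] [IsLocalRing T]
    [IsNoetherianRing T] {s : Finset T} (hs : Ideal.span (s : Set T) = maximalIdeal T)
    (hcard : (s.card : WithBot ℕ∞) = ringKrullDim T) : IsRegularLocalRing T := by
  refine .of_spanFinrank_maximalIdeal_le _ ?_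
  rw [← hcard, ← hs, ← Set.ncard_coe_finset]
  exact Nat.cast_le.2 (Submodule.spanFinrank_span_le_ncard_of_finite s.finite_toSet)

theorem isField_of_isRegularLocalRing {T : Type*} [CommRing T] [IsRegularLocalRing T]
    (hT : ringKrullDim T = 0) : IsField T := by
  rw [← IsRegularLocalRing.spanFinrank_maximalIdeal, Nat.cast_eq_zero] at hT
  exact isField_iff_maximalIdeal_eq.2
    ((Submodule.spanFinrank_eq_zero_iff_eq_bot (IsNoetherian.noetherian _)).1 hT)

theorem isRegularLocalRing_quotient_span_singleton {T : Type*} [CommRing T] [IsRegularLocalRing T]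
    {x : T} (hx : x ∈ maximalIdeal T) (hx2 : x ∉ maximalIdeal T ^ 2) :
    IsRegularLocalRing (T ⧸ Ideal.span {x}) := by
  have := isLocalRing_quotient_span_singleton hx
  refine .of_spanFinrank_maximalIdeal_le _ ?_
  have hrank : (((maximalIdeal (T ⧸ Ideal.span {x})).spanFinrank + 1 : ℕ) : WithBot ℕ∞) ≤
      (maximalIdeal T).spanFinrank :=
    Nat.cast_le.2 (spanFinrank_maximalIdeal_quotient_add_one_le hx hx2)
  have hdim := ringKrullDim_le_ringKrullDim_quotient_span_singleton_add_one hx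
  rw [IsRegularLocalRing.spanFinrank_maximalIdeal, Nat.cast_succ] at hrank
  exact ENat.WithBot.add_le_add_one_right_iff.1 (hrank.trans hdim)

theorem isRegularLocalRing_induction
    {motive : ∀ (T : Type u) [CommRing T] [IsRegularLocalRing T], Prop}
    (field : ∀ (T : Type u) [CommRing T] [IsRegularLocalRing T], IsField T → motive T)
    (quotient : ∀ (T : Type u) [CommRing T] [IsRegularLocalRing T] (x : T),
      x ∈ maximalIdeal T → x ∉ maximalIdeal T ^ 2 → (∀ P ∈ minimalPrimes T, x ∉ P) →
      ∀ [IsRegularLocalRing (T ⧸ Ideal.span {x})], motive (T ⧸ Ideal.span {x}) → motive T)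
    (T : Type u) [CommRing T] [IsRegularLocalRing T] : motive T := by
  induction hn : (maximalIdeal T).spanFinrank using Nat.strong_induction_on generalizing T with
  | h n ih =>
    by_cases hT : ringKrullDim T = 0
    · exact field T (isField_of_isRegularLocalRing hT)
    obtain ⟨x, hx, hx2, hxP⟩ := exists_mem_maximalIdeal_notMem_sq_notMem_minimalPrimes hT
    have := isRegularLocalRing_quotient_span_singleton hx hx2
    exact quotient T x hx hx2 hxP (ih _ (by
      rw [← hn]; exact spanFinrank_maximalIdeal_quotient_add_one_le hx hx2) _ rfl)

theorem isDomain_of_isRegularLocalRing (T : Type u) [CommRing T] [IsRegularLocalRing T] :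
    IsDomain T := by
  refine isRegularLocalRing_induction (motive := fun T _ _ ↦ IsDomain T)
    (fun T _ _ hT ↦ hT.isDomain) (fun T _ _ x hx _ hxP _ ih ↦ ?_) T
  · have hprime := (Ideal.Quotient.isDomain_iff_prime _).1 ih
    obtain ⟨P, hP, hPx⟩ := Ideal.exists_minimalPrimes_le (bot_le (a := Ideal.span {x}))
    have : P.IsPrime := hP.1.1
    -- Since `x ∉ P` and `P ⊆ (x)`, every element of `P` is `x` times an element of `P`.
    have hle : P ≤ maximalIdeal T • P := fun z hz ↦ by
      obtain ⟨w, rfl⟩ := Ideal.mem_span_singleton.1 (hPx hz)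
      exact Submodule.smul_mem_smul hx ((this.mem_or_mem hz).resolve_left (hxP P hP))
    have hbot : P = ⊥ := Submodule.eq_bot_of_le_smul_of_le_jacobson_bot _ P
      (IsNoetherian.noetherian P) hle (maximalIdeal_le_jacobson _)
    subst hbot
    exact IsDomain.of_bot_isPrime T

theorem ringKrullDim_le_modDepth_self (T : Type u) [CommRing T] [IsRegularLocalRing T] :
    ringKrullDim T ≤ modDepth T T := by
  refine isRegularLocalRing_induction (motive := fun T _ _ ↦ ringKrullDim T ≤ modDepth T T)
    (fun T _ _ hT ↦ ?_) (fun T _ _ x hx hx2 _ _ ih ↦ ?_) T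
  · simp [ringKrullDim_eq_zero_of_isField hT]
  · have := isDomain_of_isRegularLocalRing T
    have hdim := ringKrullDim_le_ringKrullDim_quotient_span_singleton_add_one hx
    have hx0 : x ≠ 0 := by rintro rfl; exact hx2 (zero_mem _)
    rw [← IsRegularLocalRing.spanFinrank_maximalIdeal (R := T ⧸ Ideal.span {x})]
      at ih hdim
    refine hdim.trans ?_
    exact_mod_cast natCast_succ_le_modDepth_of_quotient_span_singleton hx
      (IsSMulRegular.of_ne_zero hx0) (by exact_mod_cast ih)

end RegularLocalRing

/-! ### Projective dimension over regular local rings -/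

section ProjectiveDimension

open CategoryTheory

variable {T : Type u} [CommRing T] [IsDomain T]

theorem hasProjectiveDimensionLE_one_of_projective_quotient {x : T} (hx : x ≠ 0) (N : Type u)
    [AddCommGroup N] [Module T N] [Module (T ⧸ Ideal.span {x}) N]
    [IsScalarTower T (T ⧸ Ideal.span {x}) N] [Module.Projective (T ⧸ Ideal.span {x}) N] :
    HasProjectiveDimensionLE (ModuleCat.of T N) 1 := by
  let π : QuotSMulTop x (N →₀ T) →ₗ[T] N :=
    Submodule.liftQ _ (Finsupp.linearCombination T id) (by
      rintro _ ⟨y, -, rfl⟩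
      simp [← algebraMap_smul (T ⧸ Ideal.span {x}) x])
  have hπ : Function.Surjective π := fun n ↦ ⟨Submodule.Quotient.mk (Finsupp.single n 1), by
    simp [π]⟩
  obtain ⟨σ, hσ⟩ := Module.projective_lifting_property
    (π.extendScalarsOfSurjective (Ideal.Quotient.mk_surjective (I := Ideal.span {x})))
    LinearMap.id hπ
  have hfree : HasProjectiveDimensionLT (ModuleCat.of T (QuotSMulTop x (N →₀ T))) 2 :=
    (IsSMulRegular.smulShortComplex_shortExact (M := ModuleCat.of T (N →₀ T))
      (IsSMulRegular.of_ne_zero hx)).hasProjectiveDimensionLT_X₃ 1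
      (inferInstanceAs (HasProjectiveDimensionLT (ModuleCat.of T (N →₀ T)) 1))
      (inferInstanceAs (HasProjectiveDimensionLT (ModuleCat.of T (N →₀ T)) 2))
  exact Retract.hasProjectiveDimensionLT (Y := ModuleCat.of T (QuotSMulTop x (N →₀ T)))
    ⟨ModuleCat.ofHom (σ.restrictScalars T), ModuleCat.ofHom π, by
      ext n; exact LinearMap.congr_fun hσ n⟩ 2

theorem hasProjectiveDimensionLE_succ_of_quotient {x : T} (hx : x ≠ 0) (n : ℕ) (N : Type u)
    [AddCommGroup N] [Module T N] [Module (T ⧸ Ideal.span {x}) N]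
    [IsScalarTower T (T ⧸ Ideal.span {x}) N]
    (hN : HasProjectiveDimensionLE (ModuleCat.of (T ⧸ Ideal.span {x}) N) n) :
    HasProjectiveDimensionLE (ModuleCat.of T N) (n + 1) := by
  induction n generalizing N with
  | zero =>
    have : Module.Projective (T ⧸ Ideal.span {x}) N :=
      (IsProjective.iff_projective N).2 ((projective_iff_hasProjectiveDimensionLE_zero _).2 hN)
    exact hasProjectiveDimensionLE_one_of_projective_quotient hx N
  | succ n ih =>
    let φ := Finsupp.linearCombination (T ⧸ Ideal.span {x}) (id : N → N)
    have hφ : Function.Surjective φ := Finsupp.linearCombination_id_surjective _ _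
    have hker := (LinearMap.shortExact_shortComplexKer hφ).hasProjectiveDimensionLT_X₁ (n + 1)
      (inferInstanceAs (HasProjectiveDimensionLT
        (ModuleCat.of (T ⧸ Ideal.span {x}) (N →₀ T ⧸ Ideal.span {x})) (n + 1))) hN
    have hfree := hasProjectiveDimensionLE_one_of_projective_quotient hx (N →₀ T ⧸ Ideal.span {x})
    exact (LinearMap.shortExact_shortComplexKer
      (f := φ.restrictScalars T) hφ).hasProjectiveDimensionLT_X₃ (n + 2) (ih (LinearMap.ker φ) hker)
      (hasProjectiveDimensionLT_of_ge _ 2 _ (by lia))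

end ProjectiveDimension

open CategoryTheory in
theorem hasProjectiveDimensionLE_of_ringKrullDim_le (T : Type u) [CommRing T]
    [IsRegularLocalRing T] {n : ℕ} (hn : ringKrullDim T ≤ n) (M : ModuleCat.{u} T)
    [Module.Finite T M] : HasProjectiveDimensionLE M n := by
  refine isRegularLocalRing_induction (motive := fun T _ _ ↦ ∀ n : ℕ, ringKrullDim T ≤ n →
    ∀ M : ModuleCat.{u} T, Module.Finite T M → HasProjectiveDimensionLE M n)
    (fun T _ _ hT n _ M _ ↦ ?_) (fun T _ _ x hx hx2 _ _ ih n hn M _ ↦ ?_) T n hn M ‹_›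
  · let _ := hT.toField
    have : Module.Free T M := Module.Free.of_divisionRing T M
    have : Projective M := (IsProjective.iff_projective M).1 Module.Projective.of_free
    infer_instance
  · have := isDomain_of_isRegularLocalRing T
    have hx0 : x ≠ 0 := by rintro rfl; exact hx2 (zero_mem _)
    have hdim := (ringKrullDim_quotient_succ_le_of_nonZeroDivisor
      (mem_nonZeroDivisors_of_ne_zero hx0)).trans hn
    obtain ⟨n, rfl⟩ : ∃ m, n = m + 1 := Nat.exists_eq_succ_of_ne_zero (by
      rintro rfl
      have := (add_le_add_left ringKrullDim_nonneg_of_nontrivial 1).trans hdim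
      norm_num at this)
    obtain ⟨F, _, _, _, _, φ, hφ⟩ := Module.exists_finite_presentation T M
    have hreg : IsSMulRegular (LinearMap.ker φ) x := IsSMulRegular.of_ne_zero hx0
    have : Module.Finite (T ⧸ Ideal.span {x}) (QuotSMulTop x (LinearMap.ker φ)) :=
      Module.Finite.of_restrictScalars_finite T _ _
    have hker : HasProjectiveDimensionLE (ModuleCat.of T (LinearMap.ker φ)) n := by
      rw [← projectiveDimension_le_iff, ← ENat.WithBot.add_le_add_one_right_iff,
        ← ModuleCat.projectiveDimension_quotSMulTop_eq_succ_of_isSMulRegular _ x hreg hx]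
      refine (projectiveDimension_le_iff _ (n + 1)).2
        (hasProjectiveDimensionLE_succ_of_quotient hx0 n _
          (ih n (ENat.WithBot.add_le_add_one_right_iff.1 (by exact_mod_cast hdim)) _ this))
    exact (LinearMap.shortExact_shortComplexKer hφ).hasProjectiveDimensionLT_X₃ (n + 1) hker
      (inferInstanceAs (HasProjectiveDimensionLT (ModuleCat.of T F) (n + 2)))

/-! ### MacRae invariants -/

section MacRae

open TensorProduct

theorem ringOrd_prod {O ι : Type*} [CommRing O] [IsDomain O] (s : Finset ι) {c : ι → O}
    (hc : ∀ i ∈ s, c i ≠ 0) : Ring.ord O (∏ i ∈ s, c i) = ∑ i ∈ s, Ring.ord O (c i) := by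
  induction s using Finset.cons_induction with
  | empty => simp
  | cons a s ha ih =>
    rw [Finset.forall_mem_cons] at hc
    rw [Finset.prod_cons, Finset.sum_cons, Ring.ord_mul O
      (mem_nonZeroDivisors_of_ne_zero (Finset.prod_ne_zero_iff.2 hc.2)), ih hc.2]

theorem length_quotient_range_eq_ringOrd_det {O : Type*} [CommRing O] [IsDomain O]
    [IsPrincipalIdealRing O] {M : Type*} [AddCommGroup M] [Module O M] [Module.Free O M]
    [Module.Finite O M] {f : M →ₗ[O] M} (hf : Function.Injective f) :
    Module.length O (M ⧸ LinearMap.range f) = Ring.ord O (LinearMap.det f) := by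
  let b := Module.finBasis O M
  let e := LinearEquiv.ofInjective f hf
  have hrank : Module.finrank O (LinearMap.range f) = Module.finrank O M := e.symm.finrank_eq
  let c := Submodule.smithNormalFormCoeffs b hrank
  let top := Submodule.smithNormalFormTopBasis b hrank
  let bot := Submodule.smithNormalFormBotBasis b hrank
  let e' : M ≃ₗ[O] LinearMap.range f := top.equiv bot (Equiv.refl _)
  have hdiag : (LinearMap.range f).subtype ∘ₗ e' = Matrix.toLin top top (Matrix.diagonal c) :=
    top.ext fun i ↦ by
      simp [e', bot, Submodule.smithNormalFormBotBasis_def, Matrix.toLin_self,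
        Matrix.diagonal_apply, c, top]
  have hdet : Associated (LinearMap.det f) (∏ i, c i) := by
    rw [← Matrix.det_diagonal, ← LinearMap.det_toLin top, ← hdiag]
    exact LinearMap.associated_det_comp_equiv (LinearMap.range f).subtype e e'
  rw [((LinearMap.range f).quotientEquivPiSpan b hrank).length_eq,
    Module.length_pi_of_fintype, Ring.ord_eq_of_associated hdet,
    ringOrd_prod _ fun i _ ↦ Submodule.smithNormalFormCoeffs_ne_zero b hrank i]
  rfl

/-- The fraction `v / u` is a MacRae invariant of the `T`-module `N`: it computes, as an order of
vanishing, the length of the base change of `N` to every flat principal ideal domain over `T`.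
The denominator `u` is moved to the side of the length, as lengths live in `ℕ∞`. -/
structure IsMacRaeInvariant (T : Type u) [CommRing T] (N : Type u) [AddCommGroup N] [Module T N]
    (v u : T) : Prop where
  num_ne_zero : v ≠ 0
  denom_ne_zero : u ≠ 0
  length_add_ord : ∀ (O : Type u) [CommRing O] [IsDomain O] [IsPrincipalIdealRing O] [Algebra T O]
    [Module.Flat T O], Function.Injective (algebraMap T O) →
    Module.length O (O ⊗[T] N) + Ring.ord O (algebraMap T O u) = Ring.ord O (algebraMap T O v)

namespace IsMacRaeInvariant

variable {T : Type u} [CommRing T] {N N' Q : Type u} [AddCommGroup N] [Module T N]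
  [AddCommGroup N'] [Module T N'] [AddCommGroup Q] [Module T Q]

theorem of_exact {i : N' →ₗ[T] Q} {q : Q →ₗ[T] N} (hi : Function.Injective i)
    (hiq : Function.Exact i q) (hq : Function.Surjective q) [IsDomain T] {v u w : T}
    (hN' : IsMacRaeInvariant T N' v u) (hQ : IsMacRaeInvariant T Q w 1) :
    IsMacRaeInvariant T N (w * u) v where
  num_ne_zero := mul_ne_zero hQ.num_ne_zero hN'.denom_ne_zero
  denom_ne_zero := hN'.num_ne_zero
  length_add_ord O _ _ _ _ _ hO := by
    have hlen : Module.length O (O ⊗[T] Q) =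
        Module.length O (O ⊗[T] N') + Module.length O (O ⊗[T] N) :=
      Module.length_eq_add_of_exact (i.baseChange O) (q.baseChange O)
        (Module.Flat.lTensor_preserves_injective_linearMap i hi) (LinearMap.lTensor_surjective O hq)
        (lTensor_exact O hiq hq)
    have hu : algebraMap T O u ∈ nonZeroDivisors O :=
      mem_nonZeroDivisors_of_ne_zero ((map_ne_zero_iff _ hO).2 hN'.denom_ne_zero)
    have hw := hQ.length_add_ord O hO
    rw [map_one, Ring.ord_one, add_zero] at hw
    rw [map_mul, Ring.ord_mul O hu, ← hw, hlen, ← hN'.length_add_ord O hO]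
    abel

theorem of_exact_free [IsDomain T] {F : Type u} [AddCommGroup F] [Module T F] [Module.Free T F]
    [Module.Finite T F] {i : F →ₗ[T] F} {q : F →ₗ[T] N} (hi : Function.Injective i)
    (hiq : Function.Exact i q) (hq : Function.Surjective q) :
    IsMacRaeInvariant T N (LinearMap.det i) 1 where
  num_ne_zero h := (LinearMap.bot_lt_ker_of_det_eq_zero h).ne' (LinearMap.ker_eq_bot.2 hi)
  denom_ne_zero := one_ne_zero
  length_add_ord O _ _ _ _ _ _ := by
    have hexact : Function.Exact (i.baseChange O) (q.baseChange O) := lTensor_exact O hiq hq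
    rw [map_one, Ring.ord_one, add_zero, ← LinearMap.det_baseChange,
      ← length_quotient_range_eq_ringOrd_det
        (Module.Flat.lTensor_preserves_injective_linearMap i hi)]
    exact ((Submodule.quotEquivOfEq _ _ hexact.linearMap_ker_eq.symm).trans
      ((q.baseChange O).quotKerEquivOfSurjective
        (LinearMap.lTensor_surjective O hq))).symm.length_eq

end IsMacRaeInvariant

open CategoryTheory in
theorem exists_isMacRaeInvariant_of_projectiveDimensionLE_one {T : Type u} [CommRing T] [IsDomain T]
    [IsLocalRing T] [IsNoetherianRing T] {N : Type u} [AddCommGroup N] [Module T N]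
    [Module.Finite T N] (hN : HasProjectiveDimensionLE (ModuleCat.of T N) 1) {a : T} (ha : a ≠ 0)
    (haN : ∀ y : N, a • y = 0) : ∃ v u : T, IsMacRaeInvariant T N v u := by
  obtain ⟨F, _, _, _, _, φ, hφ⟩ := Module.exists_finite_presentation T N
  have hproj : HasProjectiveDimensionLE (ModuleCat.of T (LinearMap.ker φ)) 0 :=
    (LinearMap.shortExact_shortComplexKer hφ).hasProjectiveDimensionLT_X₁ 1
      (inferInstanceAs (HasProjectiveDimensionLT (ModuleCat.of T F) 1)) hN
  have : Module.Projective T (LinearMap.ker φ) :=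
    (IsProjective.iff_projective _).2 ((projective_iff_hasProjectiveDimensionLE_zero _).2 hproj)
  have : Module.Free T (LinearMap.ker φ) := Module.free_of_flat_of_isLocalRing
  let smul : F →ₗ[T] LinearMap.ker φ := (LinearMap.lsmul T F a).codRestrict _ fun y ↦ by
    simp [haN]
  have hsmul : Function.Injective smul := fun y z hyz ↦
    smul_right_injective F ha (congrArg Subtype.val hyz)
  let e : F ≃ₗ[T] LinearMap.ker φ := LinearEquiv.ofFinrankEq _ _
    ((LinearMap.finrank_le_finrank_of_injective hsmul).antisymm (Submodule.finrank_le _))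
  refine ⟨_, _, .of_exact_free (i := (LinearMap.ker φ).subtype ∘ₗ e.toLinearMap)
    (Subtype.val_injective.comp e.injective) (LinearMap.exact_iff.2 ?_) hφ⟩
  rw [LinearMap.range_comp, LinearEquiv.range, Submodule.map_top, Submodule.range_subtype]

open CategoryTheory in
/-- In the inductive step, `N` is resolved by `0 → N' → F / aF → N → 0` with `F` free: this keeps
`N'` torsion while lowering the projective dimension. -/
theorem exists_isMacRaeInvariant {T : Type u} [CommRing T] [IsDomain T] [IsLocalRing T]
    [IsNoetherianRing T] {n : ℕ} (N : Type u) [AddCommGroup N] [Module T N] [Module.Finite T N]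
    (hN : HasProjectiveDimensionLE (ModuleCat.of T N) (n + 1)) {a : T} (ha : a ≠ 0)
    (haN : ∀ y : N, a • y = 0) : ∃ v u : T, IsMacRaeInvariant T N v u := by
  induction n generalizing N with
  | zero => exact exists_isMacRaeInvariant_of_projectiveDimensionLE_one hN ha haN
  | succ n ih =>
    obtain ⟨F, _, _, _, _, φ, hφ⟩ := Module.exists_finite_presentation T N
    let q : QuotSMulTop a F →ₗ[T] N := Submodule.liftQ _ φ (by
      rintro _ ⟨y, -, rfl⟩
      simp [haN])
    have hq : Function.Surjective q := fun y ↦ by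
      obtain ⟨z, rfl⟩ := hφ y
      exact ⟨Submodule.Quotient.mk z, rfl⟩
    have ha_inj : Function.Injective (LinearMap.lsmul T F a) := smul_right_injective F ha
    have haQ : ∀ y : QuotSMulTop a F, a • y = 0 := fun y ↦ by
      obtain ⟨z, rfl⟩ := Submodule.mkQ_surjective _ y
      rw [← map_smul, Submodule.mkQ_apply, Submodule.Quotient.mk_eq_zero]
      exact Submodule.smul_mem_pointwise_smul z a ⊤ trivial
    have hQ : HasProjectiveDimensionLT (ModuleCat.of T (QuotSMulTop a F)) 2 :=
      (IsSMulRegular.smulShortComplex_shortExact (M := ModuleCat.of T F)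
        ha_inj).hasProjectiveDimensionLT_X₃ 1
        (inferInstanceAs (HasProjectiveDimensionLT (ModuleCat.of T F) 1))
        (inferInstanceAs (HasProjectiveDimensionLT (ModuleCat.of T F) 2))
    have hker : HasProjectiveDimensionLE (ModuleCat.of T (LinearMap.ker q)) (n + 1) :=
      (LinearMap.shortExact_shortComplexKer hq).hasProjectiveDimensionLT_X₁ (n + 2)
        (hasProjectiveDimensionLT_of_ge _ 2 _ (by lia)) hN
    obtain ⟨v, u, hvu⟩ := ih (LinearMap.ker q) hker fun y ↦ Subtype.ext (haQ y)
    exact ⟨_, _, hvu.of_exact (LinearMap.ker q).injective_subtype q.exact_subtype_ker_map hq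
      (.of_exact_free ha_inj (LinearMap.exact_lsmul_mkQ_smul_top F a)
        (Submodule.mkQ_surjective _))⟩

end MacRae

/-! ### Factoriality of regular local rings -/

section Factoriality

open TensorProduct

theorem height_add_ringKrullDim_quotient_le {S : Type*} [CommRing S] (q : Ideal S)
    [hq : q.IsPrime] :
    (q.height : WithBot ℕ∞) + ringKrullDim (S ⧸ q) ≤ ringKrullDim S := by
  let x : PrimeSpectrum S := ⟨q, hq⟩
  have : Nonempty (PrimeSpectrum S) := ⟨x⟩
  have hco : ringKrullDim (S ⧸ q) = (Order.coheight x : ℕ∞) := by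
    rw [ringKrullDim_quotient, Order.coheight_eq_krullDim_Ici]
    rfl
  rw [hco, show q.height = Order.height x from x.height_eq_orderHeight, ringKrullDim,
    Order.krullDim_eq_iSup_height_add_coheight_of_nonempty, ← WithBot.coe_add, WithBot.coe_le_coe]
  exact le_iSup (fun y : PrimeSpectrum S ↦ Order.height y + Order.coheight y) x

theorem height_le_one_of_isAssociatedPrime_quotSMulTop {T : Type u} [CommRing T]
    [IsRegularLocalRing T] {x : T} (hx : x ≠ 0) {P : Ideal T}
    (hP : IsAssociatedPrime P (QuotSMulTop x T)) : P.height ≤ 1 := by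
  have := hP.1
  have := isDomain_of_isRegularLocalRing T
  have hxm : x ∈ maximalIdeal T := (mem_maximalIdeal x).2 fun hu ↦ by
    have : Subsingleton (QuotSMulTop x T) := by
      rw [Submodule.Quotient.subsingleton_iff, ← Submodule.ideal_span_singleton_smul,
        Ideal.span_singleton_eq_top.2 hu, Submodule.top_smul]
    exact not_isAssociatedPrime_of_subsingleton hP
  have hdim := height_add_ringKrullDim_quotient_le P
  have hdepth := ringKrullDim_le_modDepth_self T
  rw [← IsRegularLocalRing.spanFinrank_maximalIdeal (R := T)] at hdim hdepth
  cases hn : (maximalIdeal T).spanFinrank with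
  | zero =>
    have hdim0 := Ideal.height_le_ringKrullDim_of_isPrime (I := P)
    rw [← IsRegularLocalRing.spanFinrank_maximalIdeal, hn] at hdim0
    exact_mod_cast hdim0.trans (by norm_num : ((0 : ℕ) : WithBot ℕ∞) ≤ 1)
  | succ n =>
    rw [hn] at hdim hdepth
    have hquot : (n : ℕ∞) ≤ modDepth T (QuotSMulTop x T) :=
      natCast_le_modDepth_quotSMulTop (by exact_mod_cast hdepth) hxm (IsSMulRegular.of_ne_zero hx)
    have hn_le : (n : WithBot ℕ∞) ≤ ringKrullDim (T ⧸ P) :=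
      le_trans (by exact_mod_cast hquot) (modDepth_le_ringKrullDim_quotient hP)
    have hadd : P.height + (n : ℕ∞) ≤ 1 + n := by
      rw [add_comm 1]
      exact_mod_cast (add_le_add_right hn_le _).trans hdim
    exact (ENat.add_le_add_iff_right (ENat.natCast_ne_top n)).1 hadd

theorem isDiscreteValuationRing_localization_of_height_eq_one {T : Type*} [CommRing T] [IsDomain T]
    [IsNoetherianRing T] [IsIntegrallyClosed T] {P : Ideal T} [P.IsPrime] (h : P.height = 1) :
    IsDiscreteValuationRing (Localization.AtPrime P) := by
  have : IsNoetherianRing (Localization.AtPrime P) :=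
    IsLocalization.isNoetherianRing P.primeCompl _ inferInstance
  have : IsIntegrallyClosed (Localization.AtPrime P) :=
    isIntegrallyClosed_of_isLocalization _ P.primeCompl P.primeCompl_le_nonZeroDivisors
  have hdim : Ring.KrullDimLE 1 (Localization.AtPrime P) := by
    rw [Ring.krullDimLE_iff, IsLocalization.AtPrime.ringKrullDim_eq_height P, h, Nat.cast_one]
    rfl
  have hfield : ¬ IsField (Localization.AtPrime P) := fun hf ↦ by
    have hzero := ringKrullDim_eq_zero_of_isField hf
    rw [IsLocalization.AtPrime.ringKrullDim_eq_height P, h] at hzero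
    exact one_ne_zero (WithBot.coe_injective hzero)
  have : IsDedekindDomain (Localization.AtPrime P) := {
    __ := (inferInstance : IsDomain (Localization.AtPrime P))
    __ := (inferInstance : IsIntegrallyClosed (Localization.AtPrime P))
    maximalOfPrime {Q} := Ring.krullDimLE_one_iff_of_noZeroDivisors.1 hdim Q }
  exact ((IsDiscreteValuationRing.TFAE _ hfield).out 0 2).2 this

theorem exists_height_eq_one_not_dvd {T : Type u} [CommRing T] [IsRegularLocalRing T] {x y : T}
    (hx : x ≠ 0) (hxy : ¬ x ∣ y) : ∃ (P : Ideal T) (_ : P.IsPrime), P.height = 1 ∧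
      ¬ algebraMap T (Localization.AtPrime P) x ∣ algebraMap T (Localization.AtPrime P) y := by
  have := isDomain_of_isRegularLocalRing T
  have hmk (z : T) : Submodule.Quotient.mk (p := x • (⊤ : Submodule T T)) z = 0 ↔ x ∣ z := by
    rw [Submodule.Quotient.mk_eq_zero, ← Submodule.ideal_span_singleton_smul, smul_eq_mul,
      Ideal.mul_top, Ideal.mem_span_singleton]
  obtain ⟨P, hP, hann⟩ := exists_le_isAssociatedPrime_of_isNoetherianRing T
    (Submodule.Quotient.mk y : QuotSMulTop x T) ((hmk y).not.2 hxy)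
  have := hP.1
  have hdvd {r : T} (hr : x ∣ r * y) : r ∈ P := hann <| by
    rw [Submodule.mem_colon_singleton, ← Submodule.Quotient.mk_smul, smul_eq_mul]
    exact (Submodule.mem_bot T).2 ((hmk _).2 hr)
  have hP0 : P ≠ ⊥ := fun h ↦ hx <| by
    simpa [h] using hdvd (dvd_mul_right x y)
  refine ⟨P, hP.1, (height_le_one_of_isAssociatedPrime_quotSMulTop hx hP).antisymm
    (Order.one_le_iff_ne_zero.2 (Ideal.height_eq_zero_iff_eq_bot.not.2 hP0)), fun ⟨d, hd⟩ ↦ ?_⟩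
  obtain ⟨⟨d, s⟩, hs⟩ := IsLocalization.surj P.primeCompl d
  refine s.2 (hdvd ⟨d, IsLocalization.injective (Localization.AtPrime P)
    P.primeCompl_le_nonZeroDivisors ?_⟩)
  rw [map_mul, map_mul, ← hs, hd]
  ring

theorem dvd_of_forall_ringOrd_le {T : Type u} [CommRing T] [IsRegularLocalRing T]
    [IsIntegrallyClosed T] {x y : T} (hx : x ≠ 0)
    (h : ∀ (P : Ideal T) [P.IsPrime], P.height = 1 →
      Ring.ord (Localization.AtPrime P) (algebraMap T _ x) ≤
        Ring.ord (Localization.AtPrime P) (algebraMap T _ y)) : x ∣ y := by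
  by_contra hxy
  have := isDomain_of_isRegularLocalRing T
  obtain ⟨P, _, hP, hdvd⟩ := exists_height_eq_one_not_dvd hx hxy
  have := isDiscreteValuationRing_localization_of_height_eq_one hP
  have hord := h P hP
  rw [Ring.ord_eq_addVal, Ring.ord_eq_addVal, IsDiscreteValuationRing.addVal_le_iff_dvd] at hord
  exact hdvd hord

namespace IsMacRaeInvariant

variable {T : Type u} [CommRing T] [IsRegularLocalRing T] [IsIntegrallyClosed T]

theorem exists_length_eq_ringOrd {N : Type u} [AddCommGroup N] [Module T N] {v u : T}
    (h : IsMacRaeInvariant T N v u) : ∃ w, w ≠ 0 ∧ ∀ (P : Ideal T) [P.IsPrime], P.height = 1 →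
      Module.length (Localization.AtPrime P) (Localization.AtPrime P ⊗[T] N) =
        Ring.ord (Localization.AtPrime P) (algebraMap T _ w) := by
  have := isDomain_of_isRegularLocalRing T
  have hlen (P : Ideal T) [P.IsPrime] (hP : P.height = 1) :=
    have := isDiscreteValuationRing_localization_of_height_eq_one hP
    h.length_add_ord (Localization.AtPrime P)
      (IsLocalization.injective _ P.primeCompl_le_nonZeroDivisors)
  obtain ⟨w, rfl⟩ : u ∣ v := dvd_of_forall_ringOrd_le h.denom_ne_zero fun P _ hP ↦ by
    rw [← hlen P hP]
    exact le_add_self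
  refine ⟨w, right_ne_zero_of_mul h.num_ne_zero, fun P _ hP ↦ ?_⟩
  have hu : algebraMap T (Localization.AtPrime P) u ∈ nonZeroDivisors _ :=
    mem_nonZeroDivisors_of_ne_zero ((map_ne_zero_iff _
      (IsLocalization.injective _ P.primeCompl_le_nonZeroDivisors)).2 h.denom_ne_zero)
  have := isDiscreteValuationRing_localization_of_height_eq_one hP
  have hadd := hlen P hP
  rw [map_mul, Ring.ord_mul' _ hu, add_comm] at hadd
  exact ENat.add_right_injective_of_ne_top (Ring.ord_ne_top hu) hadd

end IsMacRaeInvariant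

/-- **Auslander–Buchsbaum**. A height one prime `P` is generated by the MacRae invariant of
`T ⧸ P`. -/
theorem uniqueFactorizationMonoid_of_isRegularLocalRing (T : Type u) [CommRing T]
    [IsRegularLocalRing T] [IsIntegrallyClosed T] [IsDomain T] : UniqueFactorizationMonoid T := by
  refine UniqueFactorizationMonoid.of_forall_isPrincipal_of_height_eq_one fun P _ hP ↦ ?_
  obtain ⟨a, haP, ha⟩ := P.ne_bot_iff.1 (P.ne_bot_of_height_eq_one hP)
  have haN (y : T ⧸ P) : a • y = 0 := by
    rw [Algebra.smul_def, Ideal.Quotient.algebraMap_eq, Ideal.Quotient.eq_zero_iff_mem.2 haP,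
      zero_mul]
  have hpd : CategoryTheory.HasProjectiveDimensionLE (ModuleCat.of T (T ⧸ P))
      ((maximalIdeal T).spanFinrank + 1) :=
    hasProjectiveDimensionLE_of_ringKrullDim_le T (by
      rw [← IsRegularLocalRing.spanFinrank_maximalIdeal]
      exact_mod_cast Nat.le_succ _) _
  obtain ⟨v, u, hvu⟩ := exists_isMacRaeInvariant (T ⧸ P) hpd ha haN
  obtain ⟨w, hw, hlen⟩ := hvu.exists_length_eq_ringOrd
  have hlen' (Q : Ideal T) [Q.IsPrime] (hQ : Q.height = 1) :=
    (Algebra.TensorProduct.quotIdealMapEquivTensorQuot (Localization.AtPrime Q)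
      P).toLinearEquiv.length_eq.trans (hlen Q hQ)
  refine ⟨w, le_antisymm (fun x hx ↦ ?_) ?_⟩
  · refine Ideal.mem_span_singleton.2 (dvd_of_forall_ringOrd_le hw fun Q _ hQ ↦ ?_)
    rw [← hlen' Q hQ]
    exact Module.length_le_of_surjective _ (Submodule.factor_surjective <|
      (Ideal.span_singleton_le_iff_mem _).2 (Ideal.mem_map_of_mem _ hx))
  · refine (Ideal.span_singleton_le_iff_mem _).2 (not_not.1 fun hwP ↦ ?_)
    have hzero := hlen' P hP
    rw [Ring.ord_of_isUnit ((IsLocalization.AtPrime.isUnit_to_map_iff _ P w).2 hwP),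
      Module.length_eq_zero_iff, Submodule.Quotient.subsingleton_iff,
      Localization.AtPrime.map_eq_maximalIdeal] at hzero
    exact (maximalIdeal.isMaximal _).ne_top hzero

end Factoriality

/-! ### Cohen-Macaulay finite extensions -/

section CohenMacaulay

theorem height_le_height_comap {S R : Type*} [CommRing S] [CommRing R] [Algebra S R]
    [Algebra.IsIntegral S R] (Q : Ideal R) [hQ : Q.IsPrime] :
    Q.height ≤ (Q.comap (algebraMap S R)).height := by
  have h := Order.height_le_height_apply_of_strictMono (PrimeSpectrum.comap (algebraMap S R))
    (fun I J (hIJ : I.asIdeal < J.asIdeal) ↦ Ideal.IsIntegral.comap_lt_comap hIJ) ⟨Q, hQ⟩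
  rwa [← PrimeSpectrum.height_eq_orderHeight, ← PrimeSpectrum.height_eq_orderHeight] at h

theorem exists_isWeaklyRegular_length_eq_height {S : Type u} [CommRing S] [IsRegularLocalRing S]
    (q : Ideal S) [hq : q.IsPrime] :
    ∃ rs : List S, (rs.length : ℕ∞) = q.height ∧ (∀ r ∈ rs, r ∈ q) ∧ IsWeaklyRegular S rs := by
  have hdim := height_add_ringKrullDim_quotient_le q
  have hdepth := ringKrullDim_le_modDepth_self S
  rw [← IsRegularLocalRing.spanFinrank_maximalIdeal (R := S)] at hdim hdepth
  have : Nontrivial (S ⧸ q) := Ideal.Quotient.nontrivial_iff.2 hq.ne_top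
  have : IsLocalRing (S ⧸ q) := .of_surjective' (Ideal.Quotient.mk q) Ideal.Quotient.mk_surjective
  rw [← maximalIdeal_height_eq_ringKrullDim (R := S ⧸ q)] at hdim
  have he := ENat.natCast_toNat (Ideal.height_ne_top (maximalIdeal.isMaximal (S ⧸ q)).ne_top)
  have ht := ENat.natCast_toNat (Ideal.height_ne_top hq.ne_top)
  rw [← he, ← ht] at hdim
  obtain ⟨rs, hlen, hmem, hreg⟩ := exists_isWeaklyRegular_mem_of_add_le_modDepth (M := S)
    (le_maximalIdeal hq.ne_top) (e := (maximalIdeal (S ⧸ q)).height.toNat)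
    (by rw [← maximalIdeal_height_eq_ringKrullDim, ← he]; rfl) q.height.toNat
    (by exact_mod_cast hdim.trans hdepth)
  exact ⟨rs, by rw [hlen, ht], hmem, hreg⟩

theorem isCMRing_of_flat {S : Type u} {R : Type*} [CommRing S] [IsRegularLocalRing S] [CommRing R]
    [Algebra S R] [Module.Finite S R] [Module.Flat S R] : IsCMRing R := by
  intro Q hQ
  have : IsNoetherianRing R := IsNoetherianRing.of_finite S R
  refine le_antisymm (modDepth_self_le_ringKrullDim _) ?_
  obtain ⟨rs, hlen, hmem, hreg⟩ :=
    exists_isWeaklyRegular_length_eq_height (Q.comap (algebraMap S R))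
  have : Module.Flat S (Localization.AtPrime Q) := Module.Flat.trans S R _
  have hmem' : ∀ r ∈ rs.map (algebraMap S (Localization.AtPrime Q)), r ∈ maximalIdeal _ := by
    simp only [List.mem_map, forall_exists_index, and_imp, forall_apply_eq_imp_iff₂]
    intro r hr
    rw [IsScalarTower.algebraMap_apply S R, ← Localization.AtPrime.map_eq_maximalIdeal]
    exact Ideal.mem_map_of_mem _ (hmem r hr)
  rw [IsLocalization.AtPrime.ringKrullDim_eq_height Q, WithBot.coe_le_coe]
  refine (height_le_height_comap (S := S) Q).trans (hlen ▸ le_sSup ⟨_, by simp, hmem', ?_⟩)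
  exact (isRegular_iff_isWeaklyRegular_of_subset_maximalIdeal hmem').2
    (hreg.of_flat (S := Localization.AtPrime Q))

theorem ringKrullDim_le_length {T : Type*} [CommRing T] [IsLocalRing T] [IsNoetherianRing T]
    {rs : List T} (hmem : ∀ r ∈ rs, r ∈ maximalIdeal T)
    (h : maximalIdeal T ≤ (Ideal.ofList rs).radical) : ringKrullDim T ≤ rs.length := by
  classical
  have hmin : maximalIdeal T ∈ (Ideal.span (rs.toFinset : Set T)).minimalPrimes := by
    rw [List.coe_toFinset]
    refine ⟨⟨inferInstance, Ideal.span_le.2 hmem⟩, fun P ⟨hP, hle⟩ _ ↦ ?_⟩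
    exact h.trans (hP.radical_le_iff.2 hle)
  rw [← maximalIdeal_height_eq_ringKrullDim]
  exact_mod_cast (Ideal.height_le_card_of_mem_minimalPrimes_span_finset hmin).trans
    (by exact_mod_cast rs.toFinset_card_le)

theorem ringKrullDim_quotient_le_length {T : Type*} [CommRing T] [IsLocalRing T]
    [IsNoetherianRing T] {I : Ideal T} (hI : I ≠ ⊤) {rs : List T}
    (hmem : ∀ r ∈ rs, r ∈ maximalIdeal T)
    (h : maximalIdeal T ≤ (I ⊔ Ideal.ofList rs).radical) : ringKrullDim (T ⧸ I) ≤ rs.length := by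
  have : Nontrivial (T ⧸ I) := Ideal.Quotient.nontrivial_iff.2 hI
  have : IsLocalRing (T ⧸ I) := .of_surjective' (Ideal.Quotient.mk I) Ideal.Quotient.mk_surjective
  have hmap := map_maximalIdeal_of_surjective (Ideal.Quotient.mk I) Ideal.Quotient.mk_surjective
  have hmem' : ∀ r ∈ rs.map (Ideal.Quotient.mk I), r ∈ maximalIdeal (T ⧸ I) := by
    simp only [List.mem_map, forall_exists_index, and_imp, forall_apply_eq_imp_iff₂, ← hmap]
    exact fun r hr ↦ Ideal.mem_map_of_mem _ (hmem r hr)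
  have hrad : maximalIdeal (T ⧸ I) ≤ (Ideal.ofList (rs.map (Ideal.Quotient.mk I))).radical := by
    rw [← hmap, ← Ideal.map_ofList, Ideal.map_le_iff_le_comap, Ideal.comap_radical,
      Ideal.comap_map_of_surjective' _ Ideal.Quotient.mk_surjective, Ideal.mk_ker, sup_comm]
    exact h
  simpa only [List.length_map] using ringKrullDim_le_length hmem' hrad

theorem isWeaklyRegular_of_maximalIdeal_le_radical {T : Type u} [CommRing T] [IsLocalRing T]
    [IsNoetherianRing T] (rs : List T) (hmem : ∀ r ∈ rs, r ∈ maximalIdeal T) :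
    ∀ {M : Type u} [AddCommGroup M] [Module T M] [Module.Finite T M] [Nontrivial M],
      (rs.length : ℕ∞) ≤ modDepth T M →
      maximalIdeal T ≤ (Module.annihilator T M ⊔ Ideal.ofList rs).radical →
      IsWeaklyRegular M rs := by
  induction rs with
  | nil => simp
  | cons r rs ih =>
    intro M _ _ _ _ hdepth hrad
    have hr : r ∈ maximalIdeal T := hmem r (by simp)
    have hmem' : ∀ x ∈ rs, x ∈ maximalIdeal T := fun x hx ↦ hmem x (by simp [hx])
    have hreg : IsSMulRegular M r := by
      by_contra hr'
      have hbad : r ∈ ⋃ P ∈ associatedPrimes T M, (P : Set T) := by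
        rwa [biUnion_associatedPrimes_eq_compl_regular]
      obtain ⟨P, hP, hrP⟩ := Set.mem_iUnion₂.1 hbad
      have hle : Module.annihilator T M ⊔ Ideal.ofList (r :: rs) ≤ P ⊔ Ideal.ofList rs := by
        rw [Ideal.ofList_cons, ← sup_assoc]
        exact sup_le_sup_right (sup_le (Submodule.annihilator_top.ge.trans hP.annihilator_le)
          ((Ideal.span_singleton_le_iff_mem _).2 hrP)) _
      have := ringKrullDim_quotient_le_length hP.1.ne_top hmem'
        (hrad.trans (Ideal.radical_mono hle))
      have hlen : ((rs.length + 1 : ℕ) : WithBot ℕ∞) ≤ rs.length :=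
        le_trans (by exact_mod_cast hdepth) ((modDepth_le_ringKrullDim_quotient hP).trans this)
      exact absurd (Nat.cast_le.1 hlen) (by simp)
    have : Nontrivial (QuotSMulTop r M) := nontrivial_quotSMulTop_of_mem_maximalIdeal M hr
    refine (isWeaklyRegular_cons_iff M r rs).2 ⟨hreg, ih hmem'
      (natCast_le_modDepth_quotSMulTop (by exact_mod_cast hdepth) hr hreg) (hrad.trans ?_)⟩
    refine Ideal.radical_mono ?_
    rw [Ideal.ofList_cons, ← sup_assoc]
    refine sup_le_sup_right (sup_le ?_ ((Ideal.span_singleton_le_iff_mem _).2 ?_)) _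
    · exact LinearMap.annihilator_le_of_surjective _ (Submodule.mkQ_surjective _)
    · exact QuotSMulTop.mem_annihilator M r

section Finite

variable {S R : Type*} [CommRing S] [CommRing R] [Algebra S R] [Module.Finite S R]

theorem maximalIdeal_localization_le_radical {I q : Ideal S} (hq : q ∈ I.minimalPrimes)
    (Q : Ideal R) [hQ : Q.IsPrime] [hQq : Q.LiesOver q] :
    maximalIdeal (Localization.AtPrime Q) ≤
      (I.map (algebraMap S (Localization.AtPrime Q))).radical := by
  rw [Ideal.radical_eq_sInf, le_sInf_iff]
  rintro P ⟨hIP, hP⟩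
  have hle : P.comap (algebraMap R (Localization.AtPrime Q)) ≤ Q :=
    (Ideal.comap_mono (le_maximalIdeal hP.ne_top)).trans
      (IsLocalization.AtPrime.under_maximalIdeal _ Q).le
  suffices h : Q ≤ P.comap (algebraMap R (Localization.AtPrime Q)) by
    rwa [← Localization.AtPrime.map_eq_maximalIdeal, Ideal.map_le_iff_le_comap]
  by_contra hlt
  have hcomap := Ideal.IsIntegral.comap_lt_comap (R := S) (lt_of_le_not_ge hle hlt)
  rw [← Ideal.under_def S Q, ← hQq.over, Ideal.comap_comap,
    ← IsScalarTower.algebraMap_eq] at hcomap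
  exact hcomap.not_ge (hq.2 ⟨inferInstance, Ideal.map_le_iff_le_comap.1 hIP⟩ hcomap.le)

variable [IsIntegrallyClosed S] [IsNoetherianRing S] [IsDomain R] [FaithfulSMul S R]

theorem IsCMRing.isWeaklyRegular_localization (hR : IsCMRing R) {rs : List S} {q : Ideal S}
    (hq : q ∈ (Ideal.ofList rs).minimalPrimes) (hlen : rs.length ≤ q.height) (Q : Ideal R)
    [hQ : Q.IsPrime] [hQq : Q.LiesOver q] :
    IsWeaklyRegular (Localization.AtPrime Q)
      (rs.map (algebraMap S (Localization.AtPrime Q))) := by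
  have : IsNoetherianRing R := IsNoetherianRing.of_finite S R
  have : q.IsPrime := hq.1.1
  refine isWeaklyRegular_of_maximalIdeal_le_radical _ ?_ ?_ ?_
  · simp only [List.mem_map, forall_exists_index, and_imp, forall_apply_eq_imp_iff₂]
    intro r hr
    rw [IsScalarTower.algebraMap_apply S R, IsLocalization.AtPrime.to_map_mem_maximal_iff _ Q,
      ← Ideal.mem_comap, ← Ideal.under_def, ← hQq.over]
    exact hq.1.2 (Ideal.subset_span hr)
  · have hdepth := hR Q hQ
    rw [IsLocalization.AtPrime.ringKrullDim_eq_height Q, WithBot.coe_inj] at hdepth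
    rw [hdepth, List.length_map, Ideal.height_eq_height_add_of_liesOver_of_hasGoingDown q Q]
    exact hlen.trans le_self_add
  · rw [← Ideal.map_ofList]
    exact (maximalIdeal_localization_le_radical hq Q).trans (Ideal.radical_mono le_sup_right)

theorem IsCMRing.exists_notMem_mul_mem (hR : IsCMRing R) {rs : List S} {x : S} {q : Ideal S}
    (hq : q ∈ (Ideal.ofList (rs ++ [x])).minimalPrimes) (hlen : rs.length + 1 ≤ q.height) {w : R}
    (hw : algebraMap S R x * w ∈ (Ideal.ofList rs).map (algebraMap S R)) :
    ∃ s ∉ q, algebraMap S R s * w ∈ (Ideal.ofList rs).map (algebraMap S R) := by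
  have : q.IsPrime := hq.1.1
  set I := (Ideal.ofList rs).map (algebraMap S R)
  by_contra! hcon
  obtain ⟨Q, hle, hQ, hQq⟩ := Ideal.exists_ideal_over_prime_of_isIntegral q (I.colon {w})
    fun s hs ↦ by_contra fun h ↦ hcon s h (Submodule.mem_colon_singleton.1 hs)
  have : Q.LiesOver q := ⟨hQq.symm⟩
  let A := Localization.AtPrime Q
  have hregQ := hR.isWeaklyRegular_localization hq (by simpa using hlen) Q
  rw [List.map_append, isWeaklyRegular_append_iff, List.map_singleton,
    isWeaklyRegular_singleton_iff, ← Ideal.map_ofList, smul_eq_mul, Ideal.mul_top,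
    IsScalarTower.algebraMap_eq S R A, ← Ideal.map_map] at hregQ
  have hwA : algebraMap R A w ∈ I.map (algebraMap R A) := by
    refine (isSMulRegular_quotient_iff_mem_of_smul_mem _ _).1 hregQ.2 _ ?_
    rw [smul_eq_mul, RingHom.comp_apply, ← map_mul]
    exact Ideal.mem_map_of_mem _ hw
  obtain ⟨t, htQ, htw⟩ :=
    (IsLocalization.algebraMap_mem_map_algebraMap_iff Q.primeCompl A I w).1 hwA
  exact htQ (hle (Submodule.mem_colon_singleton.2 htw))

theorem not_isCMRing_of_ker_eq_span_singleton {ι : Type*} [Finite ι] {ψ : (ι → S) →ₗ[S] R}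
    (hψ : Function.Surjective ψ) {rel : ι → S} (hker : LinearMap.ker ψ = Submodule.span S {rel})
    {rs : List S} {i₀ : ι} (hrel : ∀ i ≠ i₀, rel i ∈ Ideal.ofList rs)
    (hne : Ideal.ofList (rs ++ [rel i₀]) ≠ ⊤)
    (hht : rs.length + 1 ≤ (Ideal.ofList (rs ++ [rel i₀])).height) : ¬ IsCMRing R := by
  classical
  have := Fintype.ofFinite ι
  intro hR
  obtain ⟨q, hq⟩ := Ideal.nonempty_minimalPrimes hne
  have hq' : Ideal.ofList rs ≤ q ∧ rel i₀ ∈ q := by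
    simpa [Ideal.ofList_append, Ideal.span_le] using hq.1.2
  have hsum : ∑ i, algebraMap S R (rel i) * ψ (Pi.single i 1) = 0 := by
    have hrel0 : ψ rel = 0 := LinearMap.mem_ker.1 (hker ▸ Submodule.mem_span_singleton_self rel)
    rw [pi_eq_sum_univ' rel] at hrel0
    simpa only [map_sum, map_smul, Algebra.smul_def (A := R)] using hrel0
  rw [← Finset.add_sum_erase _ _ (Finset.mem_univ i₀), add_eq_zero_iff_eq_neg] at hsum
  obtain ⟨s, hsq, hs⟩ := hR.exists_notMem_mul_mem hq (hht.trans (Ideal.height_mono hq.1.2)) <|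
    hsum ▸ neg_mem (Ideal.sum_mem _ fun i hi ↦ Ideal.mul_mem_right _ _
      (Ideal.mem_map_of_mem _ (hrel i (Finset.ne_of_mem_erase hi))))
  have hlift : s • ψ (Pi.single i₀ 1) ∈ (Ideal.ofList rs • ⊤ : Submodule S (ι → S)).map ψ := by
    rwa [Submodule.map_smul'', Submodule.map_top, LinearMap.range_eq_top.2 hψ,
      Ideal.smul_top_eq_map, Submodule.restrictScalars_mem, Algebra.smul_def]
  obtain ⟨x, hx, hψx⟩ := hlift
  have hx₀ : x i₀ ∈ Ideal.ofList rs := by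
    simpa using Submodule.smul_top_le_comap_smul_top _ (LinearMap.proj i₀ : (ι → S) →ₗ[S] S) hx
  obtain ⟨u, hu⟩ := Submodule.mem_span_singleton.1 (hker.le
    (show s • Pi.single i₀ 1 - x ∈ LinearMap.ker ψ by simp [hψx]))
  have hs₀ : u * rel i₀ = s - x i₀ := by simpa using congrFun hu i₀
  refine hsq ?_
  rw [← sub_add_cancel s (x i₀), ← hs₀]
  exact q.add_mem (q.mul_mem_left _ hq'.2) (hq'.1 hx₀)

end Finite

section UniqueFactorization

variable {S : Type*} [CommRing S]

theorem exists_isPrime_ne_bot_lt_of_isRelPrime [UniqueFactorizationMonoid S] {x y : S}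
    (hx : x ≠ 0) (hxy : IsRelPrime x y) {q : Ideal S} [q.IsPrime] (hxq : x ∈ q) (hyq : y ∈ q) :
    ∃ P : Ideal S, P.IsPrime ∧ P ≠ ⊥ ∧ P < q := by
  obtain ⟨z, hzq, hz⟩ := Ideal.IsPrime.exists_mem_prime_of_ne_bot ‹_›
    ((Submodule.ne_bot_iff q).2 ⟨x, hxq, hx⟩)
  refine ⟨Ideal.span {z}, (Ideal.span_singleton_prime hz.ne_zero).2 hz, by simpa using hz.ne_zero,
    lt_of_le_of_ne ((Ideal.span_singleton_le_iff_mem _).2 hzq) ?_⟩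
  rintro rfl
  exact hz.not_isUnit (hxy (Ideal.mem_span_singleton.1 hxq) (Ideal.mem_span_singleton.1 hyq))

theorem three_le_height_of_isRelPrime_mod [IsDomain S] {r x y : S} (hr : Prime r)
    [UniqueFactorizationMonoid (S ⧸ Ideal.span {r})]
    (hx : Ideal.Quotient.mk (Ideal.span {r}) x ≠ 0)
    (hxy : IsRelPrime (Ideal.Quotient.mk (Ideal.span {r}) x) (Ideal.Quotient.mk (Ideal.span {r}) y))
    {q : Ideal S} [hq : q.IsPrime] (hrq : r ∈ q) (hxq : x ∈ q) (hyq : y ∈ q) : 3 ≤ q.height := by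
  set m := Ideal.Quotient.mk (Ideal.span {r})
  have hm : Function.Surjective m := Ideal.Quotient.mk_surjective
  have hker : RingHom.ker m ≤ q := by
    rwa [Ideal.mk_ker, Ideal.span_singleton_le_iff_mem]
  have : (q.map m).IsPrime := Ideal.map_isPrime_of_surjective hm hker
  have hcomap : (q.map m).comap m = q := by
    rw [Ideal.comap_map_of_surjective' m hm, sup_eq_left.2 hker]
  obtain ⟨P, hP, hP0, hPq⟩ := exists_isPrime_ne_bot_lt_of_isRelPrime hx hxy
    (Ideal.mem_map_of_mem m hxq) (Ideal.mem_map_of_mem m hyq)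
  have hmono := (Ideal.orderEmbeddingOfSurjective m hm).strictMono
  have : (P.comap m).IsPrime := inferInstance
  have : (Ideal.span {r}).IsPrime := (Ideal.span_singleton_prime hr.ne_zero).2 hr
  have h₁ : (⊥ : Ideal S) < Ideal.span {r} := bot_lt_iff_ne_bot.2 (by simpa using hr.ne_zero)
  have h₂ : Ideal.span {r} < P.comap m := by
    have h : (⊥ : Ideal (S ⧸ Ideal.span {r})).comap m < P.comap m :=
      hmono (bot_lt_iff_ne_bot.2 hP0)
    rwa [← RingHom.ker_eq_comap_bot, Ideal.mk_ker] at h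
  have h₃ : P.comap m < q := hcomap ▸ hmono hPq
  calc (3 : ℕ∞) = 0 + 1 + 1 + 1 := by norm_num
    _ ≤ (⊥ : Ideal S).height + 1 + 1 + 1 := by gcongr; exact bot_le
    _ ≤ (Ideal.span {r}).height + 1 + 1 := by
      gcongr; exact Ideal.height_add_one_le_of_lt_of_isPrime h₁
    _ ≤ (P.comap m).height + 1 := by
      gcongr; exact Ideal.height_add_one_le_of_lt_of_isPrime h₂
    _ ≤ q.height := Ideal.height_add_one_le_of_lt_of_isPrime h₃

end UniqueFactorization

section Presentation

variable {S M ι : Type*} [CommRing S] [AddCommGroup M] [Module S M]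

theorem hasFreeResLengthLE1_of_exact [Nontrivial S] {N P : Type*} [AddCommGroup N] [AddCommGroup P]
    [Module S N] [Module S P] [Module.Free S N] [Module.Finite S N] [Module.Free S P]
    [Module.Finite S P] {f : N →ₗ[S] P} {g : P →ₗ[S] M} (hf : Function.Injective f)
    (hfg : Function.Exact f g) (hg : Function.Surjective g) : HasFreeResLengthLE1 S M := by
  let eN := (Module.finBasis S N).equivFun
  let eP := (Module.finBasis S P).equivFun
  have hexact : Function.Exact (eP.toLinearMap ∘ₗ f ∘ₗ eN.symm.toLinearMap)
      (g ∘ₗ eP.symm.toLinearMap) := by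
    rw [LinearEquiv.conj_exact_iff_exact (f ∘ₗ eN.symm.toLinearMap),
      LinearEquiv.precomp_exact_iff_exact]
    exact hfg
  exact ⟨_, _, eP.toLinearMap ∘ₗ f ∘ₗ eN.symm.toLinearMap, g ∘ₗ eP.symm.toLinearMap,
    eP.injective.comp (hf.comp eN.symm.injective), hg.comp eP.symm.surjective,
    (LinearMap.exact_iff.1 hexact).symm⟩

variable {ψ : (ι → S) →ₗ[S] M} {rel : ι → S}

theorem exact_toSpanSingleton_of_ker_eq (hker : LinearMap.ker ψ = Submodule.span S {rel}) :
    Function.Exact (LinearMap.toSpanSingleton S (ι → S) rel) ψ := by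
  rw [LinearMap.exact_iff, LinearMap.range_toSpanSingleton, hker]

variable [Finite ι]

theorem projective_of_ker_eq_span_singleton (hψ : Function.Surjective ψ)
    (hker : LinearMap.ker ψ = Submodule.span S {rel}) {i : ι} (hi : IsUnit (rel i)) :
    Module.Projective S M := by
  obtain ⟨v, hv⟩ := hi.exists_left_inv
  have hretract : (v • LinearMap.proj i) ∘ₗ LinearMap.toSpanSingleton S (ι → S) rel = .id := by
    ext
    simp [hv]
  have hinj : Function.Injective (LinearMap.toSpanSingleton S (ι → S) rel) :=
    LinearMap.injective_of_comp_eq_id _ _ hretract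
  have hsplit := (exact_toSpanSingleton_of_ker_eq hker).split_tfae hinj hψ
  have hiff := hsplit.out 0 1
  obtain ⟨σ, hσ⟩ := hiff.2 ⟨_, hretract⟩
  exact .of_split σ ψ hσ

theorem hasFreeResLengthLE1_of_ker_eq_span_singleton [IsDomain S] (hψ : Function.Surjective ψ)
    (hker : LinearMap.ker ψ = Submodule.span S {rel}) (hrel : rel ≠ 0) :
    HasFreeResLengthLE1 S M :=
  hasFreeResLengthLE1_of_exact (smul_left_injective S hrel)
    (exact_toSpanSingleton_of_ker_eq hker) hψ

end Presentation

section TwoGenerators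

variable {S : Type*} [CommRing S]

theorem span_pair_eq_of_isUnit {x y z a b : S} (ha : IsUnit a) (hz : a * x + b * y = z) :
    Ideal.span {x, y} = Ideal.span {z, y} := by
  obtain ⟨c, hc⟩ := ha.exists_left_inv
  refine le_antisymm (Ideal.span_le.2 (Set.pair_subset ?_ (Ideal.subset_span (by simp))))
    (Ideal.span_le.2 (Set.pair_subset ?_ (Ideal.subset_span (by simp))))
  · exact Ideal.mem_span_pair.2 ⟨c, -(c * b), by linear_combination (-c) * hz + x * hc⟩
  · exact Ideal.mem_span_pair.2 ⟨a, b, hz⟩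

theorem exists_span_pair_eq_span_pair_of_notMem_sq [IsLocalRing S] {p x y : S}
    (hp : p ∉ maximalIdeal S ^ 2) (hpxy : p ∈ Ideal.span {x, y}) :
    ∃ z, Ideal.span {x, y} = Ideal.span {p, z} := by
  obtain ⟨a, b, hab⟩ := Ideal.mem_span_pair.1 hpxy
  by_cases htop : Ideal.span {x, y} = ⊤
  · exact ⟨1, htop.trans ((Ideal.eq_top_iff_one _).2 (Ideal.subset_span (by simp))).symm⟩
  by_cases ha : IsUnit a
  · exact ⟨y, span_pair_eq_of_isUnit ha hab⟩
  by_cases hb : IsUnit b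
  · exact ⟨x, Ideal.span_pair_comm.trans
      (span_pair_eq_of_isUnit hb ((add_comm (b * y) (a * x)).trans hab))⟩
  have hle : Ideal.span {x, y} ≤ maximalIdeal S := le_maximalIdeal htop
  refine absurd ?_ hp
  rw [← hab, pow_two]
  exact add_mem (Ideal.mul_mem_mul ha (hle (Ideal.subset_span (by simp))))
    (Ideal.mul_mem_mul hb (hle (Ideal.subset_span (by simp))))

theorem isUnit_or_isUnit_of_span_pair_eq_span_singleton [IsDomain S] [IsLocalRing S]
    {d k₁ k₂ y : S} (hd : d ≠ 0) (hk : IsRelPrime k₁ k₂)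
    (hy : Ideal.span {d * k₁, d * k₂} = Ideal.span {y}) : IsUnit k₁ ∨ IsUnit k₂ := by
  have hy₁ : y ∣ d * k₁ := Ideal.mem_span_singleton.1 (hy ▸ Ideal.subset_span (by simp))
  have hy₂ : y ∣ d * k₂ := Ideal.mem_span_singleton.1 (hy ▸ Ideal.subset_span (by simp))
  obtain ⟨u, v, rfl⟩ := Ideal.mem_span_pair.1 (hy ▸ Ideal.mem_span_singleton_self y)
  have heq : u * (d * k₁) + v * (d * k₂) = d * (u * k₁ + v * k₂) := by ring
  rw [heq, mul_dvd_mul_iff_left hd] at hy₁ hy₂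
  exact (isUnit_or_isUnit_of_isUnit_add (hk hy₁ hy₂)).imp isUnit_of_mul_isUnit_right
    isUnit_of_mul_isUnit_right

theorem span_triple_eq_span_pair_of_isUnit {p d k₁ k₂ h₁ h₂ : S} (hd₁ : p ∣ d * k₁ - h₁)
    (hd₂ : p ∣ d * k₂ - h₂) (hk : IsUnit k₁ ∨ IsUnit k₂) :
    Ideal.span {p, h₁, h₂} = Ideal.span {p, d} := by
  obtain ⟨a₁, ha₁⟩ := hd₁
  obtain ⟨a₂, ha₂⟩ := hd₂
  refine le_antisymm (Ideal.span_le.2 ?_) (Ideal.span_le.2 ?_)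
  · refine Set.insert_subset (Ideal.subset_span (by simp)) (Set.pair_subset ?_ ?_)
    · exact Ideal.mem_span_pair.2 ⟨-a₁, k₁, by linear_combination ha₁⟩
    · exact Ideal.mem_span_pair.2 ⟨-a₂, k₂, by linear_combination ha₂⟩
  · refine Set.pair_subset (Ideal.subset_span (by simp)) (Submodule.mem_span_triple.2 ?_)
    rcases hk with hk | hk <;> obtain ⟨c, hc⟩ := hk.exists_left_inv
    · exact ⟨c * a₁, c, 0, by
        simp only [smul_eq_mul]; linear_combination d * hc - c * ha₁⟩
    · exact ⟨c * a₂, 0, c, by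
        simp only [smul_eq_mul]; linear_combination d * hc - c * ha₂⟩

theorem span_triple_two_generated_iff [IsLocalRing S] {p d k₁ k₂ h₁ h₂ : S}
    (hp : p ∈ maximalIdeal S) (hp2 : p ∉ maximalIdeal S ^ 2) [IsDomain (S ⧸ Ideal.span {p})]
    (hd : Ideal.Quotient.mk (Ideal.span {p}) d ≠ 0)
    (hk : IsRelPrime (Ideal.Quotient.mk (Ideal.span {p}) k₁)
      (Ideal.Quotient.mk (Ideal.span {p}) k₂))
    (hd₁ : p ∣ d * k₁ - h₁) (hd₂ : p ∣ d * k₂ - h₂) :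
    ((∃ x y, Ideal.span {p, h₁, h₂} = Ideal.span {x, y}) ∨ Ideal.span {p, h₁, h₂} = ⊤) ↔
      IsUnit k₁ ∨ IsUnit k₂ := by
  have := isLocalRing_quotient_span_singleton hp
  have hlocal : IsLocalHom (Ideal.Quotient.mk (Ideal.span {p})) :=
    IsLocalHom.of_surjective _ Ideal.Quotient.mk_surjective
  refine ⟨fun h ↦ ?_, fun h ↦ .inl ⟨p, d, span_triple_eq_span_pair_of_isUnit hd₁ hd₂ h⟩⟩
  obtain ⟨y, hy⟩ : ∃ y, Ideal.span {p, h₁, h₂} = Ideal.span {p, y} := by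
    rcases h with ⟨x, y, hxy⟩ | htop
    · obtain ⟨z, hz⟩ := exists_span_pair_eq_span_pair_of_notMem_sq hp2
        (hxy ▸ Ideal.subset_span (by simp) : p ∈ Ideal.span {x, y})
      exact ⟨z, hxy.trans hz⟩
    · exact ⟨1, htop.trans ((Ideal.eq_top_iff_one _).2 (Ideal.subset_span (by simp))).symm⟩
  have mk_eq {x y : S} (h : p ∣ x - y) :
      Ideal.Quotient.mk (Ideal.span {p}) x = Ideal.Quotient.mk (Ideal.span {p}) y :=
    Ideal.Quotient.eq.2 (Ideal.mem_span_singleton.2 h)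
  have hmap := congrArg (Ideal.map (Ideal.Quotient.mk (Ideal.span {p}))) hy
  simp only [Ideal.map_span, Set.image_insert_eq, Set.image_singleton, ← mk_eq hd₁, ← mk_eq hd₂,
    Ideal.Quotient.mk_singleton_self, Ideal.span_insert_zero, map_mul] at hmap
  exact (isUnit_or_isUnit_of_span_pair_eq_span_singleton hd hk hmap).imp
    (isUnit_of_map_unit _ _) (isUnit_of_map_unit _ _)

end TwoGenerators

end CohenMacaulay

/-! ### Divisibility in integrally closed domains -/

section IntegrallyClosed

open Polynomial

theorem exists_monic_scaleRoots_eq {R : Type*} [CommRing R] [Nontrivial R] {q : R} {F : R[X]}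
    (hF : F.Monic) (hdvd : ∀ i, q ^ (F.natDegree - i) ∣ F.coeff i) :
    ∃ G : R[X], G.Monic ∧ G.scaleRoots q = F := by
  choose g hg using hdvd
  let G : R[X] := ∑ i ∈ Finset.range (F.natDegree + 1), monomial i (g i)
  have hcoeff (i : ℕ) : G.coeff i = if i ≤ F.natDegree then g i else 0 := by
    simp only [G, finsetSum_coeff, coeff_monomial, Finset.sum_ite_eq', Finset.mem_range,
      Nat.lt_succ_iff]
  have hlead : g F.natDegree = 1 := by
    simpa only [Nat.sub_self, pow_zero, one_mul, hF.coeff_natDegree] using (hg F.natDegree).symm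
  have hdeg : G.natDegree = F.natDegree :=
    natDegree_eq_of_le_of_coeff_ne_zero
      (natDegree_le_iff_coeff_eq_zero.2 fun i hi ↦ by rw [hcoeff, if_neg (not_le.2 hi)])
      (by rw [hcoeff, if_pos le_rfl, hlead]; exact one_ne_zero)
  refine ⟨G, ?_, ?_⟩
  · rw [Monic, leadingCoeff, hdeg, hcoeff, if_pos le_rfl, hlead]
  · ext i
    rw [coeff_scaleRoots, hdeg, hcoeff]
    split_ifs with hi
    · rw [hg, mul_comm]
    · rw [zero_mul, coeff_eq_zero_of_natDegree_lt (not_le.1 hi)]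

variable {R : Type*} [CommRing R] [IsDomain R] [IsIntegrallyClosed R]

theorem dvd_of_aeval_eq_zero_of_pow_dvd_coeff {S : Type*} [CommRing S] [Nontrivial S] [Algebra S R]
    {q : S} {x : R} (hq : algebraMap S R q ≠ 0) {F : S[X]} (hF : F.Monic)
    (hdvd : ∀ i, q ^ (F.natDegree - i) ∣ F.coeff i) (hx : aeval x F = 0) :
    algebraMap S R q ∣ x := by
  let K := FractionRing R
  have hqK : algebraMap R K (algebraMap S R q) ≠ 0 :=
    (map_ne_zero_iff _ (IsFractionRing.injective R K)).2 hq
  obtain ⟨G, hG, rfl⟩ := exists_monic_scaleRoots_eq hF hdvd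
  have hroot : aeval (algebraMap R K x / algebraMap R K (algebraMap S R q)) G = 0 := by
    have hscale := scaleRoots_eval₂_mul (p := G) (algebraMap S K)
      (algebraMap R K x / algebraMap R K (algebraMap S R q)) q
    rw [IsScalarTower.algebraMap_apply S R K, mul_div_cancel₀ _ hqK, ← aeval_def,
      aeval_algebraMap_apply, hx, map_zero, ← aeval_def, eq_comm] at hscale
    exact (mul_eq_zero.1 hscale).resolve_left (pow_ne_zero _ hqK)
  obtain ⟨y, hy⟩ := IsIntegrallyClosed.algebraMap_eq_of_integral
    (IsIntegral.tower_top (A := R) ⟨G, hG, hroot⟩)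
  refine ⟨y, IsFractionRing.injective R K ?_⟩
  rw [map_mul, hy, mul_div_cancel₀ _ hqK]

theorem dvd_of_pow_eq_add {q u c e : R} (hq : q ≠ 0) {n : ℕ} (hn : 2 ≤ n)
    (h : u ^ n = q ^ (n - 1) * (c * u) + q ^ n * e) : q ∣ u := by
  have hlin : (-(C (q ^ (n - 1) * c) * X + C (q ^ n * e)) : R[X]).degree < n := by
    rw [degree_neg]
    exact degree_linear_le.trans_lt (by exact_mod_cast hn)
  have hF : (X ^ n + -(C (q ^ (n - 1) * c) * X + C (q ^ n * e)) : R[X]).Monic :=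
    monic_X_pow_add hlin
  refine dvd_of_aeval_eq_zero_of_pow_dvd_coeff (S := R) hq hF (fun i ↦ ?_) ?_
  · rw [natDegree_eq_of_degree_eq_some ((degree_add_eq_left_of_degree_lt
      (hlin.trans_eq (degree_X_pow n).symm)).trans (degree_X_pow n))]
    simp only [coeff_add, coeff_X_pow, coeff_neg, coeff_C_mul, coeff_X, coeff_C]
    obtain rfl | rfl | hi : i = 0 ∨ i = 1 ∨ 2 ≤ i := by lia
    · simp [show 0 ≠ n by lia]
    · simp [show 1 ≠ n by lia]
    · obtain rfl | hin := eq_or_ne i n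
      · simp
      · simp [hin, show 1 ≠ i by lia, show i ≠ 0 by lia]
  · simp only [map_add, map_neg, map_mul, map_pow, aeval_X, aeval_C, Algebra.algebraMap_self_apply,
      h]
    ring

theorem dvd_pow_mul_pow_of_dvd_pow {q x y : R} {n i j : ℕ} (hn : n ≠ 0) (hx : q ∣ x ^ n)
    (hy : q ∣ y ^ n) (hij : n ≤ i + j) : q ∣ x ^ i * y ^ j := by
  rw [← IsIntegrallyClosed.pow_dvd_pow_iff hn, mul_pow, pow_right_comm x, pow_right_comm y]
  calc q ^ n ∣ q ^ i * q ^ j := by rw [← pow_add]; exact pow_dvd_pow q hij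
    _ ∣ (x ^ n) ^ i * (y ^ n) ^ j := mul_dvd_mul (pow_dvd_pow_of_dvd hx i) (pow_dvd_pow_of_dvd hy j)

theorem dvd_add_pow_of_dvd_pow {q x y : R} {n : ℕ} (hn : n ≠ 0) (hx : q ∣ x ^ n)
    (hy : q ∣ y ^ n) : q ∣ (x + y) ^ n := by
  rw [add_pow]
  refine Finset.dvd_sum fun i _ ↦ (dvd_pow_mul_pow_of_dvd_pow hn hx hy ?_).mul_right _
  lia

theorem dvd_pow_pred_of_pow_eq {q y z γ : R} (hq : q ≠ 0) {n : ℕ} (hn : 2 ≤ n)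
    (h : z ^ n = q * (q * y + z * γ)) : q ∣ z ^ (n - 1) := by
  obtain ⟨e, he⟩ := sub_dvd_pow_sub_pow (q * y + z * γ) (z * γ) (n - 1)
  refine dvd_of_pow_eq_add hq hn (c := γ ^ (n - 1)) (e := y * e) ?_
  have hexp : q ^ n = q ^ (n - 1) * q := (pow_sub_one_mul (by lia) q).symm
  rw [pow_right_comm, h, mul_pow, eq_add_of_sub_eq he, mul_pow, hexp]
  ring

theorem dvd_of_dvd_algebraMap_mul {S : Type*} [CommRing S] [IsDomain S] [IsIntegrallyClosed S]
    [Algebra S R] [FaithfulSMul S R] [Algebra.IsIntegral S R] {q e : S} (hq : Prime q)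
    (he : ¬q ∣ e) {x : R} (h : algebraMap S R q ∣ algebraMap S R e * x) : algebraMap S R q ∣ x := by
  obtain ⟨y, hy⟩ := h
  have hxS := Algebra.IsIntegral.isIntegral (R := S) x
  have hyS := Algebra.IsIntegral.isIntegral (R := S) y
  have he0 : e ≠ 0 := fun h0 ↦ he (h0 ▸ dvd_zero q)
  have hscale : (minpoly S x).scaleRoots e = (minpoly S y).scaleRoots q := by
    rw [← IsIntegrallyClosed.minpoly_smul he0 hxS,
      ← IsIntegrallyClosed.minpoly_smul hq.ne_zero hyS, Algebra.smul_def, Algebra.smul_def, hy]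
  have hdeg : (minpoly S x).natDegree = (minpoly S y).natDegree := by
    simpa only [natDegree_scaleRoots] using congrArg natDegree hscale
  refine dvd_of_aeval_eq_zero_of_pow_dvd_coeff
    ((map_ne_zero_iff _ (FaithfulSMul.algebraMap_injective S R)).2 hq.ne_zero)
    (minpoly.monic hxS) (fun i ↦ ?_) (minpoly.aeval S x)
  have hcoeff := congrArg (coeff · i) hscale
  simp only [coeff_scaleRoots, ← hdeg] at hcoeff
  exact hq.pow_dvd_of_dvd_mul_right _ (fun h0 ↦ he (hq.dvd_of_dvd_pow h0))
    (Dvd.intro_left _ hcoeff.symm)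

end IntegrallyClosed

/-! ### Valuations and leading terms -/

section Valuation

variable {R Γ₀ : Type*} [CommRing R] [LinearOrderedCommGroupWithZero Γ₀]

theorem exists_valuationSubring_lt_one_iff_mem (K : Type*) [Field K] [Algebra R K]
    [FaithfulSMul R K] (q : Ideal R) [q.IsPrime] :
    ∃ V : ValuationSubring K, (∀ x, V.valuation (algebraMap R K x) ≤ 1) ∧
      ∀ x, V.valuation (algebraMap R K x) < 1 ↔ x ∈ q := by
  have hunit (y : q.primeCompl) : IsUnit (algebraMap R K y) := by
    refine IsUnit.mk0 _ ((map_ne_zero_iff _ (FaithfulSMul.algebraMap_injective R K)).2 ?_)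
    rintro h
    exact y.2 (h ▸ q.zero_mem)
  let φ : Localization.AtPrime q →+* K := IsLocalization.lift hunit
  obtain ⟨V, hV, hlocal⟩ := IsLocalRing.exists_factor_valuationRing φ
  have hφ (x : R) : φ (algebraMap R _ x) = algebraMap R K x := IsLocalization.lift_eq hunit x
  have hmem (x : R) : algebraMap R K x ∈ V := hφ x ▸ hV _
  refine ⟨V, fun x ↦ (V.valuation_le_one_iff _).2 (hmem x), fun x ↦ ?_⟩
  rw [← not_iff_not, not_lt, ← q.mem_primeCompl_iff,
    ← IsLocalization.AtPrime.isUnit_to_map_iff (Localization.AtPrime q) q x,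
    ← isUnit_map_iff (φ.codRestrict V.toSubring hV)]
  refine ((V.valuation_le_one_iff _).2 (hmem x)).ge_iff_eq.trans ?_
  rw [← hφ x]
  exact (V.valuation_eq_one_iff ⟨_, hV _⟩).symm

theorem dvd_coeff_of_valuation_aeval_le {S σ : Type*} [CommRing S] [Algebra S R]
    {v : Valuation R Γ₀} (hv : ∀ x, v x ≤ 1) {q : S}
    (hq : ∀ t, ¬q ∣ t → v (algebraMap S R t) = 1) {x : σ → R} {G : MvPolynomial σ S}
    (hinj : Set.InjOn (fun n : σ →₀ ℕ ↦ v (n.prod fun i k ↦ x i ^ k))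
      {n | n ∈ G.support ∧ v (algebraMap S R q) < v (n.prod fun i k ↦ x i ^ k)})
    (hG : v (MvPolynomial.aeval x G) ≤ v (algebraMap S R q)) {n : σ →₀ ℕ}
    (hn : v (algebraMap S R q) < v (n.prod fun i k ↦ x i ^ k)) : q ∣ G.coeff n := by
  classical
  by_contra hndvd
  obtain ⟨m, hm, hmax⟩ := (G.support.filter fun n ↦
      v (algebraMap S R q) < v (n.prod fun i k ↦ x i ^ k) ∧ ¬q ∣ G.coeff n).exists_max_image
    (fun n ↦ v (n.prod fun i k ↦ x i ^ k))
    ⟨n, Finset.mem_filter.2 ⟨MvPolynomial.mem_support_iff.2 fun h ↦ hndvd (h ▸ dvd_zero q),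
      hn, hndvd⟩⟩
  obtain ⟨hmG, hqm, hmdvd⟩ := Finset.mem_filter.1 hm
  refine hqm.not_ge ?_
  let term (k : σ →₀ ℕ) : R := algebraMap S R (G.coeff k) * k.prod fun i e ↦ x i ^ e
  have hdom (k) (hk : k ∈ G.support \ {m}) : v (term k) < v (term m) := by
    obtain ⟨hkG, hkm⟩ := Finset.mem_sdiff.1 hk
    simp only [term, map_mul, hq _ hmdvd, one_mul]
    by_cases hqk : v (algebraMap S R q) < v (k.prod fun i e ↦ x i ^ e)
    · obtain ⟨e, he⟩ | hkdvd := em (q ∣ G.coeff k)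
      · refine lt_of_le_of_lt ?_ hqm
        rw [he, map_mul, map_mul, mul_assoc]
        exact mul_le_of_le_one_right' (mul_le_one' (hv _) (hv _))
      · rw [hq _ hkdvd, one_mul]
        exact (hmax k (Finset.mem_filter.2 ⟨hkG, hqk, hkdvd⟩)).lt_of_ne fun h ↦
          hkm (Finset.mem_singleton.2 (hinj ⟨hkG, hqk⟩ ⟨hmG, hqm⟩ h))
    · exact (mul_le_of_le_one_left' (hv _)).trans_lt ((not_lt.1 hqk).trans_lt hqm)
  calc v (m.prod fun i k ↦ x i ^ k)
    _ = v (term m) := by rw [map_mul, hq _ hmdvd, one_mul]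
    _ = v (∑ k ∈ G.support, term k) := (v.map_sum_eq_of_lt hmG hdom).symm
    _ = v (MvPolynomial.aeval x G) := rfl
    _ ≤ v (algebraMap S R q) := hG

end Valuation

section LinearForms

open MvPolynomial

theorem exists_bind₁_shear_eq {S : Type*} [CommRing S] (u v : S) {N : ℕ}
    {F : MvPolynomial (Fin 2) S} (hF : F.totalDegree ≤ N) :
    ∃ G : MvPolynomial (Fin 2) S, G.totalDegree ≤ N ∧
      bind₁ ![X 0, C u * X 0 + C v * X 1] G = C (v ^ N) * F := by
  have hN {n} (hn : n ∈ F.support) : n 0 + n 1 ≤ N := by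
    have := (le_totalDegree hn).trans hF
    rwa [n.sum_fintype _ fun _ ↦ rfl, Fin.sum_univ_two] at this
  refine ⟨∑ n ∈ F.support,
    C (F.coeff n * v ^ (N - n 1)) * (X 0 ^ n 0 * (X 1 - C u * X 0) ^ n 1), ?_, ?_⟩
  · refine totalDegree_finsetSum_le fun n hn ↦ (IsHomogeneous.totalDegree_le ?_).trans (hN hn)
    simpa only [one_mul] using ((isHomogeneous_X_pow 0 (n 0)).mul
      (((isHomogeneous_X S 1).sub (isHomogeneous_C_mul_X u 0)).pow (n 1))).C_mul _
  · conv_rhs => rw [F.as_sum]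
    rw [map_sum, Finset.mul_sum]
    refine Finset.sum_congr rfl fun n hn ↦ ?_
    have hv : v ^ N = v ^ (N - n 1) * v ^ n 1 := by
      rw [← pow_add, Nat.sub_add_cancel (by have := hN hn; lia)]
    rw [monomial_eq, n.prod_fintype _ fun _ ↦ pow_zero _, Fin.prod_univ_two]
    simp [hv, mul_pow]
    ring

theorem exists_eq_C_mul_pow_of_C_mul_eq {T : Type*} [CommRing T] [IsDomain T]
    [DecompositionMonoid T] {d k₁ k₂ t : T} (hd : d ≠ 0) (hk₁ : k₁ ≠ 0) (hk : IsRelPrime k₁ k₂)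
    {N : ℕ} {F : MvPolynomial (Fin 2) T}
    (hF : C ((d * k₁) ^ N) * F = C t * (C (d * k₂) * X 0 + C (d * k₁) * X 1) ^ N) :
    ∃ s, F = C s * (C k₂ * X 0 + C k₁ * X 1) ^ N := by
  have hcancel : C (k₁ ^ N) * F = C t * (C k₂ * X 0 + C k₁ * X 1) ^ N := by
    refine mul_left_cancel₀ (pow_ne_zero N (C_ne_zero.2 hd)) ?_
    have hform : C (d * k₂) * X 0 + C (d * k₁) * X 1 =
        C d * (C k₂ * X 0 + C k₁ * X 1 : MvPolynomial (Fin 2) T) := by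
      simp only [C_mul]
      ring
    rw [hform, mul_pow, mul_pow, C_mul, C_pow] at hF
    rw [← mul_assoc, hF]
    ring
  have hdvd : k₁ ^ N ∣ t := by
    refine (hk.pow_left.pow_right (n := N)).dvd_of_dvd_mul_right ⟨aeval ![1, 0] F, ?_⟩
    simpa using (congrArg (aeval ![(1 : T), 0]) hcancel).symm
  obtain ⟨s, rfl⟩ := hdvd
  refine ⟨s, mul_left_cancel₀ (C_ne_zero.2 (pow_ne_zero N hk₁)) ?_⟩
  rw [hcancel, C_mul, mul_assoc]

theorem exists_C_dvd_sub_C_mul_pow {S : Type*} [CommRing S] {q d k₁ k₂ h₁ h₂ t : S}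
    [IsDomain (S ⧸ Ideal.span {q})] [DecompositionMonoid (S ⧸ Ideal.span {q})]
    (hk : IsRelPrime (Ideal.Quotient.mk (Ideal.span {q}) k₁) (Ideal.Quotient.mk _ k₂))
    (hd₁ : q ∣ d * k₁ - h₁) (hd₂ : q ∣ d * k₂ - h₂) (hh₁ : ¬q ∣ h₁) {N : ℕ}
    {F : MvPolynomial (Fin 2) S}
    (hF : C q ∣ C (h₁ ^ N) * F - C t * (C h₂ * X 0 + C h₁ * X 1) ^ N) :
    ∃ s, C q ∣ F - C s * (C k₂ * X 0 + C k₁ * X 1) ^ N := by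
  have hmk {u w : S} (hu : q ∣ u - w) : Ideal.Quotient.mk (Ideal.span {q}) w =
      Ideal.Quotient.mk _ u := by
    rwa [eq_comm, Ideal.Quotient.mk_eq_mk_iff_sub_mem, Ideal.mem_span_singleton]
  have hne : Ideal.Quotient.mk (Ideal.span {q}) (d * k₁) ≠ 0 := by
    rwa [← hmk hd₁, Ne, Ideal.Quotient.eq_zero_iff_dvd]
  have hdvd (P) : C q ∣ P ↔ map (σ := Fin 2) (Ideal.Quotient.mk (Ideal.span {q})) P = 0 :=
    C_dvd_iff_map_hom_eq_zero _ _ (Ideal.Quotient.eq_zero_iff_dvd q) P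
  simp only [hdvd, map_sub, sub_eq_zero, map_mul, map_C, map_pow, map_add, map_X, hmk hd₁,
    hmk hd₂] at hF ⊢
  rw [map_mul] at hne
  obtain ⟨s, hs⟩ := exists_eq_C_mul_pow_of_C_mul_eq (left_ne_zero_of_mul hne)
    (right_ne_zero_of_mul hne) hk (by simpa using hF)
  obtain ⟨s, rfl⟩ := Ideal.Quotient.mk_surjective s
  exact ⟨s, by simpa using hs⟩

end LinearForms

/-! ### Radical extensions and denominators -/

section Adjoin

open Polynomial

variable {S : Type*} [CommRing S]

theorem span_range_pow_eq_adjoin {R : Type*} [CommRing R] [Algebra S R] {F : S[X]} {n : ℕ} {x : R}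
    (hF : F.IsMonicOfDegree n) (hx : aeval x F = 0) :
    Submodule.span S (Set.range fun i : Fin n ↦ x ^ (i : ℕ)) =
      Subalgebra.toSubmodule (Algebra.adjoin S {x}) := by
  obtain ⟨rfl, hmonic⟩ := hF
  rw [← Submodule.span_range_natDegree_eq_adjoin hmonic hx]
  congr 1
  ext y
  simp [Fin.exists_iff]

theorem span_range_pow_mul_pow_eq_adjoin {R : Type*} [CommRing R] [Algebra S R] {F G : S[X]}
    {n m : ℕ} {x y : R} (hF : F.IsMonicOfDegree n) (hx : aeval x F = 0)
    (hG : G.IsMonicOfDegree m) (hy : aeval y G = 0) :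
    Submodule.span S (Set.range fun i : Fin n × Fin m ↦ x ^ (i.1 : ℕ) * y ^ (i.2 : ℕ)) =
      Subalgebra.toSubmodule (Algebra.adjoin S {x, y}) := by
  rw [Set.insert_eq, Algebra.adjoin_union_coe_submodule, ← span_range_pow_eq_adjoin hF hx,
    ← span_range_pow_eq_adjoin hG hy, Submodule.span_mul_span]
  congr 1
  ext z
  simp [Set.mem_mul]

theorem linearIndependent_pow_mul_pow {L K : Type*} [Field L] [Field K] [Algebra S L]
    [FaithfulSMul S L] [Algebra L K] [Algebra S K] [IsScalarTower S L K] {F G : S[X]} {n m : ℕ}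
    {x y : K} (hF : F.IsMonicOfDegree n) (hx : aeval x F = 0) (hG : G.IsMonicOfDegree m)
    (hy : aeval y G = 0) (htop : Algebra.adjoin L {x, y} = ⊤)
    (hdeg : Module.finrank L K = n * m) :
    LinearIndependent S fun i : Fin n × Fin m ↦ x ^ (i.1 : ℕ) * y ^ (i.2 : ℕ) := by
  have hmap {H : S[X]} {k : ℕ} (hH : H.IsMonicOfDegree k) :
      (H.map (algebraMap S L)).IsMonicOfDegree k :=
    ⟨by rw [hH.2.natDegree_map, hH.1], hH.2.map _⟩
  refine LinearIndependent.restrict_scalars (K := L) ?_ ?_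
  · simpa only [Algebra.smul_def, mul_one] using FaithfulSMul.algebraMap_injective S L
  refine linearIndependent_of_top_le_span_of_card_eq_finrank ?_ ?_
  · rw [span_range_pow_mul_pow_eq_adjoin (hmap hF) (by rwa [aeval_map_algebraMap]) (hmap hG)
      (by rwa [aeval_map_algebraMap]), htop]
    exact le_rfl
  · rw [hdeg, Fintype.card_prod, Fintype.card_fin, Fintype.card_fin]

theorem linearIndependent_adjoin_pow {R : Type*} [CommRing R] [Algebra S R] {F : S[X]} {n m : ℕ}
    {x y : R} (hF : F.IsMonicOfDegree n) (hx : aeval x F = 0)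
    (hind : LinearIndependent S fun i : Fin n × Fin m ↦ x ^ (i.1 : ℕ) * y ^ (i.2 : ℕ)) :
    LinearIndependent (Algebra.adjoin S {x}) fun j : Fin m ↦ y ^ (j : ℕ) := by
  rw [Fintype.linearIndependent_iff] at hind ⊢
  intro c hc j
  have hspan (j : Fin m) : ∃ e : Fin n → S, ∑ i, e i • x ^ (i : ℕ) = (c j : R) := by
    rw [← Submodule.mem_span_range_iff_exists_fun, span_range_pow_eq_adjoin hF hx]
    exact (c j).2
  choose e he using hspan
  have hzero := hind (fun i ↦ e i.2 i.1) (by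
    rw [Fintype.sum_prod_type_right, ← hc]
    refine Finset.sum_congr rfl fun j _ ↦ ?_
    rw [Subalgebra.smul_def, ← he, smul_eq_mul, Finset.sum_mul]
    simp only [smul_mul_assoc])
  refine Subtype.ext ?_
  simp [← he, hzero (_, j)]

theorem mem_span_range_of_smul_mem_of_isRelPrime {ι M : Type*} [Finite ι] [AddCommGroup M]
    [IsDomain S] [DecompositionMonoid S] [Module S M] [Module.IsTorsionFree S M]
    {v : ι → M} (hv : LinearIndependent S v) {f g : S} (hf : f ≠ 0) (hfg : IsRelPrime f g) {x : M}
    (hfx : f • x ∈ Submodule.span S (Set.range v)) (hgx : g • x ∈ Submodule.span S (Set.range v)) :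
    x ∈ Submodule.span S (Set.range v) := by
  have := Fintype.ofFinite ι
  obtain ⟨α, hα⟩ := (Submodule.mem_span_range_iff_exists_fun S).1 hfx
  obtain ⟨β, hβ⟩ := (Submodule.mem_span_range_iff_exists_fun S).1 hgx
  have hαβ (i : ι) : g * α i = f * β i := by
    refine sub_eq_zero.1 (Fintype.linearIndependent_iff.1 hv (fun i ↦ g * α i - f * β i) ?_ i)
    simp only [sub_smul, mul_smul, Finset.sum_sub_distrib, ← Finset.smul_sum, hα, hβ]
    rw [smul_comm, sub_self]
  choose γ hγ using fun i ↦ hfg.dvd_of_dvd_mul_left ⟨β i, hαβ i⟩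
  refine (Submodule.mem_span_range_iff_exists_fun S).2 ⟨γ, smul_right_injective M hf ?_⟩
  simp only [Finset.smul_sum, smul_smul, ← hγ, hα]

end Adjoin

section Trace

open Polynomial

theorem natCast_mul_mem_adjoin_of_isIntegral {B E K : Type*} [CommRing B] [IsDomain B]
    [IsIntegrallyClosed B] [Field E] [Algebra B E] [IsFractionRing B E] [Field K] [CharZero K]
    [Algebra E K] [Algebra B K] [IsScalarTower B E K] {n : ℕ} (hn : n ≠ 0) {μ : K}
    {g : B} (hμ : μ ^ n = algebraMap B K g)
    (htop : Algebra.adjoin E {μ} = ⊤) (hdeg : n ≤ Module.finrank E K) {r : K}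
    (hr : IsIntegral B r) : n * algebraMap B K g * r ∈ Algebra.adjoin B {μ} := by
  obtain rfl | hμ0 := eq_or_ne μ 0
  · rw [← hμ, zero_pow hn, mul_zero, zero_mul]
    exact zero_mem _
  have hμB : IsIntegral B μ :=
    IsIntegral.of_pow hn.pos (by rw [hμ]; exact isIntegral_algebraMap)
  have := (algebraMap E K).charZero
  have := FiniteDimensional.of_finrank_pos (hn.pos.trans_le hdeg)
  have hmin : minpoly E μ = X ^ n - C (algebraMap B E g) := by
    refine (minpoly.unique_of_degree_le_degree_minpoly E μ (monic_X_pow_sub_C _ hn) ?_ ?_).symm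
    · simp [hμ, ← IsScalarTower.algebraMap_apply]
    · rw [degree_X_pow_sub_C hn.pos, degree_eq_natDegree (minpoly.ne_zero hμB.tower_top),
        (Field.primitive_element_iff_minpoly_natDegree_eq E μ).1
          (IntermediateField.adjoin_eq_top_of_algebra E _ htop)]
      exact_mod_cast hdeg
  have hdual : r ∈ (Algebra.traceForm E K).dualSubmodule
      (Subalgebra.toSubmodule (Algebra.adjoin B {μ})) := by
    refine LinearMap.BilinForm.mem_dualSubmodule _ |>.2 fun x hx ↦ ?_
    have hxB : IsIntegral B x := adjoin_le_integralClosure hμB hx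
    obtain ⟨b, hb⟩ := IsIntegrallyClosed.algebraMap_eq_of_integral
      (Algebra.isIntegral_trace (L := E) (hr.mul hxB))
    exact Submodule.mem_one.2 ⟨b, hb⟩
  rw [traceForm_dualSubmodule_adjoin B E htop hμB, hmin] at hdual
  obtain ⟨x, hx, rfl⟩ := hdual
  have hmul : n * algebraMap B K g *
      ((aeval μ (derivative (X ^ n - C (algebraMap B E g))))⁻¹ * x) = μ * x := by
    have hn0 : (n : K) ≠ 0 := Nat.cast_ne_zero.2 hn
    simp only [derivative_sub, derivative_X_pow, derivative_C, sub_zero, map_mul, map_natCast,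
      map_pow, aeval_X, ← hμ]
    rw [← mul_pow_sub_one hn μ]
    field_simp
  change n * algebraMap B K g * (_ * x) ∈ _
  rw [hmul]
  exact mul_mem (Algebra.self_mem_adjoin_singleton B μ) hx

end Trace

section TwoRoots

open Polynomial

theorem adjoin_adjoin_singleton_eq {S R : Type*} [CommRing S] [CommRing R] [Algebra S R] (x y : R) :
    (Algebra.adjoin (Algebra.adjoin S {x}) {y}).restrictScalars S = Algebra.adjoin S {x, y} := by
  rw [Set.insert_eq, Algebra.adjoin_union_eq_adjoin_adjoin]

variable {S L K : Type*} [CommRing S] [IsDomain S] [Field L] [Algebra S L] [IsFractionRing S L]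
  [Field K] [Algebra L K] [Algebra S K] [IsScalarTower S L K] {n : ℕ}

theorem isMonicOfDegree_X_pow_sub_C (t : S) (hn : n ≠ 0) :
    (X ^ n - C t : S[X]).IsMonicOfDegree n :=
  ⟨natDegree_X_pow_sub_C, monic_X_pow_sub_C t hn⟩

theorem adjoin_singleton_eq_top_of_adjoin_pair_eq_top {E : Type*} [Field E] [Algebra S E]
    [Algebra E K] [IsScalarTower S E K] {x : E} {y : K}
    (htop : Algebra.adjoin L {algebraMap E K x, y} = ⊤) : Algebra.adjoin E {y} = ⊤ := by
  refine eq_top_iff.2 fun z _ ↦ ?_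
  obtain ⟨t, ht⟩ := multiple_mem_adjoin_of_mem_localization_adjoin (nonZeroDivisors S) L
    {algebraMap E K x, y} z (htop ▸ Algebra.mem_top)
  have hle : Algebra.adjoin S {algebraMap E K x, y} ≤ (Algebra.adjoin E {y}).restrictScalars S :=
    Algebra.adjoin_le (Set.insert_subset (Subalgebra.algebraMap_mem _ x) Algebra.subset_adjoin)
  have ht0 : algebraMap S E t ≠ 0 := by
    have : algebraMap S K t ≠ 0 := by
      rw [IsScalarTower.algebraMap_apply S L K, _root_.map_ne_zero]
      exact IsFractionRing.to_map_ne_zero_of_mem_nonZeroDivisors t.2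
    rwa [IsScalarTower.algebraMap_apply S E K, _root_.map_ne_zero] at this
  have htz : algebraMap S E t • z ∈ Algebra.adjoin E {y} := by
    rw [algebraMap_smul]
    exact hle ht
  simpa only [inv_smul_smul₀ ht0] using Subalgebra.smul_mem _ htz (algebraMap S E t)⁻¹

theorem natCast_mul_mem_adjoin_pair_of_isIntegral [CharZero L] (hn : n ≠ 0) {ω μ : K} {f g : S}
    (hω : ω ^ n = algebraMap S K f) (hμ : μ ^ n = algebraMap S K g)
    (htop : Algebra.adjoin L {ω, μ} = ⊤) (hdeg : Module.finrank L K = n * n)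
    [IsIntegrallyClosed (Algebra.adjoin S {ω})] {r : K} (hr : IsIntegral S r) :
    n * algebraMap S K g * r ∈ Algebra.adjoin S {ω, μ} := by
  have := charZero_of_injective_algebraMap (algebraMap L K).injective
  have : FaithfulSMul (Algebra.adjoin S {ω}) K :=
    (faithfulSMul_iff_algebraMap_injective _ K).2 Subtype.val_injective
  let := FractionRing.liftAlgebra (Algebra.adjoin S {ω}) K
  have := FractionRing.isScalarTower_liftAlgebra (Algebra.adjoin S {ω}) K
  set E := FractionRing (Algebra.adjoin S {ω})
  have := IsScalarTower.to₁₃₄ S (Algebra.adjoin S {ω}) E K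
  have htop' : Algebra.adjoin E {μ} = ⊤ := by
    refine adjoin_singleton_eq_top_of_adjoin_pair_eq_top (S := S) (L := L)
      (x := algebraMap (Algebra.adjoin S {ω}) E ⟨ω, Algebra.self_mem_adjoin_singleton S ω⟩) ?_
    rwa [← IsScalarTower.algebraMap_apply]
  have hind : LinearIndependent E fun j : Fin n ↦ μ ^ (j : ℕ) := by
    rw [← LinearIndependent.iff_fractionRing (R := Algebra.adjoin S {ω})]
    exact linearIndependent_adjoin_pow (isMonicOfDegree_X_pow_sub_C f hn) (by simp [hω])
      (linearIndependent_pow_mul_pow (isMonicOfDegree_X_pow_sub_C f hn) (by simp [hω])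
        (isMonicOfDegree_X_pow_sub_C g hn) (by simp [hμ]) htop hdeg)
  have hμE : IsIntegral E μ := IsIntegral.of_pow hn.pos (by
    rw [hμ, IsScalarTower.algebraMap_apply S E K]
    exact isIntegral_algebraMap)
  have : FiniteDimensional E K := Module.finite_def.2 (by
    simpa only [htop', Algebra.top_toSubmodule] using hμE.fg_adjoin_singleton)
  have hmem := natCast_mul_mem_adjoin_of_isIntegral (B := Algebra.adjoin S {ω}) (E := E) hn
    (g := algebraMap S _ g) (by rw [hμ, ← IsScalarTower.algebraMap_apply]) htop'
    (by simpa using hind.fintype_card_le_finrank) hr.tower_top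
  rwa [← IsScalarTower.algebraMap_apply, ← Subalgebra.mem_restrictScalars S,
    adjoin_adjoin_singleton_eq] at hmem

theorem natCast_mul_mem_adjoin_pair_of_isRelPrime [CharZero L] [DecompositionMonoid S]
    (hn : n ≠ 0) {ω μ : K} {f g : S} (hf : f ≠ 0) (hfg : IsRelPrime f g)
    (hω : ω ^ n = algebraMap S K f) (hμ : μ ^ n = algebraMap S K g)
    (htop : Algebra.adjoin L {ω, μ} = ⊤) (hdeg : Module.finrank L K = n * n)
    [IsIntegrallyClosed (Algebra.adjoin S {ω})] [IsIntegrallyClosed (Algebra.adjoin S {μ})]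
    {r : K} (hr : IsIntegral S r) : n * r ∈ Algebra.adjoin S {ω, μ} := by
  have : FaithfulSMul S K := .trans S L K
  have hspan := span_range_pow_mul_pow_eq_adjoin (isMonicOfDegree_X_pow_sub_C f hn)
    (x := ω) (by simp [hω]) (isMonicOfDegree_X_pow_sub_C g hn) (y := μ) (by simp [hμ])
  have hmem {x : K} : x ∈ Algebra.adjoin S {ω, μ} ↔ x ∈ Submodule.span S
      (Set.range fun i : Fin n × Fin n ↦ ω ^ (i.1 : ℕ) * μ ^ (i.2 : ℕ)) := by
    rw [hspan, Subalgebra.mem_toSubmodule]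
  rw [hmem]
  have hind := linearIndependent_pow_mul_pow (isMonicOfDegree_X_pow_sub_C f hn) (x := ω)
    (by simp [hω]) (isMonicOfDegree_X_pow_sub_C g hn) (y := μ) (by simp [hμ]) htop hdeg
  refine mem_span_range_of_smul_mem_of_isRelPrime hind hf hfg ?_ ?_
  · rw [← hmem, Algebra.smul_def, ← mul_assoc, mul_comm _ (n : K), Set.pair_comm]
    exact natCast_mul_mem_adjoin_pair_of_isIntegral hn hμ hω (Set.pair_comm ω μ ▸ htop) hdeg hr
  · rw [← hmem, Algebra.smul_def, ← mul_assoc, mul_comm _ (n : K)]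
    exact natCast_mul_mem_adjoin_pair_of_isIntegral hn hω hμ htop hdeg hr

end TwoRoots

/-! ### Arithmetic of the shifted roots -/

section Binomial

theorem exists_add_pow_prime_eq_add_mul {S : Type*} [CommRing S] {p : ℕ} (hp : p.Prime)
    (hp3 : 3 ≤ p) (h u : S) :
    ∃ s, (h + u) ^ p = h ^ p + u ^ p + p * u * (h ^ (p - 1) + u * s) := by
  have hdvd : u ∣ ∑ k ∈ (Finset.Ioo 0 p).erase 1, u ^ (k - 1) * h ^ (p - k - 1) *
      ((p.choose k / p : ℕ) : S) := by
    refine Finset.dvd_sum fun k hk ↦ ?_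
    have hk1 : k - 1 ≠ 0 := by
      have := Finset.mem_Ioo.1 (Finset.mem_of_mem_erase hk)
      have := Finset.ne_of_mem_erase hk
      lia
    exact ((dvd_pow_self u hk1).mul_right _).mul_right _
  obtain ⟨s, hs⟩ := hdvd
  refine ⟨h * s, ?_⟩
  have hone : 1 ∈ Finset.Ioo 0 p := Finset.mem_Ioo.2 ⟨one_pos, hp.one_lt⟩
  have hpow : h ^ (p - 1) = h * h ^ (p - 1 - 1) := by
    rw [← pow_succ', Nat.sub_add_cancel (by lia)]
  rw [add_comm, add_pow_prime_eq hp, ← Finset.add_sum_erase _ _ hone, hs, hpow,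
    Nat.choose_one_right, Nat.div_self hp.pos]
  simp only [Nat.sub_self, pow_zero, Nat.cast_one]
  ring

end Binomial

section Specialization

open MvPolynomial

variable {S : Type*} [CommRing S]

theorem exists_eq_sum_add_X_pow_mul (n : ℕ) (P : MvPolynomial (Fin 2) S) :
    ∃ (c : Fin n × Fin n → S) (Q₁ Q₂ : MvPolynomial (Fin 2) S),
      P = ∑ i, C (c i) * (X 0 ^ (i.1 : ℕ) * X 1 ^ (i.2 : ℕ)) + X 0 ^ n * Q₁ + X 1 ^ n * Q₂ := by
  induction P using MvPolynomial.induction_on' with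
  | monomial m a =>
    have hm : monomial m a = C a * (X 0 ^ m 0 * X 1 ^ m 1) := by
      rw [monomial_eq, m.prod_fintype _ fun _ ↦ pow_zero _, Fin.prod_univ_two]
    rw [hm]
    by_cases h₀ : m 0 < n
    · by_cases h₁ : m 1 < n
      · refine ⟨Pi.single (⟨m 0, h₀⟩, ⟨m 1, h₁⟩) a, 0, 0, ?_⟩
        rw [Fintype.sum_eq_single (⟨m 0, h₀⟩, ⟨m 1, h₁⟩) fun i hi ↦ by
          rw [Pi.single_eq_of_ne hi, C_0, zero_mul]]
        simp
      · refine ⟨0, 0, C a * X 0 ^ m 0 * X 1 ^ (m 1 - n), ?_⟩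
        have : (X 1 ^ m 1 : MvPolynomial (Fin 2) S) = X 1 ^ n * X 1 ^ (m 1 - n) := by
          rw [← pow_add, Nat.add_sub_cancel' (not_lt.1 h₁)]
        simp only [Pi.zero_apply, C_0, zero_mul, Finset.sum_const_zero, mul_zero, this]
        ring
    · refine ⟨0, C a * X 0 ^ (m 0 - n) * X 1 ^ m 1, 0, ?_⟩
      have : (X 0 ^ m 0 : MvPolynomial (Fin 2) S) = X 0 ^ n * X 0 ^ (m 0 - n) := by
        rw [← pow_add, Nat.add_sub_cancel' (not_lt.1 h₀)]
      simp only [Pi.zero_apply, C_0, zero_mul, Finset.sum_const_zero, mul_zero, this]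
      ring
  | add P Q hP hQ =>
    obtain ⟨c, P₁, P₂, hP⟩ := hP
    obtain ⟨e, Q₁, Q₂, hQ⟩ := hQ
    refine ⟨c + e, P₁ + Q₁, P₂ + Q₂, ?_⟩
    simp only [hP, hQ, Pi.add_apply, C_add, add_mul, Finset.sum_add_distrib]
    ring

theorem pow_dvd_aeval_of_aeval_mem_smul {R : Type*} [CommRing R] [Algebra S R] {x y : R} {n : ℕ}
    (hn : n ≠ 0)
    (hind : LinearIndependent S fun i : Fin n × Fin n ↦ x ^ (i.1 : ℕ) * y ^ (i.2 : ℕ))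
    (hspan : Submodule.span S (Set.range fun i : Fin n × Fin n ↦ x ^ (i.1 : ℕ) * y ^ (i.2 : ℕ)) =
      Subalgebra.toSubmodule (Algebra.adjoin S {x, y}))
    {q : S} (hx : x ^ n ∈ q • Subalgebra.toSubmodule (Algebra.adjoin S {x, y}))
    (hy : y ^ n ∈ q • Subalgebra.toSubmodule (Algebra.adjoin S {x, y})) {P : MvPolynomial (Fin 2) S}
    (hP : aeval ![x, y] P ∈ q • Subalgebra.toSubmodule (Algebra.adjoin S {x, y}))
    {B : Type*} [CommRing B] [Algebra S B] (hq : algebraMap S B q = 0) (b : B) :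
    b ^ n ∣ aeval ![b, 0] P := by
  have hmem (Q : MvPolynomial (Fin 2) S) : aeval ![x, y] Q ∈ Algebra.adjoin S {x, y} := by
    rw [← Matrix.range_cons_cons_empty x y ![], Algebra.adjoin_range_eq_range_aeval]
    exact ⟨Q, rfl⟩
  obtain ⟨x', hx', hx⟩ := Submodule.mem_smul_pointwise_iff_exists _ _ _ |>.1 hx
  obtain ⟨y', hy', hy⟩ := Submodule.mem_smul_pointwise_iff_exists _ _ _ |>.1 hy
  obtain ⟨z, hz, hP⟩ := Submodule.mem_smul_pointwise_iff_exists _ _ _ |>.1 hP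
  obtain ⟨c, Q₁, Q₂, rfl⟩ := exists_eq_sum_add_X_pow_mul n P
  have hc : ∃ e : Fin n × Fin n → S, ∑ i, e i • (x ^ (i.1 : ℕ) * y ^ (i.2 : ℕ)) =
      z - x' * aeval ![x, y] Q₁ - y' * aeval ![x, y] Q₂ := by
    rw [← Submodule.mem_span_range_iff_exists_fun, hspan]
    exact sub_mem (sub_mem hz (Subalgebra.mul_mem _ hx' (hmem _)))
      (Subalgebra.mul_mem _ hy' (hmem _))
  obtain ⟨e, he⟩ := hc
  have hce (i) : c i = q * e i := by
    refine sub_eq_zero.1 (Fintype.linearIndependent_iff.1 hind (fun i ↦ c i - q * e i) ?_ i)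
    simp only [map_add, map_sum, map_mul, aeval_C, map_pow, aeval_X, Matrix.cons_val_zero,
      Matrix.cons_val_one, ← hx, ← hy, ← Algebra.smul_def, smul_mul_assoc] at hP
    simp only [sub_smul, mul_smul, Finset.sum_sub_distrib, ← Finset.smul_sum, he, smul_sub]
    linear_combination -hP
  simp [hce, hq, zero_pow hn]

end Specialization

section ShiftedRoots

open MvPolynomial

variable {S R : Type*} [CommRing S] [CommRing R] [Algebra S R]

theorem isMonicOfDegree_X_add_C_pow_sub_C [Nontrivial S] (h t : S) {n : ℕ} (hn : n ≠ 0) :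
    ((Polynomial.X + Polynomial.C h) ^ n - Polynomial.C t).IsMonicOfDegree n := by
  refine .sub (by simpa using (Polynomial.isMonicOfDegree_X_add_one h).pow n) ?_
  rw [Polynomial.natDegree_C]
  exact Nat.pos_of_ne_zero hn

theorem exists_pow_prime_eq_of_add_pow_prime_eq {p : ℕ} (hp : p.Prime) {h a : S} {x : R}
    (hx : (x + algebraMap S R h) ^ p = algebraMap S R (h ^ p + p * a)) :
    ∃ e ∈ Algebra.adjoin S {x}, x ^ p = p * (algebraMap S R a - x * e) := by
  obtain ⟨e, he⟩ := exists_add_pow_prime_eq hp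
    (⟨x, Algebra.self_mem_adjoin_singleton S x⟩ : Algebra.adjoin S {x}) (algebraMap S _ h)
  refine ⟨algebraMap S R h * e, mul_mem (Subalgebra.algebraMap_mem _ h) e.2, ?_⟩
  have he : (x + algebraMap S R h) ^ p =
      x ^ p + algebraMap S R h ^ p + p * x * algebraMap S R h * e := congrArg Subtype.val he
  rw [hx, map_add, map_mul, map_pow, map_natCast] at he
  linear_combination -he

theorem natCast_mul_mem_smul {N : Subalgebra S R} {n : ℕ} {x : R} (hx : x ∈ N) :
    (n : R) * x ∈ (n : S) • Subalgebra.toSubmodule N := by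
  rw [← map_natCast (algebraMap S R), ← Algebra.smul_def]
  exact Submodule.smul_mem_pointwise_smul _ _ _ hx

theorem pow_prime_mem_smul_of_add_pow_prime_eq {p : ℕ} (hp : p.Prime) {h a : S} {x : R}
    (hx : (x + algebraMap S R h) ^ p = algebraMap S R (h ^ p + p * a)) {N : Subalgebra S R}
    (hxN : x ∈ N) : x ^ p ∈ (p : S) • Subalgebra.toSubmodule N := by
  obtain ⟨e, he, hxp⟩ := exists_pow_prime_eq_of_add_pow_prime_eq hp hx
  rw [hxp]
  exact natCast_mul_mem_smul (sub_mem (Subalgebra.algebraMap_mem _ a)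
    (mul_mem hxN (Algebra.adjoin_le (Set.singleton_subset_iff.2 hxN) he)))

theorem not_X_pow_three_dvd_sq {T : Type*} [CommRing T] [IsDomain T] {t u v : T} (ht : t ≠ 0)
    (hu : u ≠ 0) (hv : v ≠ 0) (n : ℕ) (Q : Polynomial T) :
    ¬Polynomial.X ^ 3 ∣ (Polynomial.C t * (Polynomial.C u * Polynomial.X) *
      (Polynomial.C v + Polynomial.C u * Polynomial.X * Q) ^ n) ^ 2 := by
  rw [← mul_assoc, mul_right_comm, mul_pow _ Polynomial.X, pow_succ', mul_comm Polynomial.X,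
    mul_comm _ (Polynomial.X ^ 2), mul_dvd_mul_iff_left (pow_ne_zero 2 Polynomial.X_ne_zero)]
  intro hX
  have h0 := Polynomial.X_dvd_iff.1 (Polynomial.prime_X.dvd_of_dvd_pow hX)
  simp [Polynomial.coeff_zero_eq_eval_zero, ht, hu, hv] at h0

/-- The elements `π = ω - h₁` and `ρ = μ - h₂`, where `ωᵖ = h₁ᵖ + a p` and `μᵖ = h₂ᵖ + b p`,
together with the arithmetic properties of `S[ω, μ] ⊆ R` on which the description of `R` rests;
`y` is the element with `ωᵖ μᵖ = (h₁ h₂)ᵖ + y p²`. -/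
structure IsShiftedRootPair (p : ℕ) (h₁ h₂ a b y : S) (π ρ : R) : Prop where
  prime : Prime (p : S)
  not_dvd_h₁ : ¬(p : S) ∣ h₁
  not_dvd_h₂ : ¬(p : S) ∣ h₂
  not_dvd_a : ¬(p : S) ∣ a
  not_dvd_b : ¬(p : S) ∣ b
  mul_eq : (h₁ ^ p + p * a) * (h₂ ^ p + p * b) = (h₁ * h₂) ^ p + p ^ 2 * y
  add_pow_left : (π + algebraMap S R h₁) ^ p = algebraMap S R (h₁ ^ p + p * a)
  add_pow_right : (ρ + algebraMap S R h₂) ^ p = algebraMap S R (h₂ ^ p + p * b)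
  linearIndependent :
    LinearIndependent S fun i : Fin p × Fin p ↦ π ^ (i.1 : ℕ) * ρ ^ (i.2 : ℕ)
  natCast_mul_mem : ∀ r : R, p * r ∈ Algebra.adjoin S {π, ρ}

/-- The polynomial `(X₀ + h₁)(X₁ + h₂) - h₁h₂`. Its value at `(ω - h₁, μ - h₂)` is `ωμ - h₁h₂`,
whose `(p - 1)`-st power is divisible by `p` in `R`. -/
noncomputable def crossTerm (h₁ h₂ : S) : MvPolynomial (Fin 2) S :=
  C h₂ * X 0 + C h₁ * X 1 + X 0 * X 1

theorem aeval_crossTerm (h₁ h₂ : S) (x y : R) :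
    aeval ![x, y] (crossTerm h₁ h₂) = algebraMap S R h₂ * x + algebraMap S R h₁ * y + x * y := by
  simp [crossTerm]

namespace IsShiftedRootPair

variable {p : ℕ} {h₁ h₂ a b y : S} {π ρ : R}

theorem span_range_eq (hp : p.Prime) (h : IsShiftedRootPair p h₁ h₂ a b y π ρ) :
    Submodule.span S (Set.range fun i : Fin p × Fin p ↦ π ^ (i.1 : ℕ) * ρ ^ (i.2 : ℕ)) =
      Subalgebra.toSubmodule (Algebra.adjoin S {π, ρ}) := by
  have := nontrivial_of_ne _ _ h.prime.ne_zero
  refine span_range_pow_mul_pow_eq_adjoin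
    (isMonicOfDegree_X_add_C_pow_sub_C h₁ (h₁ ^ p + p * a) hp.ne_zero) ?_
    (isMonicOfDegree_X_add_C_pow_sub_C h₂ (h₂ ^ p + p * b) hp.ne_zero) ?_ <;>
  simp [h.add_pow_left, h.add_pow_right]

theorem natCast_ne_zero [FaithfulSMul S R] (h : IsShiftedRootPair p h₁ h₂ a b y π ρ) :
    (p : R) ≠ 0 := by
  rw [← map_natCast (algebraMap S R), Ne, FaithfulSMul.algebraMap_eq_zero_iff]
  exact h.prime.ne_zero

theorem dvd_pow_left (hp : p.Prime) (h : IsShiftedRootPair p h₁ h₂ a b y π ρ) :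
    (p : R) ∣ π ^ p := by
  obtain ⟨e, -, he⟩ := exists_pow_prime_eq_of_add_pow_prime_eq hp h.add_pow_left
  exact ⟨_, he⟩

theorem dvd_pow_right (hp : p.Prime) (h : IsShiftedRootPair p h₁ h₂ a b y π ρ) :
    (p : R) ∣ ρ ^ p := by
  obtain ⟨e, -, he⟩ := exists_pow_prime_eq_of_add_pow_prime_eq hp h.add_pow_right
  exact ⟨_, he⟩

theorem aeval_crossTerm_add_pow (h : IsShiftedRootPair p h₁ h₂ a b y π ρ) :
    (algebraMap S R (h₁ * h₂) + aeval ![π, ρ] (crossTerm h₁ h₂)) ^ p =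
      algebraMap S R (h₁ * h₂) ^ p + p ^ 2 * algebraMap S R y := by
  have hfactor : algebraMap S R (h₁ * h₂) + aeval ![π, ρ] (crossTerm h₁ h₂) =
      (π + algebraMap S R h₁) * (ρ + algebraMap S R h₂) := by
    rw [aeval_crossTerm, map_mul]
    ring
  rw [hfactor, mul_pow, h.add_pow_left, h.add_pow_right, ← map_mul, h.mul_eq]
  simp only [map_add, map_mul, map_pow, map_natCast]

theorem exists_aeval_crossTerm_pow_eq (hp : p.Prime) (hp3 : 3 ≤ p)
    (h : IsShiftedRootPair p h₁ h₂ a b y π ρ) :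
    ∃ Q : MvPolynomial (Fin 2) S, aeval ![π, ρ] (crossTerm h₁ h₂) ^ p =
      p * (p * algebraMap S R y - aeval ![π, ρ] (crossTerm h₁ h₂) *
        aeval ![π, ρ] (C (h₁ * h₂) ^ (p - 1) + crossTerm h₁ h₂ * Q)) := by
  obtain ⟨Q, hQ⟩ := exists_add_pow_prime_eq_add_mul hp hp3 (C (h₁ * h₂)) (crossTerm h₁ h₂)
  refine ⟨Q, ?_⟩
  replace hQ := congrArg (aeval ![π, ρ]) hQ
  rw [map_pow, map_add, aeval_C, h.aeval_crossTerm_add_pow] at hQ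
  simp only [map_add, map_mul, map_pow, map_natCast, aeval_C] at hQ ⊢
  linear_combination -hQ

theorem not_dvd_aeval_mul_crossTerm_mul_pow (hp : p.Prime) (hp3 : 3 ≤ p)
    (h : IsShiftedRootPair p h₁ h₂ a b y π ρ) {t : S} (ht : ¬(p : S) ∣ t)
    (Q : MvPolynomial (Fin 2) S) (n : ℕ) :
    ¬(p : R) ∣ aeval ![π, ρ]
      (C t * crossTerm h₁ h₂ * (C (h₁ * h₂) ^ (p - 1) + crossTerm h₁ h₂ * Q) ^ n) := by
  rintro ⟨s, hs⟩
  have hsq : aeval ![π, ρ] ((C t * crossTerm h₁ h₂ *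
      (C (h₁ * h₂) ^ (p - 1) + crossTerm h₁ h₂ * Q) ^ n) ^ 2) = p * (p * s ^ 2) := by
    rw [map_pow, hs]
    ring
  have : (Ideal.span {(p : S)}).IsPrime := (Ideal.span_singleton_prime h.prime.ne_zero).2 h.prime
  have hne {x : S} (hx : ¬(p : S) ∣ x) : algebraMap S (S ⧸ Ideal.span {(p : S)}) x ≠ 0 := by
    rwa [Ideal.Quotient.algebraMap_eq, Ne, Ideal.Quotient.eq_zero_iff_dvd]
  have hX := pow_dvd_aeval_of_aeval_mem_smul hp.ne_zero h.linearIndependent (h.span_range_eq hp)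
    (pow_prime_mem_smul_of_add_pow_prime_eq hp h.add_pow_left
      (Algebra.subset_adjoin (Set.mem_insert _ _)))
    (pow_prime_mem_smul_of_add_pow_prime_eq hp h.add_pow_right
      (Algebra.subset_adjoin (Set.mem_insert_of_mem _ rfl)))
    (hsq ▸ natCast_mul_mem_smul (h.natCast_mul_mem _))
    (B := Polynomial (S ⧸ Ideal.span {(p : S)})) (by
      rw [IsScalarTower.algebraMap_apply S (S ⧸ Ideal.span {(p : S)}), Ideal.Quotient.algebraMap_eq,
        Ideal.Quotient.eq_zero_iff_dvd _ _ |>.2 dvd_rfl, map_zero]) Polynomial.X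
  simp only [map_pow, map_mul, map_add, aeval_crossTerm, mul_zero, add_zero, aeval_C,
    IsScalarTower.algebraMap_apply S (S ⧸ Ideal.span {(p : S)}) (Polynomial _),
    Polynomial.algebraMap_eq] at hX
  rw [← Polynomial.C_mul, ← Polynomial.C_pow] at hX
  exact not_X_pow_three_dvd_sq (hne ht) (hne h.not_dvd_h₂)
    (pow_ne_zero (p - 1) (mul_ne_zero (hne h.not_dvd_h₁) (hne h.not_dvd_h₂))) n _
    ((pow_dvd_pow _ hp3).trans hX)

variable [FaithfulSMul S R] [IsDomain R]

theorem not_dvd_mul_pow (hp : p.Prime) (hp3 : 3 ≤ p) (h : IsShiftedRootPair p h₁ h₂ a b y π ρ)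
    {τ : R} (hτ : aeval ![π, ρ] (crossTerm h₁ h₂) ^ (p - 1) = p * τ) {t : S} (ht : ¬(p : S) ∣ t)
    (n : ℕ) : ¬(p : R) ∣ algebraMap S R t * τ ^ n := by
  rintro ⟨r, hr⟩
  obtain ⟨Q, hQ⟩ := h.exists_aeval_crossTerm_pow_eq hp hp3
  set Γ := C (h₁ * h₂) ^ (p - 1) + crossTerm h₁ h₂ * Q with hΓ
  set z := aeval ![π, ρ] (crossTerm h₁ h₂) with hz
  have hzτ : z * (τ + aeval ![π, ρ] Γ) = p * algebraMap S R y := by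
    refine mul_left_cancel₀ h.natCast_ne_zero ?_
    rw [← pow_sub_one_mul hp.ne_zero, hτ] at hQ
    linear_combination hQ
  obtain ⟨s, hs⟩ := sub_dvd_pow_sub_pow τ (-aeval ![π, ρ] Γ) n
  refine h.not_dvd_aeval_mul_crossTerm_mul_pow hp hp3 ht Q n
    ⟨(-1) ^ n * (z * r - algebraMap S R t * algebraMap S R y * s), ?_⟩
  rw [neg_pow, sub_neg_eq_add] at hs
  have hsq : ((-1 : R) ^ n) ^ 2 = 1 := by rw [← pow_mul, mul_comm, pow_mul]; simp
  rw [← hΓ, map_mul, map_mul, map_pow, aeval_C, ← hz]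
  linear_combination (-1) ^ n * z * hr - (-1) ^ n * algebraMap S R t * z * hs -
    (-1) ^ n * algebraMap S R t * s * hzτ - algebraMap S R t * z * aeval ![π, ρ] Γ ^ n * hsq

end IsShiftedRootPair

end ShiftedRoots

section LeadingForm

open MvPolynomial

theorem valuation_sub_mul_eq {R Γ₀ : Type*} [CommRing R] [LinearOrderedCommGroupWithZero Γ₀]
    {v : Valuation R Γ₀} {c : Γ₀} (hc0 : c ≠ 0) (hc1 : c < 1) {n : ℕ} (hn : 2 ≤ n)
    {x y z : R} (hx : v x ^ (n + 1) = c) (hy : v y ^ (n + 1) = c) (hz : v z ^ n = c) :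
    v (z - x * y) = v z := by
  refine Valuation.map_sub_eq_of_lt_left _ ?_
  have hpow : (v x * v y) ^ ((n + 1) * n) < v z ^ ((n + 1) * n) := by
    rw [mul_pow, pow_mul, hx, pow_mul, hy, ← pow_add, mul_comm, pow_mul, hz]
    exact (pow_lt_pow_iff_right_of_lt_one₀ (zero_lt_iff.2 hc0) hc1).2 (by lia)
  rw [map_mul]
  exact lt_of_pow_lt_pow_left₀ _ zero_le hpow

variable {S : Type*} {R : Type u} {Γ₀ : Type*} [CommRing S] [CommRing R] [Algebra S R]
  [LinearOrderedCommGroupWithZero Γ₀]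

theorem valuation_pow_eq_of_add_pow_prime_eq {v : Valuation R Γ₀} (hv : ∀ x, v x ≤ 1) {p : ℕ}
    (hp : p.Prime) (hvp : v p < 1) {h a : S} (ha : v (algebraMap S R a) = 1) {x : R}
    (hx : (x + algebraMap S R h) ^ p = algebraMap S R (h ^ p + p * a)) : v x ^ p = v p := by
  obtain ⟨e, -, he⟩ := exists_pow_prime_eq_of_add_pow_prime_eq hp hx
  have hle : v x ^ p ≤ v p := by
    rw [← map_pow, he, map_mul]
    exact mul_le_of_le_one_right' (hv _)
  have hlt : v (x * e) < v (algebraMap S R a) := by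
    rw [map_mul, ha]
    exact mul_lt_one_of_nonneg_of_lt_one_left zero_le
      (lt_of_pow_lt_pow_left₀ p zero_le_one (by simpa using hle.trans_lt hvp)) (hv e)
  rw [← map_pow, he, map_mul, Valuation.map_sub_eq_of_lt_left _ hlt, ha, mul_one]

theorem pow_mul_pow_pow_eq {M : Type*} [CommMonoid M] {α β γ : M} {m n : ℕ} (hα : α ^ m = γ)
    (hβ : β ^ n = γ) (i j : ℕ) : (α ^ i * β ^ j) ^ (m * n) = γ ^ (i * n + j * m) := by
  rw [pow_add, mul_pow, ← pow_mul, ← pow_mul, mul_left_comm i, pow_mul α, hα, mul_comm m n,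
    mul_left_comm j, pow_mul β, hβ]

theorem eq_of_mul_add_mul_succ_eq {n : ℕ} {k l : Fin 2 →₀ ℕ}
    (h : k 0 * n + k 1 * (n + 1) = l 0 * n + l 1 * (n + 1))
    (hk : k 0 * n + k 1 * (n + 1) < (n + 1) * n) : k = l := by
  have hk1 : k 1 < n := Nat.lt_of_mul_lt_mul_left (a := n + 1) (by linarith [Nat.zero_le (k 0 * n)])
  have hl1 : l 1 < n := Nat.lt_of_mul_lt_mul_left (a := n + 1) (by linarith [Nat.zero_le (l 0 * n)])
  have h1 : k 1 = l 1 := by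
    rw [← Nat.mod_eq_of_lt hk1, ← Nat.mod_eq_of_lt hl1, ← Nat.add_mul_mod_self_right _ (k 0 + k 1),
      ← Nat.add_mul_mod_self_right (l 1) (l 0 + l 1)]
    congr 1
    linarith
  have h0 : k 0 = l 0 := Nat.eq_of_mul_eq_mul_right (pos_of_gt hk1) (by rw [h1] at h; linarith)
  ext i
  fin_cases i
  exacts [h0, h1]

theorem mul_add_mul_succ_lt_of_ne_single {n : ℕ} {m : Fin 2 →₀ ℕ} (hm : m 0 + m 1 ≤ n)
    (hne : Finsupp.single 1 n ≠ m) : m 0 * n + m 1 * (n + 1) < (n + 1) * n := by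
  have hm1 : m 1 < n := by
    refine lt_of_le_of_ne (by lia) fun hm1 ↦ hne ?_
    ext i
    fin_cases i
    · simpa using (by lia : 0 = m 0)
    · simpa using hm1.symm
  calc m 0 * n + m 1 * (n + 1) = (m 0 + m 1) * n + m 1 := by ring
    _ < n * n + n := Nat.add_lt_add_of_le_of_lt (Nat.mul_le_mul_right n hm) hm1
    _ = (n + 1) * n := by ring

theorem dvd_coeff_of_valuation_pow_eq {v : Valuation R Γ₀} (hv : ∀ x, v x ≤ 1) {q : S}
    (hq : ∀ t, ¬q ∣ t → v (algebraMap S R t) = 1) (hq0 : v (algebraMap S R q) ≠ 0)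
    (hq1 : v (algebraMap S R q) < 1) {n : ℕ} {x y : R}
    (hx : v x ^ (n + 1) = v (algebraMap S R q)) (hy : v y ^ n = v (algebraMap S R q))
    {G : MvPolynomial (Fin 2) S} (hG : v (aeval ![x, y] G) ≤ v (algebraMap S R q))
    {m : Fin 2 →₀ ℕ} (hm : m 0 * n + m 1 * (n + 1) < (n + 1) * n) : q ∣ G.coeff m := by
  have hprod (m : Fin 2 →₀ ℕ) : v (m.prod fun i k ↦ ![x, y] i ^ k) = v x ^ m 0 * v y ^ m 1 := by
    rw [m.prod_fintype _ fun _ ↦ pow_zero _, Fin.prod_univ_two, map_mul, map_pow, map_pow]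
    rfl
  have hn : (n + 1) * n ≠ 0 := (pos_of_gt hm).ne'
  have hlt (m : Fin 2 →₀ ℕ) : v (algebraMap S R q) < v (m.prod fun i k ↦ ![x, y] i ^ k) ↔
      m 0 * n + m 1 * (n + 1) < (n + 1) * n := by
    rw [hprod, ← pow_lt_pow_iff_left₀ zero_le zero_le hn, pow_mul_pow_pow_eq hx hy,
      pow_lt_pow_iff_right_of_lt_one₀ (zero_lt_iff.2 hq0) hq1]
  refine dvd_coeff_of_valuation_aeval_le hv hq ?_ hG ((hlt m).2 hm)
  rintro k ⟨-, hk⟩ l - hkl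
  rw [hlt] at hk
  simp only [hprod] at hkl
  replace hkl := congrArg (· ^ ((n + 1) * n)) hkl
  simp only [pow_mul_pow_pow_eq hx hy] at hkl
  replace hkl := (pow_right_strictAnti₀ (zero_lt_iff.2 hq0) hq1).injective hkl
  exact eq_of_mul_add_mul_succ_eq hkl hk

variable [FaithfulSMul S R] [IsDomain R] [IsIntegrallyClosed R]

namespace IsShiftedRootPair

variable {p : ℕ} {h₁ h₂ a b y : S} {π ρ : R}

theorem dvd_aeval_crossTerm_pow_pred (hp : p.Prime) (hp3 : 3 ≤ p)
    (h : IsShiftedRootPair p h₁ h₂ a b y π ρ) :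
    (p : R) ∣ aeval ![π, ρ] (crossTerm h₁ h₂) ^ (p - 1) := by
  obtain ⟨Q, hQ⟩ := h.exists_aeval_crossTerm_pow_eq hp hp3
  refine dvd_pow_pred_of_pow_eq h.natCast_ne_zero hp.two_le (y := algebraMap S R y)
    (γ := -aeval ![π, ρ] (C (h₁ * h₂) ^ (p - 1) + crossTerm h₁ h₂ * Q)) ?_
  rw [hQ, mul_neg, sub_eq_add_neg]

-- The valuation is centred at a prime of `R` that contains `p` but no `t * τ ^ n` with `p ∤ t`,
-- where `z ^ (p - 1) = p * τ`.
theorem exists_valuation (hp : p.Prime) (hp3 : 3 ≤ p) (h : IsShiftedRootPair p h₁ h₂ a b y π ρ) :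
    ∃ (Γ₀ : Type u) (_ : LinearOrderedCommGroupWithZero Γ₀) (v : Valuation R Γ₀),
      (∀ x, v x ≤ 1) ∧ (∀ t, ¬(p : S) ∣ t → v (algebraMap S R t) = 1) ∧ v p ≠ 0 ∧ v p < 1 ∧
        v (aeval ![π, ρ] (crossTerm h₁ h₂)) ^ (p - 1) = v p := by
  obtain ⟨τ, hτ⟩ := h.dvd_aeval_crossTerm_pow_pred hp hp3
  let M : Submonoid R :=
    { carrier := {x | ∃ t n, ¬(p : S) ∣ t ∧ x = algebraMap S R t * τ ^ n}
      one_mem' := ⟨1, 0, h.prime.not_dvd_one, by simp⟩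
      mul_mem' := by
        rintro _ _ ⟨t, m, ht, rfl⟩ ⟨s, n, hs, rfl⟩
        refine ⟨t * s, m + n, h.prime.not_dvd_mul ht hs, ?_⟩
        rw [map_mul, pow_add]
        ring }
  have hdisj : Disjoint (Ideal.span {(p : R)} : Set R) M := by
    rw [Set.disjoint_left]
    rintro x hx ⟨t, n, ht, rfl⟩
    exact h.not_dvd_mul_pow hp hp3 hτ ht n (Ideal.mem_span_singleton.1 hx)
  obtain ⟨P, hP, hpP, hPM⟩ := Ideal.exists_le_prime_disjoint _ M hdisj
  obtain ⟨V, hV, hVP⟩ := exists_valuationSubring_lt_one_iff_mem (FractionRing R) P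
  let v := V.valuation.comap (algebraMap R (FractionRing R))
  have hM {x : R} (hx : x ∈ M) : v x = 1 :=
    (hV x).antisymm (not_lt.1 fun hlt ↦ Set.disjoint_left.1 hPM ((hVP x).1 hlt) hx)
  refine ⟨V.ValueGroup, inferInstance, v, hV, fun t ht ↦ hM ⟨t, 0, ht, by simp⟩, ?_,
    (hVP _).2 (hpP (Ideal.mem_span_singleton_self _)), ?_⟩
  · exact (Valuation.ne_zero_iff V.valuation).2
      ((map_ne_zero_iff _ (IsFractionRing.injective R (FractionRing R))).2 h.natCast_ne_zero)
  · rw [← map_pow, hτ, map_mul, hM (x := τ) ⟨1, 1, h.prime.not_dvd_one, by simp⟩, mul_one]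

theorem exists_C_dvd_sub_C_mul_X_pow (hp : p.Prime) (hp3 : 3 ≤ p)
    (h : IsShiftedRootPair p h₁ h₂ a b y π ρ) {G : MvPolynomial (Fin 2) S}
    (hdeg : G.totalDegree ≤ p - 1)
    (hG : (p : R) ∣ aeval ![π, algebraMap S R h₂ * π + algebraMap S R h₁ * ρ] G) :
    ∃ t, C (p : S) ∣ G - C t * X 1 ^ (p - 1) := by
  obtain ⟨Γ₀, _, v, hv, hvt, hv0, hv1, hvz⟩ := h.exists_valuation hp hp3
  have hvπ := valuation_pow_eq_of_add_pow_prime_eq hv hp hv1 (hvt a h.not_dvd_a) h.add_pow_left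
  have hvρ := valuation_pow_eq_of_add_pow_prime_eq hv hp hv1 (hvt b h.not_dvd_b) h.add_pow_right
  obtain ⟨n, rfl⟩ := Nat.exists_eq_add_of_le' hp.one_le
  rw [Nat.add_sub_cancel] at hvz hdeg ⊢
  have hlin : algebraMap S R h₂ * π + algebraMap S R h₁ * ρ =
      aeval ![π, ρ] (crossTerm h₁ h₂) - π * ρ := by
    rw [aeval_crossTerm]
    ring
  rw [hlin] at hG
  rw [← valuation_sub_mul_eq hv0 hv1 (by lia) hvπ hvρ hvz] at hvz
  refine ⟨G.coeff (Finsupp.single 1 n), (C_dvd_iff_dvd_coeff _ _).2 fun m ↦ ?_⟩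
  rw [X_pow_eq_monomial, C_mul_monomial, mul_one, coeff_sub, coeff_monomial]
  split_ifs with hm
  · simp [hm]
  rw [sub_zero]
  by_cases hmG : m ∈ G.support
  · have hle := (le_totalDegree hmG).trans hdeg
    rw [m.sum_fintype _ fun _ ↦ rfl, Fin.sum_univ_two] at hle
    rw [← map_natCast (algebraMap S R)] at hv0 hv1 hvπ hvz
    refine dvd_coeff_of_valuation_pow_eq hv hvt hv0 hv1 hvπ hvz ?_
      (mul_add_mul_succ_lt_of_ne_single hle hm)
    obtain ⟨s, hs⟩ := hG
    rw [hs, map_mul, map_natCast (algebraMap S R)]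
    exact mul_le_of_le_one_right' (hv s)
  · rw [notMem_support_iff.1 hmG]
    exact dvd_zero _

theorem exists_C_dvd_C_mul_sub (hp : p.Prime) (hp3 : 3 ≤ p)
    (h : IsShiftedRootPair p h₁ h₂ a b y π ρ) {F : MvPolynomial (Fin 2) S}
    (hdeg : F.totalDegree ≤ p - 1) (hF : (p : R) ∣ aeval ![π, ρ] F) :
    ∃ t, C (p : S) ∣ C (h₁ ^ (p - 1)) * F - C t * (C h₂ * X 0 + C h₁ * X 1) ^ (p - 1) := by
  obtain ⟨G, hGdeg, hG⟩ := exists_bind₁_shear_eq h₂ h₁ hdeg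
  have hGF : aeval ![π, algebraMap S R h₂ * π + algebraMap S R h₁ * ρ] G =
      algebraMap S R (h₁ ^ (p - 1)) * aeval ![π, ρ] F := by
    have hvec : ![π, algebraMap S R h₂ * π + algebraMap S R h₁ * ρ] =
        fun i ↦ aeval ![π, ρ] (![X 0, C h₂ * X 0 + C h₁ * X 1] i) := by
      ext i
      fin_cases i <;> simp
    rw [hvec, ← aeval_bind₁, hG, map_mul, aeval_C]
  have hdvd : (p : R) ∣ aeval ![π, algebraMap S R h₂ * π + algebraMap S R h₁ * ρ] G := by
    rw [hGF]
    exact hF.mul_left _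
  obtain ⟨t, ht⟩ := h.exists_C_dvd_sub_C_mul_X_pow hp hp3 hGdeg hdvd
  refine ⟨t, ?_⟩
  have hbind := map_dvd (bind₁ ![X (0 : Fin 2), C h₂ * X 0 + C h₁ * X 1]) ht
  rwa [map_sub, map_mul, map_pow, hG, bind₁_C_right, bind₁_C_right, bind₁_X_right] at hbind

theorem dvd_linear_pow (hp : p.Prime) (hp3 : 3 ≤ p) (h : IsShiftedRootPair p h₁ h₂ a b y π ρ) :
    (p : R) ∣ (algebraMap S R h₂ * π + algebraMap S R h₁ * ρ) ^ (p - 1) := by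
  have hlin : algebraMap S R h₂ * π + algebraMap S R h₁ * ρ =
      aeval ![π, ρ] (crossTerm h₁ h₂) + -(π * ρ) := by
    rw [aeval_crossTerm]
    ring
  have hπρ : (p : R) ∣ (-(π * ρ)) ^ (p - 1) := by
    rw [neg_pow, mul_pow]
    exact (dvd_pow_mul_pow_of_dvd_pow hp.ne_zero (h.dvd_pow_left hp) (h.dvd_pow_right hp)
      (by lia)).mul_left _
  rw [hlin]
  exact dvd_add_pow_of_dvd_pow (by lia) (h.dvd_aeval_crossTerm_pow_pred hp hp3) hπρ

theorem dvd_reduced_linear_pow [IsDomain S] [IsIntegrallyClosed S] [Algebra.IsIntegral S R]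
    (hp : p.Prime) (hp3 : 3 ≤ p) (h : IsShiftedRootPair p h₁ h₂ a b y π ρ) {d k₁ k₂ : S}
    (hd₁ : (p : S) ∣ d * k₁ - h₁) (hd₂ : (p : S) ∣ d * k₂ - h₂) :
    (p : R) ∣ (algebraMap S R k₂ * π + algebraMap S R k₁ * ρ) ^ (p - 1) := by
  obtain ⟨c₁, hc₁⟩ := hd₁
  obtain ⟨c₂, hc₂⟩ := hd₂
  have hd : ¬(p : S) ∣ d := fun hd ↦
    h.not_dvd_h₁ ((dvd_sub_right (hd.mul_right k₁)).1 ⟨c₁, hc₁⟩)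
  rw [← map_natCast (algebraMap S R)]
  refine dvd_of_dvd_algebraMap_mul h.prime (e := d ^ (p - 1))
    (fun hdvd ↦ hd (h.prime.dvd_of_dvd_pow hdvd)) ?_
  rw [map_natCast, map_pow, ← mul_pow]
  refine (dvd_sub_left (h.dvd_linear_pow hp hp3)).1 (.trans ?_ (sub_dvd_pow_sub_pow _ _ _))
  refine ⟨algebraMap S R c₂ * π + algebraMap S R c₁ * ρ, ?_⟩
  replace hc₁ := congrArg (algebraMap S R) hc₁
  replace hc₂ := congrArg (algebraMap S R) hc₂
  simp only [map_sub, map_mul, map_natCast] at hc₁ hc₂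
  linear_combination π * hc₂ + ρ * hc₁

end IsShiftedRootPair

end LeadingForm

/-! ### The presentation of the integral closure -/

section OneRelation

variable {S M ι : Type*} [CommRing S] [AddCommGroup M] [Module S M] [Fintype ι] {u e : ι → M}
  {w : M} {c l : ι → S} {q : S}

theorem smul_linearCombination_option (he : ∀ i, q • e i = l i • u i)
    (hw : q • w = ∑ i, c i • u i) (β : Option ι → S) :
    q • Fintype.linearCombination S (fun i : Option ι ↦ i.elim w e) β =
      ∑ i, (β none * c i + β (some i) * l i) • u i := by
  rw [Fintype.linearCombination_apply, Fintype.sum_option, Option.elim_none, smul_add,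
    smul_comm q (β none), hw, Finset.smul_sum, Finset.smul_sum, ← Finset.sum_add_distrib]
  refine Finset.sum_congr rfl fun i _ ↦ ?_
  rw [Option.elim_some, smul_comm q (β (some i)), he, smul_smul, smul_smul, add_smul]

theorem ker_linearCombination_option_eq_span_singleton [IsDomain S]
    (hu : LinearIndependent S u) (he : ∀ i, q • e i = l i • u i) (hw : q • w = ∑ i, c i • u i)
    (hl : ∀ i, l i = q ∨ l i = 1 ∧ c i = 0) (hM : IsSMulRegular M q) (hq : Prime q) {i₀ : ι}
    (hi₀ : ¬q ∣ c i₀) :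
    LinearMap.ker (Fintype.linearCombination S fun i : Option ι ↦ i.elim w e) =
      Submodule.span S {fun i : Option ι ↦ i.elim (-q) c} := by
  have hmem (β : Option ι → S) : β ∈ LinearMap.ker (Fintype.linearCombination S
      fun i : Option ι ↦ i.elim w e) ↔ ∀ i, β none * c i + β (some i) * l i = 0 := by
    rw [LinearMap.mem_ker, ← hM.eq_iff, smul_linearCombination_option he hw, smul_zero]
    exact ⟨Fintype.linearIndependent_iff.1 hu _, fun h ↦ by simp [h]⟩
  refine le_antisymm (fun β hβ ↦ ?_) ((Submodule.span_singleton_le_iff_mem _ _).2 ((hmem _).2 ?_))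
  · rw [hmem] at hβ
    have hdvd : q ∣ β none * c i₀ := by
      rcases hl i₀ with h | ⟨-, h⟩
      · exact ⟨-β (some i₀), by linear_combination hβ i₀ - β (some i₀) * h⟩
      · exact absurd (h ▸ dvd_zero q) hi₀
    obtain ⟨s, hs⟩ := (hq.dvd_or_dvd hdvd).resolve_right hi₀
    refine Submodule.mem_span_singleton.2 ⟨-s, funext fun i ↦ ?_⟩
    cases i with
    | none => simp [hs, mul_comm]
    | some i =>
      rcases hl i with h | ⟨h, hc⟩
      · refine mul_left_cancel₀ hq.ne_zero ?_
        simp only [Pi.smul_apply, Option.elim_some, smul_eq_mul]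
        linear_combination -hβ i + c i * hs + β (some i) * h
      · simpa [h, hc, eq_comm] using hβ i
  · intro i
    rcases hl i with h | ⟨-, hc⟩
    · simp [h, mul_comm]
    · simp [hc]

theorem surjective_linearCombination_option (he : ∀ i, q • e i = l i • u i)
    (hw : q • w = ∑ i, c i • u i) (hM : IsSMulRegular M q)
    (h : ∀ x : M, ∃ (t : S) (α : ι → S), q • x = ∑ i, α i • u i ∧ ∀ i, l i ∣ α i - t * c i) :
    Function.Surjective (Fintype.linearCombination S fun i : Option ι ↦ i.elim w e) := by
  intro x
  obtain ⟨t, α, hx, hα⟩ := h x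
  choose s hs using hα
  refine ⟨fun i ↦ i.elim t s, hM ?_⟩
  simp only [smul_linearCombination_option he hw, hx, Option.elim_none, Option.elim_some]
  refine Finset.sum_congr rfl fun i _ ↦ ?_
  rw [mul_comm (s i), ← hs, add_sub_cancel]

end OneRelation

section BinaryForms

open MvPolynomial

/-- The exponent vector of the monomial `X₀ⁱ X₁ʲ`, which lets coefficients of binary forms be
indexed by pairs `(i, j)`. -/
noncomputable def biexponent (i j : ℕ) : Fin 2 →₀ ℕ :=
  Finsupp.single 0 i + Finsupp.single 1 j

@[simp]
theorem biexponent_inj {i j k l : ℕ} : biexponent i j = biexponent k l ↔ i = k ∧ j = l := by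
  refine ⟨fun h ↦ ⟨?_, ?_⟩, fun h ↦ by rw [h.1, h.2]⟩
  · simpa [biexponent] using DFunLike.congr_fun h 0
  · simpa [biexponent] using DFunLike.congr_fun h 1

variable {S : Type*} [CommRing S]

theorem monomial_biexponent (i j : ℕ) (a : S) :
    monomial (biexponent i j) a = C a * (X 0 ^ i * X 1 ^ j) := by
  rw [biexponent, X_pow_eq_monomial, X_pow_eq_monomial, monomial_mul, C_mul_monomial]
  simp

theorem coeff_biexponent_linear_pow (u v : S) (N i j : ℕ) :
    ((C u * X (0 : Fin 2) + C v * X 1) ^ N).coeff (biexponent i j) =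
      if i + j = N then (N.choose i : S) * (u ^ i * v ^ j) else 0 := by
  rw [Commute.add_pow' (Commute.all _ _), coeff_sum]
  have hterm (m : ℕ × ℕ) : coeff (biexponent i j) (N.choose m.1 • ((C u * X (0 : Fin 2)) ^ m.1 *
      (C v * X 1) ^ m.2)) = if m = (i, j) then (N.choose i : S) * (u ^ i * v ^ j) else 0 := by
    rw [mul_pow, mul_pow, mul_mul_mul_comm, ← C_pow, ← C_pow, ← C_mul, ← monomial_biexponent,
      coeff_smul, coeff_monomial]
    aesop
  simp only [hterm, Finset.sum_ite_eq', Finset.HasAntidiagonal.mem_antidiagonal]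

theorem eq_sum_monomial_biexponent {n : ℕ} {P : MvPolynomial (Fin 2) S} (hP : P.totalDegree < n) :
    P = ∑ i : Fin n × Fin n, monomial (biexponent i.1 i.2) (P.coeff (biexponent i.1 i.2)) := by
  ext m
  have hm : biexponent (m 0) (m 1) = m := by
    ext i
    fin_cases i <;> simp [biexponent]
  rw [coeff_sum, ← hm]
  by_cases h : m 0 + m 1 < n
  · rw [Finset.sum_eq_single (⟨m 0, by lia⟩, ⟨m 1, by lia⟩)]
    · simp
    · rintro ⟨i, j⟩ - hij
      rw [coeff_monomial, if_neg fun h ↦ hij ?_]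
      obtain ⟨hi, hj⟩ := biexponent_inj.1 h
      simp [← hi, ← hj]
    · simp
  · have h0 : coeff (biexponent (m 0) (m 1)) P = 0 := by
      contrapose! h
      have := le_totalDegree (mem_support_iff.2 (hm ▸ h))
      rw [Finsupp.sum_fintype _ _ fun _ ↦ rfl, Fin.sum_univ_two] at this
      exact this.trans_lt hP
    rw [h0, Finset.sum_eq_zero fun i _ ↦ ?_]
    rw [coeff_monomial]
    split_ifs with hi
    · rw [hi, h0]
    · rfl

theorem totalDegree_linear_pow_le (u v : S) (N : ℕ) :
    ((C u * X (0 : Fin 2) + C v * X 1) ^ N).totalDegree ≤ N := by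
  have hlin : (C u * X (0 : Fin 2) + C v * X 1).IsHomogeneous 1 := by
    simpa using ((isHomogeneous_X S 0).C_mul u).add ((isHomogeneous_X S 1).C_mul v)
  simpa using (hlin.pow N).totalDegree_le

theorem aeval_eq_sum_coeff_biexponent_smul {R : Type*} [CommRing R] [Algebra S R] {n : ℕ}
    {P : MvPolynomial (Fin 2) S} (hP : P.totalDegree < n) (x y : R) :
    aeval ![x, y] P = ∑ i : Fin n × Fin n,
      P.coeff (biexponent i.1 i.2) • (x ^ (i.1 : ℕ) * y ^ (i.2 : ℕ)) := by
  conv_lhs => rw [eq_sum_monomial_biexponent hP]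
  simp [monomial_biexponent, Algebra.smul_def]

theorem totalDegree_sum_monomial_biexponent_le {n N : ℕ} (s : Finset (Fin n × Fin n))
    (hs : ∀ i ∈ s, (i.1 + i.2 : ℕ) ≤ N) (α : Fin n × Fin n → S) :
    (∑ i ∈ s, monomial (biexponent i.1 i.2) (α i)).totalDegree ≤ N := by
  refine totalDegree_finsetSum_le fun i hi ↦ (totalDegree_monomial_le _ _).trans ?_
  simpa [biexponent, Finsupp.sum_fintype, Fin.sum_univ_two, Finsupp.degree] using hs i hi

theorem coeff_biexponent_sum_monomial_biexponent {n : ℕ} (s : Finset (Fin n × Fin n))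
    (α : Fin n × Fin n → S) {i : Fin n × Fin n} (hi : i ∈ s) :
    coeff (biexponent i.1 i.2) (∑ j ∈ s, monomial (biexponent j.1 j.2) (α j)) = α i := by
  rw [coeff_sum, Finset.sum_eq_single i]
  · simp
  · intro j _ hji
    rw [coeff_monomial, if_neg fun h ↦ hji ?_]
    exact Prod.ext (Fin.ext (biexponent_inj.1 h).1) (Fin.ext (biexponent_inj.1 h).2)
  · exact fun h ↦ absurd hi h

end BinaryForms

section Presentation

open MvPolynomial

/-- The single relation in the presentation of `R` over `S`: the generator indexed by `none` is the
element `κ ^ (p - 1) / p`, where `κ = k₂ π + k₁ ρ`, and the generator indexed by `(i, j)` is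
`πⁱ ρʲ` if `i + j < p` and `πⁱ ρʲ / p` otherwise. -/
noncomputable def presentationRelation {S : Type*} [CommRing S] (p : ℕ) (k₁ k₂ : S) :
    Option (Fin p × Fin p) → S :=
  fun i ↦ i.elim (-p) fun i ↦
    ((C k₂ * X (0 : Fin 2) + C k₁ * X 1) ^ (p - 1)).coeff (biexponent i.1 i.2)

namespace IsShiftedRootPair

variable {S : Type*} {R : Type u} [CommRing S] [CommRing R] [Algebra S R] [IsDomain R]
  [IsIntegrallyClosed R] {p : ℕ} {d k₁ k₂ h₁ h₂ a b y : S} {π ρ : R}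

theorem exists_smul_eq_ite_smul (hp : p.Prime) (h : IsShiftedRootPair p h₁ h₂ a b y π ρ)
    (i : Fin p × Fin p) :
    ∃ e : R, (p : S) • e =
      (if (i.1 + i.2 : ℕ) < p then (p : S) else 1) • (π ^ (i.1 : ℕ) * ρ ^ (i.2 : ℕ)) := by
  split_ifs with hi
  · exact ⟨_, rfl⟩
  · obtain ⟨e, he⟩ := dvd_pow_mul_pow_of_dvd_pow hp.ne_zero (h.dvd_pow_left hp)
      (h.dvd_pow_right hp) (not_lt.1 hi)
    exact ⟨e, by rw [one_smul, he, Nat.cast_smul_eq_nsmul, nsmul_eq_mul]⟩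

variable [FaithfulSMul S R]

theorem exists_dvd_sub_mul_coeff [IsDomain (S ⧸ Ideal.span {(p : S)})]
    [DecompositionMonoid (S ⧸ Ideal.span {(p : S)})] (hp : p.Prime) (hp3 : 3 ≤ p)
    (h : IsShiftedRootPair p h₁ h₂ a b y π ρ)
    (hk : IsRelPrime (Ideal.Quotient.mk (Ideal.span {(p : S)}) k₁)
      (Ideal.Quotient.mk (Ideal.span {(p : S)}) k₂))
    (hd₁ : (p : S) ∣ d * k₁ - h₁) (hd₂ : (p : S) ∣ d * k₂ - h₂) {α : Fin p × Fin p → S}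
    (hα : (p : R) ∣ ∑ i, α i • (π ^ (i.1 : ℕ) * ρ ^ (i.2 : ℕ))) :
    ∃ s : S, ∀ i : Fin p × Fin p, (i.1 + i.2 : ℕ) < p → (p : S) ∣
      α i - s * ((C k₂ * X (0 : Fin 2) + C k₁ * X 1) ^ (p - 1)).coeff (biexponent i.1 i.2) := by
  let low : Finset (Fin p × Fin p) := {i | (i.1 + i.2 : ℕ) < p}
  let F : MvPolynomial (Fin 2) S := ∑ i ∈ low, monomial (biexponent i.1 i.2) (α i)
  have hdeg : F.totalDegree ≤ p - 1 :=
    totalDegree_sum_monomial_biexponent_le low (fun i hi ↦ by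
      have := (Finset.mem_filter.1 hi).2
      lia) α
  have hF : (p : R) ∣ aeval ![π, ρ] F := by
    have hFsum : aeval ![π, ρ] F = ∑ i ∈ low, α i • (π ^ (i.1 : ℕ) * ρ ^ (i.2 : ℕ)) := by
      simp [F, monomial_biexponent, Algebra.smul_def]
    rw [hFsum]
    refine (dvd_add_left (Finset.dvd_sum fun i hi ↦ ?_)).1
      ((Finset.sum_add_sum_compl low fun i : Fin p × Fin p ↦
        α i • (π ^ (i.1 : ℕ) * ρ ^ (i.2 : ℕ))).symm ▸ hα)
    refine dvd_smul_of_dvd _ (dvd_pow_mul_pow_of_dvd_pow hp.ne_zero (h.dvd_pow_left hp)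
      (h.dvd_pow_right hp) ?_)
    simpa [low] using hi
  obtain ⟨t, ht⟩ := h.exists_C_dvd_C_mul_sub hp hp3 hdeg hF
  obtain ⟨s, hs⟩ := exists_C_dvd_sub_C_mul_pow hk hd₁ hd₂ h.not_dvd_h₁ ht
  refine ⟨s, fun i hi ↦ ?_⟩
  have hcoeff := (C_dvd_iff_dvd_coeff _ _).1 hs (biexponent i.1 i.2)
  rwa [coeff_sub, coeff_C_mul, coeff_biexponent_sum_monomial_biexponent low α
    (Finset.mem_filter.2 ⟨Finset.mem_univ _, hi⟩)] at hcoeff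

theorem exists_smul_eq_sum_coeff_smul [IsDomain S] [IsIntegrallyClosed S] [Algebra.IsIntegral S R]
    (hp : p.Prime) (hp3 : 3 ≤ p) (h : IsShiftedRootPair p h₁ h₂ a b y π ρ)
    (hd₁ : (p : S) ∣ d * k₁ - h₁) (hd₂ : (p : S) ∣ d * k₂ - h₂) :
    ∃ w : R, (p : S) • w = ∑ i : Fin p × Fin p,
      ((C k₂ * X (0 : Fin 2) + C k₁ * X 1) ^ (p - 1)).coeff (biexponent i.1 i.2) •
        (π ^ (i.1 : ℕ) * ρ ^ (i.2 : ℕ)) := by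
  obtain ⟨w, hw⟩ := h.dvd_reduced_linear_pow hp hp3 hd₁ hd₂
  refine ⟨w, ?_⟩
  rw [← aeval_eq_sum_coeff_biexponent_smul
    ((totalDegree_linear_pow_le k₂ k₁ (p - 1)).trans_lt (by lia)), Nat.cast_smul_eq_nsmul,
    nsmul_eq_mul, ← hw]
  simp

theorem exists_presentation [IsDomain S] [IsIntegrallyClosed S] [Algebra.IsIntegral S R]
    [IsDomain (S ⧸ Ideal.span {(p : S)})] [DecompositionMonoid (S ⧸ Ideal.span {(p : S)})]
    (hp : p.Prime) (hp3 : 3 ≤ p) (h : IsShiftedRootPair p h₁ h₂ a b y π ρ)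
    (hk : IsRelPrime (Ideal.Quotient.mk (Ideal.span {(p : S)}) k₁)
      (Ideal.Quotient.mk (Ideal.span {(p : S)}) k₂))
    (hd₁ : (p : S) ∣ d * k₁ - h₁) (hd₂ : (p : S) ∣ d * k₂ - h₂) :
    ∃ ψ : (Option (Fin p × Fin p) → S) →ₗ[S] R, Function.Surjective ψ ∧
      LinearMap.ker ψ = Submodule.span S {presentationRelation p k₁ k₂} := by
  choose e he using h.exists_smul_eq_ite_smul hp
  obtain ⟨w, hw⟩ := h.exists_smul_eq_sum_coeff_smul hp hp3 hd₁ hd₂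
  have hreg : IsSMulRegular R (p : S) := fun x z hxz ↦ by
    simpa [Nat.cast_smul_eq_nsmul, h.natCast_ne_zero] using hxz
  refine ⟨_, surjective_linearCombination_option he hw hreg fun x ↦ ?_,
    ker_linearCombination_option_eq_span_singleton (i₀ := (⟨0, hp.pos⟩, ⟨p - 1, by lia⟩))
      h.linearIndependent he hw (fun i ↦ ?_) hreg h.prime ?_⟩
  · have hx := h.natCast_mul_mem x
    rw [← Subalgebra.mem_toSubmodule, ← h.span_range_eq hp, Submodule.mem_span_range_iff_exists_fun]
      at hx
    obtain ⟨α, hα⟩ := hx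
    obtain ⟨s, hs⟩ := h.exists_dvd_sub_mul_coeff hp hp3 hk hd₁ hd₂ ⟨x, hα⟩
    refine ⟨s, α, by rw [hα, Nat.cast_smul_eq_nsmul, nsmul_eq_mul], fun i ↦ ?_⟩
    split_ifs with hi
    exacts [hs i hi, one_dvd _]
  · split_ifs with hi
    · exact .inl rfl
    · exact .inr ⟨rfl, by rw [coeff_biexponent_linear_pow, if_neg (by lia)]⟩
  · have hk₁ : ¬(p : S) ∣ k₁ := fun hk₁ ↦
      h.not_dvd_h₁ ((dvd_sub_right (hk₁.mul_left d)).1 hd₁)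
    simpa [coeff_biexponent_linear_pow] using fun hdvd ↦ hk₁ (h.prime.dvd_of_dvd_pow hdvd)

end IsShiftedRootPair

end Presentation

/-! ### The integral closure of the biradical extension -/

section HeightOne

variable {S : Type*} [CommRing S] [IsDomain S] [IsNoetherianRing S]

theorem exists_isHeightOnePrime_mem {x : S} (hx : ¬IsUnit x) (hx0 : x ≠ 0) :
    ∃ P : Ideal S, x ∈ P ∧ IsHeightOnePrime P := by
  obtain ⟨P, hP⟩ := Ideal.nonempty_minimalPrimes (mt Ideal.span_singleton_eq_top.1 hx)
  have hxP : x ∈ P := hP.1.2 (Ideal.mem_span_singleton_self x)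
  have := hP.isPrime
  refine ⟨P, hxP, hP.isPrime, ?_⟩
  rw [← PrimeSpectrum.height_eq_orderHeight]
  refine (Ideal.height_le_one_of_isPrincipal_of_mem_minimalPrimes _ P hP).antisymm ?_
  rw [Order.one_le_iff_ne_zero, Ne, Ideal.height_eq_zero_iff_eq_bot]
  rintro rfl
  exact hx0 hxP

theorem SatisfiesA1.isRelPrime {f g q : S} (h : SatisfiesA1 f g) (hq : Prime q) :
    IsRelPrime f g := by
  intro d hdf hdg
  by_contra hd
  obtain ⟨e, he, he0, hde⟩ : ∃ e, ¬IsUnit e ∧ e ≠ 0 ∧ e ∣ d := by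
    rcases eq_or_ne d 0 with rfl | hd0
    · exact ⟨q, hq.not_isUnit, hq.ne_zero, dvd_zero q⟩
    · exact ⟨d, hd, hd0, dvd_rfl⟩
  obtain ⟨P, heP, hP⟩ := exists_isHeightOnePrime_mem he he0
  exact h P hP ⟨P.mem_of_dvd (hde.trans hdf) heP, P.mem_of_dvd (hde.trans hdg) heP⟩

end HeightOne

section PrimeResidueChar

theorem sq_dvd_pow_of_dvd {M : Type*} [CommMonoid M] {x q : M} {n : ℕ} (hn : 2 ≤ n)
    (hx : q ∣ x) : q ^ 2 ∣ x ^ n :=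
  (pow_dvd_pow_of_dvd hx 2).trans (pow_dvd_pow x hn)

theorem sq_dvd_pow_sub_pow_of_dvd_pow_sub_pow {S : Type*} [CommRing S] {p : ℕ} (hp : p.Prime)
    (hpS : Prime (p : S)) {x y : S} (h : (p : S) ∣ x ^ p - y ^ p) :
    (p : S) ^ 2 ∣ x ^ p - y ^ p := by
  obtain ⟨r, hr⟩ := exists_add_pow_prime_eq hp (x - y) y
  rw [sub_add_cancel] at hr
  have hpow : (p : S) ∣ (x - y) ^ p := by
    rw [show (x - y) ^ p = x ^ p - y ^ p - p * ((x - y) * y * r) by rw [hr]; ring]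
    exact dvd_sub h (dvd_mul_right _ _)
  simpa using dvd_sub_pow_of_dvd_sub (hpS.dvd_of_dvd_pow hpow) 1

variable {S : Type*} [CommRing S] {p : ℕ} {h₁ h₂ a b x y : S}

theorem exists_mul_eq_mul_pow_add (hp : p.Prime) (hpS : Prime (p : S))
    (h : (h₁ ^ p + p * a) * (h₂ ^ p + p * b) = x ^ p + y * p ^ 2) :
    ∃ z, (h₁ ^ p + p * a) * (h₂ ^ p + p * b) = (h₁ * h₂) ^ p + p ^ 2 * z := by
  obtain ⟨z, hz⟩ := sq_dvd_pow_sub_pow_of_dvd_pow_sub_pow hp hpS (x := x) (y := h₁ * h₂)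
    ⟨h₁ ^ p * b + h₂ ^ p * a + a * b * p - y * p, by linear_combination -h⟩
  exact ⟨z + y, by linear_combination h + hz⟩

theorem not_dvd_of_isRelPrime [IsDomain S] (hp : p.Prime) (hpS : Prime (p : S)) {g : S}
    (ha : ¬(p : S) ∣ a) (hrel : IsRelPrime (h₁ ^ p + p * a) g)
    (h : (h₁ ^ p + p * a) * g = x ^ p + y * p ^ 2) :
    ¬(p : S) ∣ h₁ := by
  intro hd
  have hpf : (p : S) ∣ h₁ ^ p + p * a := dvd_add (dvd_pow hd hp.ne_zero) (dvd_mul_right _ _)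
  have hpg : ¬(p : S) ∣ g := fun hpg ↦ hpS.not_isUnit (hrel hpf hpg)
  have hpx : (p : S) ∣ x := by
    refine hpS.dvd_of_dvd_pow (n := p) ?_
    rw [eq_sub_of_add_eq h.symm]
    exact dvd_sub (hpf.mul_right g) (dvd_mul_of_dvd_right (dvd_pow_self _ two_ne_zero) y)
  have hpf2 : (p : S) ^ 2 ∣ h₁ ^ p + p * a := by
    refine hpS.pow_dvd_of_dvd_mul_right 2 hpg ?_
    rw [h]
    exact dvd_add (sq_dvd_pow_of_dvd hp.two_le hpx) (dvd_mul_left _ y)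
  have hpa := (dvd_add_right (sq_dvd_pow_of_dvd hp.two_le hd)).1 hpf2
  rw [sq] at hpa
  exact ha ((mul_dvd_mul_iff_left hpS.ne_zero).1 hpa)

end PrimeResidueChar

section NotDvd

theorem not_dvd_of_add_pow_prime_eq {S B : Type*} [CommRing S] [CommRing B] [Algebra S B]
    [IsDomain B] [IsIntegrallyClosed B] {p : ℕ} (hp : p.Prime) (hpS : ¬IsUnit (p : S))
    (hpB : (p : B) ≠ 0) {h a : S} {x : B}
    (hx : (x + algebraMap S B h) ^ p = algebraMap S B (h ^ p + p * a))
    (hind : LinearIndependent S fun i : Fin p ↦ x ^ (i : ℕ)) (htop : Algebra.adjoin S {x} = ⊤) :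
    ¬(p : S) ∣ a := by
  have : Nontrivial S := nontrivial_of_ne (p : S) 1 (fun h ↦ hpS (h ▸ isUnit_one))
  rintro ⟨c, rfl⟩
  obtain ⟨e, -, he⟩ := exists_pow_prime_eq_of_add_pow_prime_eq hp hx
  obtain ⟨b, hb⟩ := dvd_pow_pred_of_pow_eq (y := algebraMap S B c) (γ := -e) hpB hp.two_le
    (by rw [he, map_mul, map_natCast]; ring)
  have hspan : ⊤ ≤ Submodule.span S (Set.range fun i : Fin p ↦ x ^ (i : ℕ)) := by
    rw [span_range_pow_eq_adjoin
      (isMonicOfDegree_X_add_C_pow_sub_C h (h ^ p + p * (p * c)) hp.ne_zero) (by simp [hx]), htop]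
    exact le_rfl
  let i : Fin p := ⟨p - 1, Nat.sub_lt hp.pos one_pos⟩
  have hrepr := congrArg (fun z ↦ (Module.Basis.mk hind hspan).repr z i)
    (show Module.Basis.mk hind hspan i = (p : S) • b by
      rw [Module.Basis.mk_apply, Nat.cast_smul_eq_nsmul, nsmul_eq_mul, ← hb])
  simp only [Module.Basis.repr_self, Finsupp.single_eq_same, map_smul, Finsupp.smul_apply,
    smul_eq_mul] at hrepr
  exact hpS (.of_mul_eq_one _ hrepr.symm)

end NotDvd

section Shift

variable {S R : Type*} [CommRing S] [CommRing R] [Algebra S R]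

theorem adjoin_pair_sub_algebraMap (x y : R) (s t : S) :
    Algebra.adjoin S {x - algebraMap S R s, y - algebraMap S R t} = Algebra.adjoin S {x, y} := by
  have hle (x y : R) (s t : S) :
      Algebra.adjoin S {x - algebraMap S R s, y - algebraMap S R t} ≤ Algebra.adjoin S {x, y} :=
    Algebra.adjoin_le (Set.pair_subset
      (sub_mem (Algebra.subset_adjoin (by simp)) (Subalgebra.algebraMap_mem _ s))
      (sub_mem (Algebra.subset_adjoin (by simp)) (Subalgebra.algebraMap_mem _ t)))
  refine le_antisymm (hle x y s t) ?_
  simpa using hle (x - algebraMap S R s) (y - algebraMap S R t) (-s) (-t)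

theorem adjoin_singleton_sub_algebraMap (x : R) (s : S) :
    Algebra.adjoin S {x - algebraMap S R s} = Algebra.adjoin S {x} := by
  simpa using adjoin_pair_sub_algebraMap x x s s

theorem coe_mem_adjoin_image_iff {T : Subalgebra S R} {s : Set T} {x : T} :
    (x : R) ∈ Algebra.adjoin S ((↑) '' s) ↔ x ∈ Algebra.adjoin S s := by
  rw [← Subalgebra.coe_val, ← AlgHom.map_adjoin, Subalgebra.mem_map]
  exact ⟨fun ⟨y, hy, hyx⟩ ↦ Subtype.val_injective hyx ▸ hy, fun hx ↦ ⟨x, hx, rfl⟩⟩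

theorem not_dvd_of_isIntegrallyClosed_adjoin [IsDomain R] {p : ℕ} (hp : p.Prime)
    (hpS : ¬IsUnit (p : S)) (hpR : (p : R) ≠ 0) {ω : R} [IsIntegrallyClosed (Algebra.adjoin S {ω})]
    {h a : S} (hω : ω ^ p = algebraMap S R (h ^ p + p * a))
    (hind : LinearIndependent S fun i : Fin p ↦ (ω - algebraMap S R h) ^ (i : ℕ)) :
    ¬(p : S) ∣ a := by
  let ω' : Algebra.adjoin S {ω} := ⟨ω, Algebra.self_mem_adjoin_singleton S ω⟩
  refine not_dvd_of_add_pow_prime_eq (B := Algebra.adjoin S {ω}) hp hpS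
    (fun h ↦ hpR (by simpa using congrArg Subtype.val h)) (h := h) (x := ω' - algebraMap S _ h)
    (Subtype.ext (by simpa [ω'] using hω))
    (.of_comp (Algebra.adjoin S {ω}).val.toLinearMap hind) ?_
  rw [adjoin_singleton_sub_algebraMap, eq_top_iff]
  intro x _
  rw [← coe_mem_adjoin_image_iff, Set.image_singleton]
  exact x.2

end Shift

section BiradicalExtension

variable {S L K : Type*} [CommRing S] [IsDomain S] [Field L] [Algebra S L] [IsFractionRing S L]
  [Field K] [Algebra L K] [Algebra S K] [IsScalarTower S L K] {p : ℕ} {h₁ h₂ a b : S} {ω μ : K}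

theorem linearIndependent_sub_pow_mul_sub_pow {n : ℕ} (hn : n ≠ 0) {f g : S}
    (hω : ω ^ n = algebraMap S K f) (hμ : μ ^ n = algebraMap S K g)
    (htop : Algebra.adjoin L {ω, μ} = ⊤) (hdeg : Module.finrank L K = n * n) (s t : S) :
    LinearIndependent S fun i : Fin n × Fin n ↦
      (ω - algebraMap S K s) ^ (i.1 : ℕ) * (μ - algebraMap S K t) ^ (i.2 : ℕ) := by
  refine linearIndependent_pow_mul_pow (L := L) (isMonicOfDegree_X_add_C_pow_sub_C s f hn)
    (by simp [hω]) (isMonicOfDegree_X_add_C_pow_sub_C t g hn) (by simp [hμ]) ?_ hdeg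
  rw [IsScalarTower.algebraMap_apply S L K, IsScalarTower.algebraMap_apply S L K t,
    adjoin_pair_sub_algebraMap, htop]

theorem exists_isShiftedRootPair [CharZero L] [DecompositionMonoid S] (hp : p.Prime)
    (hpS : Prime (p : S)) (hfg : IsRelPrime (h₁ ^ p + p * a) (h₂ ^ p + p * b))
    (hω : ω ^ p = algebraMap S K (h₁ ^ p + p * a)) (hμ : μ ^ p = algebraMap S K (h₂ ^ p + p * b))
    (htop : Algebra.adjoin L {ω, μ} = ⊤) (hdeg : Module.finrank L K = p * p)
    [IsIntegrallyClosed (Algebra.adjoin S {ω})] [IsIntegrallyClosed (Algebra.adjoin S {μ})]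
    (hmul : ∃ x y : S, (h₁ ^ p + p * a) * (h₂ ^ p + p * b) = x ^ p + y * p ^ 2) :
    ∃ (y : S) (π ρ : integralClosure S K), IsShiftedRootPair p h₁ h₂ a b y π ρ := by
  have : FaithfulSMul S K := .trans S L K
  have hpK : (p : K) ≠ 0 := by
    rw [← map_natCast (algebraMap S K), Ne, FaithfulSMul.algebraMap_eq_zero_iff]
    exact hpS.ne_zero
  obtain ⟨x, z, hxz⟩ := hmul
  obtain ⟨y, hy⟩ := exists_mul_eq_mul_pow_add hp hpS hxz
  have hind := linearIndependent_sub_pow_mul_sub_pow hp.ne_zero hω hμ htop hdeg h₁ h₂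
  have ha : ¬(p : S) ∣ a := not_dvd_of_isIntegrallyClosed_adjoin hp hpS.not_isUnit hpK hω (by
    simpa [Function.comp_def] using hind.comp (fun i ↦ (i, ⟨0, hp.pos⟩))
      (Prod.mk_left_injective _))
  have hb : ¬(p : S) ∣ b := not_dvd_of_isIntegrallyClosed_adjoin hp hpS.not_isUnit hpK hμ (by
    simpa [Function.comp_def] using hind.comp (fun j ↦ (⟨0, hp.pos⟩, j))
      (Prod.mk_right_injective _))
  have hh₁ : ¬(p : S) ∣ h₁ := not_dvd_of_isRelPrime hp hpS ha hfg hxz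
  have hf : h₁ ^ p + p * a ≠ 0 := fun hf ↦
    hh₁ (hpS.dvd_of_dvd_pow ⟨-a, by linear_combination hf⟩)
  have hωint : IsIntegral S ω := .of_pow hp.pos (hω ▸ isIntegral_algebraMap)
  have hμint : IsIntegral S μ := .of_pow hp.pos (hμ ▸ isIntegral_algebraMap)
  refine ⟨y, (⟨ω, hωint⟩ : integralClosure S K) - algebraMap S _ h₁,
    (⟨μ, hμint⟩ : integralClosure S K) - algebraMap S _ h₂, hpS, hh₁,
    not_dvd_of_isRelPrime hp hpS hb hfg.symm ((mul_comm _ _).trans hxz), ha, hb, hy,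
    Subtype.ext (by simpa using hω), Subtype.ext (by simpa using hμ),
    .of_comp (integralClosure S K).val.toLinearMap hind, fun r ↦ ?_⟩
  rw [adjoin_pair_sub_algebraMap, ← coe_mem_adjoin_image_iff, Set.image_pair]
  exact natCast_mul_mem_adjoin_pair_of_isRelPrime hp.ne_zero hf hfg hω hμ htop hdeg r.2

end BiradicalExtension

section CohenMacaulayCriterion

variable {S : Type u} [CommRing S]

theorem exists_reduced_factors_mod {q h₁ h₂ : S}
    [UniqueFactorizationMonoid (S ⧸ Ideal.span {q})] (h : ¬q ∣ h₁) :
    ∃ d k₁ k₂, IsRelPrime (Ideal.Quotient.mk (Ideal.span {q}) k₁)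
      (Ideal.Quotient.mk (Ideal.span {q}) k₂) ∧ q ∣ d * k₁ - h₁ ∧ q ∣ d * k₂ - h₂ := by
  have hmk (x : S) : Ideal.Quotient.mk (Ideal.span {q}) x = 0 ↔ q ∣ x := by
    rw [Ideal.Quotient.eq_zero_iff_mem, Ideal.mem_span_singleton]
  obtain ⟨k₁, k₂, d, hk, h₁, h₂⟩ := UniqueFactorizationMonoid.exists_reduced_factors
    (Ideal.Quotient.mk (Ideal.span {q}) h₁) ((hmk h₁).not.2 h) (Ideal.Quotient.mk _ h₂)
  obtain ⟨k₁, rfl⟩ := Ideal.Quotient.mk_surjective k₁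
  obtain ⟨k₂, rfl⟩ := Ideal.Quotient.mk_surjective k₂
  obtain ⟨d, rfl⟩ := Ideal.Quotient.mk_surjective d
  refine ⟨d, k₁, k₂, hk, (hmk _).1 ?_, (hmk _).1 ?_⟩
  · rw [map_sub, map_mul, h₁, sub_self]
  · rw [map_sub, map_mul, h₂, sub_self]

variable {p : ℕ} {k₁ k₂ : S}

theorem presentationRelation_some_mem_ofList (hp : 1 < p) (i : Fin p × Fin p) :
    presentationRelation p k₁ k₂ (some i) ∈ Ideal.ofList [k₁, k₂] := by
  have hk₁ : k₁ ∈ Ideal.ofList [k₁, k₂] := Ideal.subset_span (by simp)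
  have hk₂ : k₂ ∈ Ideal.ofList [k₁, k₂] := Ideal.subset_span (by simp)
  rw [presentationRelation, Option.elim_some, coeff_biexponent_linear_pow]
  split_ifs with hi
  · refine Ideal.mul_mem_left _ _ ?_
    rcases Nat.eq_zero_or_pos (i.1 : ℕ) with h0 | h0
    · exact Ideal.mul_mem_left _ _ (Ideal.pow_mem_of_mem _ hk₁ _ (by lia))
    · exact Ideal.mul_mem_right _ _ (Ideal.pow_mem_of_mem _ hk₂ _ h0)
  · exact zero_mem _

theorem exists_isUnit_presentationRelation (hp : 0 < p) (h : IsUnit k₁ ∨ IsUnit k₂) :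
    ∃ i, IsUnit (presentationRelation p k₁ k₂ i) := by
  rcases h with h | h
  · exact ⟨some (⟨0, hp⟩, ⟨p - 1, by lia⟩), by
      simpa [presentationRelation, coeff_biexponent_linear_pow] using h.pow (p - 1)⟩
  · exact ⟨some (⟨p - 1, by lia⟩, ⟨0, hp⟩), by
      simpa [presentationRelation, coeff_biexponent_linear_pow] using h.pow (p - 1)⟩

variable [IsRegularLocalRing S] [IsDomain S] [IsIntegrallyClosed S]
  [UniqueFactorizationMonoid (S ⧸ Ideal.span {(p : S)})]
  {R : Type*} [CommRing R] [IsDomain R] [Algebra S R] [Module.Finite S R] [FaithfulSMul S R]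

theorem isCMRing_iff_of_presentation (hp : 1 < p) (hpS : Prime (p : S))
    (hk₁ : ¬(p : S) ∣ k₁) (hk : IsRelPrime (Ideal.Quotient.mk (Ideal.span {(p : S)}) k₁)
      (Ideal.Quotient.mk (Ideal.span {(p : S)}) k₂))
    {ψ : (Option (Fin p × Fin p) → S) →ₗ[S] R} (hψ : Function.Surjective ψ)
    (hker : LinearMap.ker ψ = Submodule.span S {presentationRelation p k₁ k₂}) :
    IsCMRing R ↔ IsUnit k₁ ∨ IsUnit k₂ := by
  refine ⟨not_imp_not.1 fun hunit ↦ ?_, fun hunit ↦ ?_⟩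
  · rw [not_or] at hunit
    have hle : Ideal.ofList ([k₁, k₂] ++ [-(p : S)]) ≤ maximalIdeal S := by
      simpa [Ideal.ofList, Ideal.span_le, Set.subset_def, hpS.not_isUnit] using hunit
    refine not_isCMRing_of_ker_eq_span_singleton hψ hker (rs := [k₁, k₂]) (i₀ := none)
      (fun i hi ↦ ?_) (ne_top_of_le_ne_top (Ideal.IsPrime.ne_top') hle) ?_
    · obtain ⟨i, rfl⟩ := Option.ne_none_iff_exists'.1 hi
      exact presentationRelation_some_mem_ofList hp i
    · rw [Ideal.height_eq_inf_minimalPrimes]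
      refine le_iInf₂ fun q hq ↦ ?_
      have := hq.1.1
      have hmem {x : S} (hx : x ∈ [k₁, k₂] ++ [-(p : S)]) : x ∈ q := hq.1.2 (Ideal.subset_span hx)
      exact three_le_height_of_isRelPrime_mod hpS
        (by rwa [Ne, Ideal.Quotient.eq_zero_iff_mem, Ideal.mem_span_singleton]) hk
        (neg_mem_iff.1 (hmem (by simp))) (hmem (by simp)) (hmem (by simp))
  · obtain ⟨i, hi⟩ := exists_isUnit_presentationRelation (zero_lt_one.trans hp) hunit
    have := projective_of_ker_eq_span_singleton hψ hker hi
    exact isCMRing_of_flat (S := S)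

theorem IsShiftedRootPair.isCMRing_iff_and_hasFreeResLengthLE1
    [IsDomain (S ⧸ Ideal.span {(p : S)})] {R : Type*} [CommRing R] [IsDomain R]
    [IsIntegrallyClosed R] [Algebra S R] [FaithfulSMul S R] [Algebra.IsIntegral S R]
    {h₁ h₂ a b y : S} {π ρ : R} (hp : p.Prime) (hp3 : 3 ≤ p)
    (h : IsShiftedRootPair p h₁ h₂ a b y π ρ) (hp2 : (p : S) ∉ maximalIdeal S ^ 2) :
    (IsCMRing R ↔ (∃ x z, Ideal.span {(p : S), h₁, h₂} = Ideal.span {x, z}) ∨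
      Ideal.span {(p : S), h₁, h₂} = ⊤) ∧ HasFreeResLengthLE1 S R := by
  obtain ⟨d, k₁, k₂, hk, hd₁, hd₂⟩ := exists_reduced_factors_mod h.not_dvd_h₁ (h₂ := h₂)
  have hdk : ¬(p : S) ∣ d * k₁ := fun hdvd ↦ h.not_dvd_h₁ ((dvd_sub_right hdvd).1 hd₁)
  obtain ⟨ψ, hψ, hker⟩ := h.exists_presentation hp hp3 hk hd₁ hd₂
  have : Module.Finite S R := .of_surjective ψ hψ
  constructor
  · rw [span_triple_two_generated_iff h.prime.not_isUnit hp2 ?_ hk hd₁ hd₂]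
    · exact isCMRing_iff_of_presentation hp.one_lt h.prime (fun hk₁ ↦ hdk (hk₁.mul_left d)) hk
        hψ hker
    · rw [Ne, Ideal.Quotient.eq_zero_iff_mem, Ideal.mem_span_singleton]
      exact fun hd ↦ hdk (hd.mul_right k₁)
  · exact hasFreeResLengthLE1_of_ker_eq_span_singleton hψ hker
      (Function.ne_iff.2 ⟨none, neg_ne_zero.2 h.prime.ne_zero⟩)

end CohenMacaulayCriterion

theorem stmt12_general
    {S : Type*} [CommRing S] [IsDomain S] [IsNoetherianRing S] [IsLocalRing S]
    [IsIntegrallyClosed S]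
    {L : Type*} [Field L] [CharZero L] [Algebra S L] [IsFractionRing S L]
    {K : Type*} [Field K] [Algebra L K] [Algebra S K] [IsScalarTower S L K]
    {p : ℕ} (hp : p.Prime) (hp3 : 3 ≤ p) (hpS : Prime ((p : ℕ) : S))
    (hSmodp : IsIntegrallyClosed (S ⧸ Ideal.span {((p : ℕ) : S)}))
    (hreg : ∃ s : Finset S, Ideal.span (s : Set S) = IsLocalRing.maximalIdeal S ∧
      (s.card : WithBot ℕ∞) = ringKrullDim S)
    (hmix : ((p : ℕ) : S) ∈ IsLocalRing.maximalIdeal S ∧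
      ((p : ℕ) : S) ∉ IsLocalRing.maximalIdeal S ^ 2)
    {f g h₁ h₂ a b : S} (hf : f = h₁ ^ p + a * (p : S)) (hg : g = h₂ ^ p + b * (p : S))
    (hfg : IsRelPrime f g)
    {ω μ : K} (hω : ω ^ p = algebraMap S K f) (hμ : μ ^ p = algebraMap S K g)
    (hKgen : Algebra.adjoin L ({ω, μ} : Set K) = ⊤)
    (hdeg : Module.finrank L K = p ^ 2)
    (hicω : IsIntegrallyClosed (Algebra.adjoin S ({ω} : Set K)))
    (hicμ : IsIntegrallyClosed (Algebra.adjoin S ({μ} : Set K)))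
    (hfg1 : ∃ x y : S, f * g = x ^ p + y * (p : S) ^ 2) :
    (IsCMRing (integralClosure S K) ↔
        ((∃ x y : S, Ideal.span {((p : ℕ) : S), h₁, h₂} = Ideal.span {x, y}) ∨
          Ideal.span {((p : ℕ) : S), h₁, h₂} = ⊤)) ∧
      HasFreeResLengthLE1 S (integralClosure S K) := by
  subst hf hg
  obtain ⟨s, hs, hcard⟩ := hreg
  have := isRegularLocalRing_of_span_eq_maximalIdeal hs hcard
  have := uniqueFactorizationMonoid_of_isRegularLocalRing S
  have := isRegularLocalRing_quotient_span_singleton hmix.1 hmix.2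
  have : IsDomain (S ⧸ Ideal.span {(p : S)}) := isDomain_of_isRegularLocalRing _
  have := uniqueFactorizationMonoid_of_isRegularLocalRing (S ⧸ Ideal.span {(p : S)})
  have : FiniteDimensional L K := .of_finrank_pos (hdeg ▸ pow_pos hp.pos 2)
  have : IsIntegrallyClosed (integralClosure S K) :=
    integralClosure.isIntegrallyClosedOfFiniteExtension L
  have : FaithfulSMul S K := .trans S L K
  simp only [mul_comm _ (p : S)] at hfg hω hμ
  obtain ⟨y, π, ρ, h⟩ := exists_isShiftedRootPair hp hpS hfg hω hμ hKgen (hdeg.trans (sq p))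
    (by simpa only [mul_comm _ (p : S)] using hfg1)
  exact h.isCMRing_iff_and_hasFreeResLengthLE1 hp hp3 hmix.2

theorem stmt12
    {S : Type*} [CommRing S] [IsDomain S] [IsNoetherianRing S] [IsLocalRing S]
    [IsIntegrallyClosed S]
    {L : Type*} [Field L] [CharZero L] [Algebra S L] [IsFractionRing S L]
    {K : Type*} [Field K] [Algebra L K] [Algebra S K] [IsScalarTower S L K]
    {p : ℕ} (hp : p.Prime) (hp3 : 3 ≤ p) (hpS : Prime ((p : ℕ) : S))
    (hSmodp : IsIntegrallyClosed (S ⧸ Ideal.span {((p : ℕ) : S)}))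
    (hreg : ∃ s : Finset S, Ideal.span (s : Set S) = IsLocalRing.maximalIdeal S ∧
      (s.card : WithBot ℕ∞) = ringKrullDim S)
    (hmix : ((p : ℕ) : S) ∈ IsLocalRing.maximalIdeal S ∧
      ((p : ℕ) : S) ∉ IsLocalRing.maximalIdeal S ^ 2)
    {f g h₁ h₂ a b : S} (hf : f = h₁ ^ p + a * (p : S)) (hg : g = h₂ ^ p + b * (p : S))
    (hfg : (¬IsUnit f ∧ ¬IsUnit g ∧ PaperSquarefree f ∧ PaperSquarefree g ∧ SatisfiesA1 f g) ∨
      (IsUnit f ∧ IsUnit g ∧ (∀ x : S, x ^ p ≠ f) ∧ (∀ x : S, x ^ p ≠ g)))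
    {ω μ : K} (hω : ω ^ p = algebraMap S K f) (hμ : μ ^ p = algebraMap S K g)
    (hKgen : Algebra.adjoin L ({ω, μ} : Set K) = ⊤)
    (hdeg : Module.finrank L K = p ^ 2)
    (hicω : IsIntegrallyClosed (Algebra.adjoin S ({ω} : Set K)))
    (hicμ : IsIntegrallyClosed (Algebra.adjoin S ({μ} : Set K)))
    (hh₁ : h₁ ≠ 0) (hh₂ : h₂ ≠ 0)
    (hfg1 : ∃ x y : S, f * g = x ^ p + y * (p : S) ^ 2) :
    (IsCMRing (integralClosure S K) ↔ ((∃ x y : S, Ideal.span {((p : ℕ) : S), h₁, h₂} = Ideal.span {x, y}) ∨ Ideal.span {((p : ℕ) : S), h₁, h₂} = ⊤)) ∧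
      HasFreeResLengthLE1 S (integralClosure S K) :=
  stmt12_general hp hp3 hpS hSmodp hreg hmix hf hg
    (hfg.elim (fun h ↦ h.2.2.2.2.isRelPrime hpS) fun h ↦ h.1.isRelPrime_left) hω hμ hKgen hdeg
    hicω hicμ hfg1
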